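/- arXiv:2211.01359 — 7 statements merged into one kernel-verified Lean document; each statement's English description precedes it below -/
import Mathlib

section
/- Let P be a simply connected polygonal region in the plane (a simple polygon) and let a_1, …, a_k be positive real numbers with a_1 + ⋯ + a_k equal to the area of P. Then there exist sets Q_1, …, Q_k ⊆ ℝ², each of which is a simply connected polygonal region, such that the interiors of the Q_i are pairwise disjoint, the union Q_1 ∪ ⋯ ∪ Q_k equals P, and the area of Q_i equals a_i for every i ∈ {1, …, k}. -/
open MeasureTheory

/-- A polygonal region: a compact subset of the plane that equals the closure of its
interior and whose frontier is contained in a finite union of closed line segments. -/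
def IsPolygonalRegion (S : Set (EuclideanSpace ℝ (Fin 2))) : Prop :=
  IsCompact S ∧ S = closure (interior S) ∧
    ∃ F : Finset (EuclideanSpace ℝ (Fin 2) × EuclideanSpace ℝ (Fin 2)),
      frontier S ⊆ ⋃ e ∈ F, segment ℝ e.1 e.2

/-- A simple polygon: a polygonal region that is simply connected as a topological subspace. -/
def IsSimplePolygon (S : Set (EuclideanSpace ℝ (Fin 2))) : Prop :=
  IsPolygonalRegion S ∧ SimplyConnectedSpace S

/-!
Dissect `P` into finitely many convex polygons and shrink each of them towards an interior point by
a ratio close to `1`. The shrunken cells, joined by thin convex bridges across shared edges and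
around shared vertices, form a tree-like region: it is obtained from the empty set by attaching
convex polygons one at a time along an edge. Sweeping each attached polygon by lines parallel to
that edge makes the area grow continuously, and at every moment the swept region is a simple polygon
that is a retract of `P` and whose complement in `P` has a simple polygon as closure. As the final
area can be made to exceed any `v < area P`, some swept region has area exactly `a₁`; cut it off and
induct.
-/

namespace AreaPartition

open Set Filter Topology Metric Pointwise
open AffineMap (homothety homothety_apply)
open scoped ENNReal

section Retract

universe u v

variable {X : Type u} {Y : Type v} [TopologicalSpace X] [TopologicalSpace Y]

open scoped Classical in
theorem continuousOn_piecewise_union {f g : X → Y} {A B : Set X} (hA : IsClosed A)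
    (hB : IsClosed B) (hf : ContinuousOn f A) (hg : ContinuousOn g B) (hfg : EqOn f g (A ∩ B)) :
    ContinuousOn (A.piecewise f g) (A ∪ B) := by
  refine ContinuousOn.union_of_isClosed (hf.congr (A.piecewise_eqOn f g)) (hg.congr ?_) hA hB
  intro x hxB
  by_cases hxA : x ∈ A
  · rw [piecewise_eq_of_mem _ _ _ hxA, hfg ⟨hxA, hxB⟩]
  · rw [piecewise_eq_of_notMem _ _ _ hxA]

theorem simplyConnectedSpace_of_leftInverse [SimplyConnectedSpace X] (i : C(Y, X)) (r : C(X, Y))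
    (h : Function.LeftInverse r i) : SimplyConnectedSpace Y := by
  have : PathConnectedSpace Y := h.surjective.pathConnectedSpace r.continuous
  refine simply_connected_iff_paths_homotopic'.2 ⟨inferInstance, fun {x y} p q => ?_⟩
  have hpq := (SimplyConnectedSpace.paths_homotopic (p.map i.continuous) (q.map i.continuous)).map r
  have key (p : Path x y) : (p.map i.continuous).map r.continuous = p.cast (h x) (h y) := by
    ext t; exact h (p t)
  rw [key, key] at hpq
  exact hpq.pathCast (h x).symm (h y).symm

/-- `K` is a retract of the ambient space. The retraction is kept as a self-map of `X`, so that
retractions can be composed and glued without subtypes. -/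
def IsRetract (K : Set X) : Prop :=
  ∃ r : X → X, Continuous r ∧ (∀ x, r x ∈ K) ∧ ∀ x ∈ K, r x = x

namespace IsRetract

variable {A B K : Set X}

theorem nonempty [Nonempty X] (hK : IsRetract K) : K.Nonempty :=
  let ⟨r, _, hrK, _⟩ := hK
  ⟨r (Classical.arbitrary X), hrK _⟩

theorem isPreconnected [PreconnectedSpace X] (hK : IsRetract K) : IsPreconnected K := by
  obtain ⟨r, hr, hrK, hid⟩ := hK
  rw [(range_subset_iff.2 hrK).antisymm' fun x hx => ⟨x, hid x hx⟩]
  exact isPreconnected_range hr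

theorem isClosed [T2Space X] (hK : IsRetract K) : IsClosed K := by
  obtain ⟨r, hr, hrK, hid⟩ := hK
  convert isClosed_eq hr continuous_id
  exact Set.ext fun x => ⟨hid x, fun hx : r x = x => hx ▸ hrK x⟩

theorem image (hK : IsRetract K) (e : X ≃ₜ Y) : IsRetract (e '' K) := by
  obtain ⟨r, hr, hrK, hid⟩ := hK
  refine ⟨e ∘ r ∘ e.symm, by fun_prop, fun y => mem_image_of_mem e (hrK _), ?_⟩
  rintro _ ⟨x, hx, rfl⟩
  simp [hid x hx]

theorem exists_extension [T2Space X] [NormalSpace X] [TietzeExtension.{u} X] (hA : IsRetract A)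
    {Z : Set X} (hZ : IsClosed Z) {f : X → X} (hf : Continuous f) (hfA : ∀ x, f x ∈ A)
    (hid : ∀ x ∈ A ∩ Z, f x = x) :
    ∃ g : X → X, Continuous g ∧ (∀ x, g x ∈ A) ∧ (∀ x ∈ A, g x = x) ∧ ∀ x ∈ Z, g x = f x := by
  classical
  have hcont : ContinuousOn (A.piecewise id f) (A ∪ Z) :=
    continuousOn_piecewise_union hA.isClosed hZ continuousOn_id hf.continuousOn
      fun x hx => (hid x hx).symm
  obtain ⟨G, hG⟩ := ContinuousMap.exists_restrict_eq (hA.isClosed.union hZ)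
    ⟨(A ∪ Z).domRestrict (A.piecewise id f), hcont.domRestrict⟩
  have hGeq : EqOn G (A.piecewise id f) (A ∪ Z) := fun x hx =>
    congrArg (fun h : C((A ∪ Z : Set X), X) => h ⟨x, hx⟩) hG
  obtain ⟨r, hr, hrA, hrid⟩ := hA
  refine ⟨r ∘ G, hr.comp G.continuous, fun x => hrA _, fun x hx => ?_, fun x hx => ?_⟩
  · simp [hGeq (Or.inl hx), hx, hrid x hx]
  · by_cases hxA : x ∈ A
    · simp [hGeq (Or.inr hx), hxA, hrid x hxA, hid x ⟨hxA, hx⟩]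
    · simp [hGeq (Or.inr hx), hxA, hrid _ (hfA x)]

theorem simplyConnectedSpace [SimplyConnectedSpace X] (hK : IsRetract K) :
    SimplyConnectedSpace K :=
  let ⟨r, hr, hrK, hid⟩ := hK
  simplyConnectedSpace_of_leftInverse ⟨((↑) : K → X), continuous_subtype_val⟩
    ⟨fun x => ⟨r x, hrK x⟩, by fun_prop⟩ fun x => Subtype.ext (hid x x.2)

end IsRetract

theorem simplyConnectedSpace_of_union {A B : Set X} (hA : IsClosed A) (hB : IsClosed B)
    (hAB : IsRetract (A ∩ B)) (h : SimplyConnectedSpace (A ∪ B : Set X)) :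
    SimplyConnectedSpace A := by
  classical
  obtain ⟨r, hr, hrAB, hid⟩ := hAB
  have hcont : ContinuousOn (A.piecewise id r) (A ∪ B) :=
    continuousOn_piecewise_union hA hB continuousOn_id hr.continuousOn fun x hx => (hid x hx).symm
  have hmem (x : X) : A.piecewise id r x ∈ A := by
    by_cases hx : x ∈ A <;> simp [hx, (hrAB x).1]
  refine simplyConnectedSpace_of_leftInverse (X := (A ∪ B : Set X))
    ⟨inclusion subset_union_left, continuous_inclusion _⟩
    ⟨fun x => ⟨A.piecewise id r x, hmem x⟩, hcont.domRestrict.subtype_mk _⟩ fun x => ?_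
  exact Subtype.ext (piecewise_eq_of_mem _ _ _ x.2)

theorem IsRetract.union {X : Type u} [PseudoMetricSpace X] [T2Space X] [Nonempty X]
    [TietzeExtension.{u} X] {A B : Set X} (hA : IsRetract A) (hB : IsRetract B)
    (hAB : IsRetract (A ∩ B)) : IsRetract (A ∪ B) := by
  classical
  have mem_of_le {C D : Set X} (hC : IsRetract C) {x : X} (hxD : x ∈ D)
      (hx : infDist x C ≤ infDist x D) : x ∈ C := by
    rw [infDist_zero_of_mem hxD] at hx
    exact (hC.isClosed.mem_iff_infDist_zero hC.nonempty).2 (hx.antisymm infDist_nonneg)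
  have hZ : IsClosed {x | infDist x A = infDist x B} :=
    isClosed_eq (continuous_infDist_pt A) (continuous_infDist_pt B)
  obtain ⟨r, hr, hrAB, hid⟩ := hAB
  obtain ⟨f, hf, hfA, hfid, hfr⟩ := hA.exists_extension hZ hr (fun x => (hrAB x).1)
    fun x hx => hid x ⟨hx.1, mem_of_le hB hx.1 hx.2.ge⟩
  obtain ⟨g, hg, hgB, hgid, hgr⟩ := hB.exists_extension hZ hr (fun x => (hrAB x).2)
    fun x hx => hid x ⟨mem_of_le hA hx.1 hx.2.le, hx.1⟩
  refine ⟨fun x => if infDist x A ≤ infDist x B then f x else g x, ?_, fun x => ?_, fun x hx => ?_⟩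
  · exact Continuous.if_le hf hg (continuous_infDist_pt A) (continuous_infDist_pt B)
      fun x hx => (hfr x hx).trans (hgr x hx).symm
  · dsimp only
    split_ifs
    exacts [Or.inl (hfA x), Or.inr (hgB x)]
  · dsimp only
    split_ifs with h
    · exact hfid x (hx.elim id fun hxB => mem_of_le hA hxB h)
    · exact hgid x (hx.elim (fun hxA => mem_of_le hB hxA (not_le.1 h).le) id)

theorem dist_le_of_inner_sub_nonpos {V : Type*} [NormedAddCommGroup V] [InnerProductSpace ℝ V]
    {x y p q : V} (hp : inner ℝ (x - p) (q - p) ≤ 0) (hq : inner ℝ (y - q) (p - q) ≤ 0) :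
    dist p q ≤ dist x y := by
  rw [dist_eq_norm, dist_eq_norm]
  have hsq : ‖p - q‖ * ‖p - q‖ ≤ ‖x - y‖ * ‖p - q‖ := calc
    ‖p - q‖ * ‖p - q‖
      = inner ℝ (x - y) (p - q) + inner ℝ (x - p) (q - p) + inner ℝ (y - q) (p - q) := by
        rw [← real_inner_self_eq_norm_mul_norm]
        simp only [inner_sub_left, inner_sub_right]
        ring
    _ ≤ inner ℝ (x - y) (p - q) := by linarith
    _ ≤ ‖x - y‖ * ‖p - q‖ := real_inner_le_norm _ _
  rcases (norm_nonneg (p - q)).eq_or_lt with h | h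
  · exact h ▸ norm_nonneg _
  · exact le_of_mul_le_mul_right hsq h

theorem isRetract_of_convex {V : Type*} [NormedAddCommGroup V] [InnerProductSpace ℝ V]
    [CompleteSpace V] {K : Set V} (hconv : Convex ℝ K) (hK : IsClosed K) (hne : K.Nonempty) :
    IsRetract K := by
  have hproj (x : V) : ∃ p ∈ K, ∀ w ∈ K, inner ℝ (x - p) (w - p) ≤ 0 :=
    let ⟨p, hp, hmin⟩ := exists_norm_eq_iInf_of_complete_convex hne hK.isComplete hconv x
    ⟨p, hp, (norm_eq_iInf_iff_real_inner_le_zero hconv hp).1 hmin⟩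
  choose r hrK hr using hproj
  have hlip (x y : V) : dist (r x) (r y) ≤ dist x y :=
    dist_le_of_inner_sub_nonpos (hr x _ (hrK y)) (hr y _ (hrK x))
  refine ⟨r, (LipschitzWith.mk_one hlip).continuous, hrK, fun x hx => ?_⟩
  have h := hr x x hx
  rwa [real_inner_self_nonpos, sub_eq_zero, eq_comm] at h

end Retract

section AffineFunctional

variable {V : Type*} [NormedAddCommGroup V] [NormedSpace ℝ V] {f : V →ᵃ[ℝ] ℝ}

theorem isOpenMap_affineFunctional (hf : Function.Surjective f) : IsOpenMap f :=
  AffineMap.isOpenMap_linear_iff.1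
    (LinearMap.isOpenMap_of_finiteDimensional _ ((AffineMap.linear_surjective_iff f).2 hf))

theorem convex_affineFunctional_le (f : V →ᵃ[ℝ] ℝ) (s : ℝ) : Convex ℝ {z | f z ≤ s} :=
  (convex_Iic s).affine_preimage f

theorem convex_affineFunctional_ge (f : V →ᵃ[ℝ] ℝ) (s : ℝ) : Convex ℝ {z | s ≤ f z} :=
  (convex_Ici s).affine_preimage f

theorem exists_subset_segment_of_collinear {K : Set V} (hK : Bornology.IsBounded K)
    (hcol : Collinear ℝ K) : ∃ p q, K ⊆ segment ℝ p q := by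
  obtain ⟨x₀, v, hv⟩ := (collinear_iff_exists_forall_eq_smul_vadd K).1 hcol
  obtain ⟨M, hM⟩ := hK.subset_closedBall x₀
  let g : ℝ →ᵃ[ℝ] V := AffineMap.lineMap x₀ (x₀ + v)
  refine ⟨g (-(M / ‖v‖)), g (M / ‖v‖), fun x hx => ?_⟩
  obtain ⟨r, rfl⟩ := hv x hx
  have hr : |r| * ‖v‖ ≤ M := by simpa [norm_smul] using hM hx
  have hM₀ : 0 ≤ M := (by positivity : 0 ≤ |r| * ‖v‖).trans hr
  have hc : -(M / ‖v‖) ≤ M / ‖v‖ := neg_le_self (by positivity)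
  rw [← image_segment, segment_eq_Icc hc]
  rcases eq_or_ne v 0 with rfl | hv₀
  · exact ⟨0, by simp, by simp [g]⟩
  · exact ⟨r, abs_le.1 ((le_div_iff₀ (norm_pos_iff.2 hv₀)).2 hr),
      by simp [g, AffineMap.lineMap_apply]⟩

variable [FiniteDimensional ℝ V]

theorem continuous_affineFunctional (f : V →ᵃ[ℝ] ℝ) : Continuous f :=
  f.continuous_of_finiteDimensional

theorem interior_setOf_le_affineFunctional (hf : Function.Surjective f) (s : ℝ) :
    interior {z | s ≤ f z} = {z | s < f z} := by
  have h := (isOpenMap_affineFunctional hf).preimage_interior_eq_interior_preimage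
    (continuous_affineFunctional f) (Ici s)
  rw [interior_Ici] at h
  exact h.symm

theorem lt_affineFunctional_of_mem_interior (hf : Function.Surjective f) {s : ℝ} {Y : Set V}
    (hY : ∀ y ∈ Y, s ≤ f y) {x : V} (hx : x ∈ interior Y) : s < f x := by
  have h : x ∈ interior {z | s ≤ f z} := interior_mono hY hx
  rwa [interior_setOf_le_affineFunctional hf] at h

theorem mem_frontier_of_affineFunctional_eq (hf : Function.Surjective f) {s : ℝ} {Y : Set V}
    (hY : ∀ y ∈ Y, s ≤ f y) {x : V} (hx : x ∈ Y) (hfx : f x = s) : x ∈ frontier Y :=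
  ⟨subset_closure hx, fun hxi => (lt_affineFunctional_of_mem_interior hf hY hxi).ne' hfx⟩

theorem exists_affineFunctional_lt_of_mem_nhds (hf : Function.Surjective f) {s : ℝ} {x : V}
    (hx : f x ≤ s) {U : Set V} (hU : U ∈ 𝓝 x) : ∃ z ∈ U, f z < s := by
  by_contra! h
  exact (lt_affineFunctional_of_mem_interior hf h (mem_interior_iff_mem_nhds.2 hU)).not_ge hx

theorem exists_mem_affineFunctional_ne (hf : Function.Surjective f) {C : Set V}
    (hC : (interior C).Nonempty) (s : ℝ) : ∃ p ∈ C, f p ≠ s := by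
  by_contra! h
  obtain ⟨x, hx⟩ := hC
  exact (lt_affineFunctional_of_mem_interior hf (fun y hy => (h y hy).ge) hx).ne'
    (h x (interior_subset hx))

theorem addHaar_affineFunctional_eq [MeasurableSpace V] [BorelSpace V] (μ : Measure V)
    [μ.IsAddHaarMeasure] (hf : Function.Surjective f) (s : ℝ) : μ {z | f z = s} = 0 := by
  refine measure_mono_null (fun z hz => ?_)
    ((convex_affineFunctional_ge f s).addHaar_frontier μ)
  exact mem_frontier_of_affineFunctional_eq hf (fun _ hy => hy) hz.ge hz

theorem collinear_affineFunctional_eq (hV : Module.finrank ℝ V = 2) (hf : Function.Surjective f)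
    (s : ℝ) : Collinear ℝ {z | f z = s} := by
  have hker : Module.finrank ℝ (LinearMap.ker f.linear) = 1 := by
    have h := f.linear.finrank_range_add_finrank_ker
    rw [LinearMap.range_eq_top.2 ((AffineMap.linear_surjective_iff f).2 hf), hV] at h
    simp only [finrank_top, Module.finrank_self] at h
    omega
  rw [collinear_iff_finrank_le_one, ← hker]
  refine Submodule.finrank_mono (Submodule.span_le.2 ?_)
  rintro _ ⟨x, hx, y, hy, rfl⟩
  have hxy : f x = f y := hx.trans hy.symm
  exact (f.linearMap_vsub x y).trans (sub_eq_zero.2 hxy)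

end AffineFunctional

section Plane

/-- The Euclidean plane. -/
abbrev Plane : Type := EuclideanSpace ℝ (Fin 2)

/-- Twice the signed area of the triangle `a b z`, as an affine functional of `z`: it vanishes on
the line through `a` and `b` and is positive to the left of the ray from `a` to `b`. -/
noncomputable def side (a b : Plane) : Plane →ᵃ[ℝ] ℝ where
  toFun z := (b 0 - a 0) * (z 1 - a 1) - (b 1 - a 1) * (z 0 - a 0)
  linear := (b 0 - a 0) • (EuclideanSpace.proj 1 : Plane →L[ℝ] ℝ).toLinearMap -
    (b 1 - a 1) • (EuclideanSpace.proj 0 : Plane →L[ℝ] ℝ).toLinearMap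
  map_vadd' z v := by simp; ring

theorem side_apply (a b z : Plane) :
    side a b z = (b 0 - a 0) * (z 1 - a 1) - (b 1 - a 1) * (z 0 - a 0) := rfl

theorem side_rotate (a b z : Plane) : side b z a = side a b z := by
  simp only [side_apply]; ring

theorem side_swap (a b z : Plane) : side b a z = -side a b z := by
  simp only [side_apply]; ring

@[simp]
theorem side_left (a b : Plane) : side a b a = 0 := by simp [side_apply]

@[simp]
theorem side_right (a b : Plane) : side a b b = 0 := by simp only [side_apply]; ring

@[fun_prop]
theorem continuous_side (a b : Plane) : Continuous (side a b) :=
  continuous_affineFunctional _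

theorem side_combo (a b x y : Plane) {s t : ℝ} (h : s + t = 1) :
    side a b (s • x + t • y) = s * side a b x + t * side a b y :=
  Convex.combo_affine_apply h

theorem side_eq_zero_of_mem_segment {a b z : Plane} (hz : z ∈ segment ℝ a b) : side a b z = 0 := by
  obtain ⟨s, t, -, -, hst, rfl⟩ := hz
  simp [side_combo _ _ _ _ hst]

theorem side_surjective {a b : Plane} (hab : a ≠ b) : Function.Surjective (side a b) := by
  intro s
  have hsq : (b 0 - a 0) ^ 2 + (b 1 - a 1) ^ 2 ≠ 0 := by
    intro h
    have h₀ : b 0 - a 0 = 0 := by nlinarith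
    have h₁ : b 1 - a 1 = 0 := by nlinarith
    exact hab (PiLp.ext (Fin.forall_fin_two.2 ⟨by linarith, by linarith⟩))
  refine ⟨a + (s / ((b 0 - a 0) ^ 2 + (b 1 - a 1) ^ 2)) • !₂[-(b 1 - a 1), b 0 - a 0], ?_⟩
  simp [side_apply]
  field_simp
  ring

theorem side_add_side_add_side (a b c z : Plane) :
    side b c z + side c a z + side a b z = side a b c := by
  simp only [side_apply]; ring

theorem eq_barycentric_side {a b c : Plane} (h : side a b c ≠ 0) (z : Plane) :
    z = (side b c z / side a b c) • a + (side c a z / side a b c) • b +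
      (side a b z / side a b c) • c := by
  ext i
  simp only [PiLp.add_apply, PiLp.smul_apply, smul_eq_mul]
  field_simp
  fin_cases i <;> simp only [side_apply, Fin.zero_eta, Fin.mk_one] <;> ring

theorem affineIndependent_of_side_ne_zero {a b c : Plane} (h : side a b c ≠ 0) :
    AffineIndependent ℝ ![a, b, c] := by
  rw [affineIndependent_iff_not_collinear_set]
  intro hcol
  obtain ⟨v, hv⟩ := (collinear_iff_of_mem (mem_insert a {b, c})).1 hcol
  obtain ⟨r, rfl⟩ := hv b (by simp)
  obtain ⟨s, rfl⟩ := hv c (by simp)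
  refine h ?_
  simp [side_apply]
  ring

end Plane

section FrontierArc

theorem subset_closure_diff_of_finite {X : Type*} [TopologicalSpace X] [T1Space X]
    {K T : Set X} (hK : IsPreconnected K) (hnt : K.Nontrivial) (hT : T.Finite) :
    K ⊆ closure (K \ T) := by
  intro x hx
  have hfreq := accPt_iff_frequently.1 (hK.preperfect_of_nontrivial hnt x hx)
  have havoid : ∀ᶠ y in 𝓝 x, y ∉ T \ {x} :=
    (hT.sdiff).isClosed.isOpen_compl.mem_nhds fun h => h.2 rfl
  exact mem_closure_iff_frequently.2 <| (hfreq.and_eventually havoid).mono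
    fun y hy => ⟨hy.1.2, fun hyT => hy.2 ⟨hyT, hy.1.1⟩⟩

variable {V : Type*} [NormedAddCommGroup V]

theorem exists_homeomorph_image_frontier_eq [NormedSpace ℝ V] {s t : Set V} {o : V}
    (hs : Convex ℝ s) (ht : Convex ℝ t) (hsb : Bornology.IsBounded s)
    (htb : Bornology.IsBounded t) (hos : o ∈ interior s) (hot : o ∈ interior t) :
    ∃ e : V ≃ₜ V, e '' frontier s = frontier t ∧ ∀ x ∈ frontier s ∩ frontier t, e x = x := by
  wlog ho : o = 0 generalizing s t o
  · have hfr (u : Set V) : frontier (-o +ᵥ u) = -o +ᵥ frontier u :=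
      ((Homeomorph.vadd (-o : V)).image_frontier u).symm
    have hint {u : Set V} (hu : o ∈ interior u) : (0 : V) ∈ interior (-o +ᵥ u) := by
      simpa [interior_vadd, mem_vadd_set_iff_neg_vadd_mem] using hu
    obtain ⟨e, he, hfix⟩ := this (hs.vadd (-o)) (ht.vadd (-o)) (hsb.vadd (-o)) (htb.vadd (-o))
      (hint hos) (hint hot) rfl
    refine ⟨(Homeomorph.vadd (-o)).trans (e.trans (Homeomorph.vadd o)), ?_, fun x hx => ?_⟩
    · rw [hfr, hfr] at he
      change (fun x => o +ᵥ e (-o +ᵥ x)) '' _ = _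
      rw [← vadd_neg_vadd o (frontier t), ← he, ← image_vadd, ← image_vadd, image_image,
        image_image]
    · rw [hfr, hfr] at hfix
      change o +ᵥ e (-o +ᵥ x) = x
      rw [hfix _ ⟨vadd_mem_vadd_set hx.1, vadd_mem_vadd_set hx.2⟩, vadd_neg_vadd]
  subst ho
  rw [mem_interior_iff_mem_nhds] at hos hot
  have hsv := NormedSpace.isVonNBounded_of_isBounded ℝ hsb
  have htv := NormedSpace.isVonNBounded_of_isBounded ℝ htb
  refine ⟨gaugeRescaleHomeomorph s t hs hos hsv ht hot htv, ?_, fun x hx => ?_⟩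
  · rw [← closure_sdiff_interior, image_sdiff (Homeomorph.injective _),
      image_gaugeRescaleHomeomorph_closure, image_gaugeRescaleHomeomorph_interior,
      closure_sdiff_interior]
  · change gaugeRescale s t x = x
    rw [gaugeRescale_def, (gauge_eq_one_iff_mem_frontier hs hos).2 hx.1,
      (gauge_eq_one_iff_mem_frontier ht hot).2 hx.2, div_one, one_smul]

theorem frontier_triangle [NormedSpace ℝ V] (t : AffineBasis (Fin 3) ℝ V) :
    frontier (convexHull ℝ (range t)) =
      {x | (∀ i, 0 ≤ t.coord i x) ∧ ∃ i, t.coord i x = 0} := by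
  have := t.finiteDimensional
  have hclosed : IsClosed (convexHull ℝ (range t)) :=
    ((finite_range t).isCompact_convexHull ℝ).isClosed
  rw [hclosed.frontier_eq, t.interior_convexHull, t.convexHull_eq_nonneg_coord]
  ext x
  simp only [Set.mem_sdiff, mem_ofPred_eq, not_forall, not_lt]
  exact and_congr_right fun hx => exists_congr fun i => ⟨fun h => h.antisymm (hx i), Eq.le⟩

theorem openSegment_triangle [NormedSpace ℝ V] (t : AffineBasis (Fin 3) ℝ V) :
    openSegment ℝ (t 0) (t 1) = {x | 0 < t.coord 0 x ∧ 0 < t.coord 1 x ∧ t.coord 2 x = 0} := by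
  ext x
  constructor
  · rintro ⟨u, v, hu, hv, huv, rfl⟩
    simp [Convex.combo_affine_apply huv, hu, hv]
  · rintro ⟨h₀, h₁, h₂⟩
    have hsum := t.sum_coord_apply_eq_one x
    have hx := t.linear_combination_coord_eq_self x
    rw [Fin.sum_univ_three, h₂] at hsum hx
    exact ⟨_, _, h₀, h₁, by simpa using hsum, by simpa using hx⟩

theorem isRetract_frontier_triangle_diff_openSegment [InnerProductSpace ℝ V]
    (t : AffineBasis (Fin 3) ℝ V) :
    IsRetract (frontier (convexHull ℝ (range t)) \ openSegment ℝ (t 0) (t 1)) := by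
  have := t.finiteDimensional
  have := FiniteDimensional.complete ℝ V
  let edge (i : Fin 3) : Set V := {x | (∀ j, 0 ≤ t.coord j x) ∧ t.coord i x = 0}
  have hcoord (i : Fin 3) : Continuous (t.coord i) := continuous_affineFunctional _
  have hconv (i : Fin 3) : Convex ℝ (edge i) := by
    rintro x ⟨hx, hxi⟩ y ⟨hy, hyi⟩ u v hu hv huv
    refine ⟨fun j => ?_, ?_⟩ <;> rw [Convex.combo_affine_apply huv]
    · exact add_nonneg (mul_nonneg hu (hx j)) (mul_nonneg hv (hy j))
    · simp [hxi, hyi]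
  have hclosed (i : Fin 3) : IsClosed (edge i) := by
    simp only [edge, ofPred_and, ofPred_forall]
    exact (isClosed_iInter fun j => isClosed_le continuous_const (hcoord j)).inter
      (isClosed_eq (hcoord i) continuous_const)
  have hapex (i : Fin 3) (hi : i ≠ 2) : t 2 ∈ edge i :=
    ⟨fun j => by rw [t.coord_apply]; split_ifs <;> simp, by rw [t.coord_apply_ne hi]⟩
  have h₀ := hapex 0 (by decide)
  have h₁ := hapex 1 (by decide)
  have hunion : frontier (convexHull ℝ (range t)) \ openSegment ℝ (t 0) (t 1)
      = edge 0 ∪ edge 1 := by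
    rw [frontier_triangle, openSegment_triangle]
    ext x
    simp only [edge, Set.mem_sdiff, mem_union, mem_ofPred_eq, Fin.exists_fin_succ,
      Fin.forall_fin_succ, Fin.exists_fin_zero, Fin.forall_fin_zero, Fin.succ_zero_eq_one,
      Fin.succ_one_eq_two]
    grind
  rw [hunion]
  exact (isRetract_of_convex (hconv 0) (hclosed 0) ⟨_, h₀⟩).union
    (isRetract_of_convex (hconv 1) (hclosed 1) ⟨_, h₁⟩)
    (isRetract_of_convex ((hconv 0).inter (hconv 1)) ((hclosed 0).inter (hclosed 1)) ⟨_, h₀, h₁⟩)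

end FrontierArc

section PlanarConvex

variable {C Y : Set Plane} {a b p x : Plane}

theorem eventually_mem_of_side_nonneg (hY : Convex ℝ Y) (ha : a ∈ Y) (hb : b ∈ Y) (hp : p ∈ Y)
    (hpos : 0 < side a b p) (hx : x ∈ openSegment ℝ a b) :
    ∀ᶠ z in 𝓝 x, 0 ≤ side a b z → z ∈ Y := by
  obtain ⟨s, t, hs, ht, hst, rfl⟩ := hx
  have hcoord₀ : 0 < side b p (s • a + t • b) := by
    rw [side_combo _ _ _ _ hst, side_left, side_rotate]
    simpa using mul_pos hs hpos
  have hcoord₁ : 0 < side p a (s • a + t • b) := by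
    rw [side_combo _ _ _ _ hst, side_right, ← side_rotate]
    simpa using mul_pos ht hpos
  filter_upwards [(continuous_side b p).continuousAt.eventually (lt_mem_nhds hcoord₀),
    (continuous_side p a).continuousAt.eventually (lt_mem_nhds hcoord₁)] with z h₀ h₁ h₂
  have hmem := hY.sum_mem (t := Finset.univ) (z := ![a, b, p])
    (w := ![side b p z / side a b p, side p a z / side a b p, side a b z / side a b p])
    (by
      intro i _
      fin_cases i
      exacts [div_nonneg h₀.le hpos.le, div_nonneg h₁.le hpos.le, div_nonneg h₂ hpos.le])
    (by
      simp only [Fin.sum_univ_three, Matrix.cons_val]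
      rw [← add_div, ← add_div, side_add_side_add_side, div_self hpos.ne'])
    (by
      intro i _
      fin_cases i
      exacts [ha, hb, hp])
  rw [Fin.sum_univ_three] at hmem
  rwa [eq_barycentric_side hpos.ne' z]

theorem openSegment_subset_frontier (hY : Convex ℝ Y) (hab : a ≠ b) (ha : a ∈ Y) (hb : b ∈ Y)
    (hside : ∀ y ∈ Y, 0 ≤ side a b y) : openSegment ℝ a b ⊆ frontier Y := fun _ hx =>
  have hx' := openSegment_subset_segment ℝ a b hx
  mem_frontier_of_affineFunctional_eq (side_surjective hab) hside (hY.segment_subset ha hb hx')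
    (side_eq_zero_of_mem_segment hx')

theorem isRetract_frontier_diff_openSegment (hY : IsCompact Y) (hconv : Convex ℝ Y)
    (hint : (interior Y).Nonempty) (hab : a ≠ b) (ha : a ∈ Y) (hb : b ∈ Y)
    (hside : ∀ y ∈ Y, 0 ≤ side a b y) : IsRetract (frontier Y \ openSegment ℝ a b) := by
  obtain ⟨o, ho⟩ := hint
  have hside_o := lt_affineFunctional_of_mem_interior (side_surjective hab) hside ho
  -- The apex of the triangle over `[a, b]` with centroid `o`.
  let c : Plane := (3 : ℝ) • o - a - b
  have hc : side a b c = 3 * side a b o := by simp [c, side_apply]; ring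
  have hc_pos : 0 < side a b c := by rw [hc]; positivity
  have hind : AffineIndependent ℝ ![a, b, c] :=
    affineIndependent_of_side_ne_zero hc_pos.ne'
  let t : AffineBasis (Fin 3) ℝ Plane :=
    ⟨![a, b, c], hind, hind.affineSpan_eq_top_iff_card_eq_finrank_add_one.2 (by simp)⟩
  have hcentroid : o ∈ interior (convexHull ℝ (range t)) := by
    convert t.centroid_mem_interior_convexHull
    suffices o = (3 : ℝ)⁻¹ • t 0 + (3 : ℝ)⁻¹ • t 1 + (3 : ℝ)⁻¹ • t 2 by
      simpa [Finset.centroid_eq_centerMass, Finset.centerMass, Fin.sum_univ_three] using this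
    change o = (3 : ℝ)⁻¹ • a + (3 : ℝ)⁻¹ • b + (3 : ℝ)⁻¹ • c
    module
  have hT : ∀ y ∈ convexHull ℝ (range t), 0 ≤ side a b y := by
    refine convexHull_min (range_subset_iff.2 fun i => ?_) (convex_affineFunctional_ge _ 0)
    fin_cases i
    exacts [(side_left a b).ge, (side_right a b).ge, hc_pos.le]
  have hTconv := convex_convexHull ℝ (range t)
  have hTmem (i : Fin 3) : t i ∈ convexHull ℝ (range t) := subset_convexHull ℝ _ (mem_range_self i)
  obtain ⟨e, he, hfix⟩ := exists_homeomorph_image_frontier_eq hTconv hconv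
    ((finite_range t).isCompact_convexHull ℝ).isBounded hY.isBounded hcentroid ho
  have hseg : e '' openSegment ℝ a b = openSegment ℝ a b :=
    (image_congr fun x hx => hfix x
      ⟨openSegment_subset_frontier hTconv hab (hTmem 0) (hTmem 1) hT hx,
        openSegment_subset_frontier hconv hab ha hb hside hx⟩).trans (image_id _)
  rw [← he, ← hseg, ← image_sdiff e.injective]
  exact (isRetract_frontier_triangle_diff_openSegment t).image e

end PlanarConvex

section Overlap

variable {C D : Set Plane} {a b p q : Plane}

theorem interior_inter_nonempty_of_side_pos (hC : Convex ℝ C) (hD : Convex ℝ D) (hab : a ≠ b)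
    (haC : a ∈ C) (hbC : b ∈ C) (haD : a ∈ D) (hbD : b ∈ D) (hpC : p ∈ C) (hqD : q ∈ D)
    (hp : 0 < side a b p) (hq : 0 < side a b q) : (interior (C ∩ D)).Nonempty := by
  obtain ⟨m, hm⟩ : (openSegment ℝ a b).Nonempty := ⟨_, midpoint_mem_openSegment a b⟩
  have hnear : ∀ᶠ z in 𝓝 m, 0 ≤ side a b z → z ∈ C ∩ D := by
    filter_upwards [eventually_mem_of_side_nonneg hC haC hbC hpC hp hm,
      eventually_mem_of_side_nonneg hD haD hbD hqD hq hm] with z hzC hzD h using ⟨hzC h, hzD h⟩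
  have hm₀ := side_eq_zero_of_mem_segment (openSegment_subset_segment ℝ a b hm)
  obtain ⟨z, hz, hpos⟩ := exists_affineFunctional_lt_of_mem_nhds (side_surjective hab.symm)
    (by rw [side_swap, hm₀, neg_zero] : side b a m ≤ 0) (eventually_eventually_nhds.2 hnear)
  rw [side_swap, neg_lt_zero] at hpos
  refine ⟨z, mem_interior_iff_mem_nhds.2 ?_⟩
  filter_upwards [hz, (continuous_side a b).continuousAt.eventually (lt_mem_nhds hpos)]
    with w hw hw' using hw hw'.le

theorem openSegment_subset_interior_union (hC : Convex ℝ C) (hD : Convex ℝ D)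
    (hCi : (interior C).Nonempty) (hDi : (interior D).Nonempty)
    (hdisj : Disjoint (interior C) (interior D)) (hab : a ≠ b)
    (haC : a ∈ C) (hbC : b ∈ C) (haD : a ∈ D) (hbD : b ∈ D) :
    openSegment ℝ a b ⊆ interior (C ∪ D) := by
  have hsurj := side_surjective hab
  obtain ⟨p, hpC, hp⟩ := exists_mem_affineFunctional_ne hsurj hCi 0
  obtain ⟨q, hqD, hq⟩ := exists_mem_affineFunctional_ne hsurj hDi 0
  wlog hp_pos : 0 < side a b p generalizing a b
  · rw [openSegment_symm]
    refine this hab.symm hbC haC hbD haD (side_surjective hab.symm) ?_ ?_ ?_ <;> rw [side_swap]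
    · exact neg_ne_zero.2 hp
    · exact neg_ne_zero.2 hq
    · exact neg_pos.2 (hp.lt_of_le (not_lt.1 hp_pos))
  have hq_neg : 0 < side b a q := by
    rw [side_swap, neg_pos]
    refine hq.lt_of_le (not_lt.1 fun hq_pos => ?_)
    have hne := interior_inter_nonempty_of_side_pos hC hD hab haC hbC haD hbD hpC hqD hp_pos hq_pos
    rw [interior_inter] at hne
    exact not_disjoint_iff_nonempty_inter.2 hne hdisj
  intro x hx
  rw [mem_interior_iff_mem_nhds]
  filter_upwards [eventually_mem_of_side_nonneg hC haC hbC hpC hp_pos hx,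
    eventually_mem_of_side_nonneg hD hbD haD hqD hq_neg (openSegment_symm ℝ a b ▸ hx)]
    with z hzC hzD
  rw [side_swap, neg_nonneg] at hzD
  exact (le_total 0 (side a b z)).imp hzC hzD

end Overlap

section ConvexPolygon

/-- The polygonality condition on frontiers: `S` lies in a finite union of closed segments. -/
def CoveredBySegments (S : Set Plane) : Prop :=
  ∃ F : Finset (Plane × Plane), S ⊆ ⋃ e ∈ F, segment ℝ e.1 e.2

variable {S T K : Set Plane}

theorem coveredBySegments_empty : CoveredBySegments ∅ := ⟨∅, empty_subset _⟩

theorem coveredBySegments_segment (a b : Plane) : CoveredBySegments (segment ℝ a b) :=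
  ⟨{(a, b)}, by simp⟩

namespace CoveredBySegments

theorem mono (hT : CoveredBySegments T) (h : S ⊆ T) : CoveredBySegments S :=
  let ⟨F, hF⟩ := hT
  ⟨F, h.trans hF⟩

theorem union (hS : CoveredBySegments S) (hT : CoveredBySegments T) :
    CoveredBySegments (S ∪ T) := by
  classical
  obtain ⟨F, hF⟩ := hS
  obtain ⟨G, hG⟩ := hT
  refine ⟨F ∪ G, ?_⟩
  rw [Finset.set_biUnion_union]
  exact union_subset_union hF hG

theorem iUnion {ι : Type*} [Finite ι] {S : ι → Set Plane} (hS : ∀ i, CoveredBySegments (S i)) :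
    CoveredBySegments (⋃ i, S i) := by
  classical
  have := Fintype.ofFinite ι
  choose F hF using hS
  refine ⟨Finset.univ.biUnion F, iUnion_subset fun i => (hF i).trans ?_⟩
  exact biUnion_mono (fun e he => Finset.mem_biUnion.2 ⟨i, Finset.mem_univ i, he⟩) fun _ _ => le_rfl

theorem volume_eq_zero (hS : CoveredBySegments S) : volume S = 0 := by
  obtain ⟨F, hF⟩ := hS
  refine measure_mono_null hF ((measure_biUnion_null_iff F.countable_toSet).2 fun e _ => ?_)
  rcases eq_or_ne e.1 e.2 with h | h
  · simp [h]
  · exact measure_mono_null (fun z hz => side_eq_zero_of_mem_segment hz)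
      (addHaar_affineFunctional_eq volume (side_surjective h) 0)

end CoveredBySegments

/-- A convex polygon, possibly degenerate: its interior is allowed to be empty. -/
structure IsConvexPolygon (K : Set Plane) : Prop where
  isCompact : IsCompact K
  convex : Convex ℝ K
  frontier_covered : CoveredBySegments (frontier K)

namespace IsConvexPolygon

variable {f : Plane →ᵃ[ℝ] ℝ}

theorem closure_interior (hK : IsConvexPolygon K) (hint : (interior K).Nonempty) :
    closure (interior K) = K := by
  rw [hK.convex.closure_interior_eq_closure_of_nonempty_interior hint,
    hK.isCompact.isClosed.closure_eq]

theorem inter_le (hK : IsConvexPolygon K) (hf : Function.Surjective f) (s : ℝ) :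
    IsConvexPolygon (K ∩ {z | f z ≤ s}) := by
  have hcont := continuous_affineFunctional f
  refine ⟨hK.isCompact.inter_right (isClosed_le hcont continuous_const),
    hK.convex.inter (convex_affineFunctional_le f s), ?_⟩
  obtain ⟨p, q, hpq⟩ := exists_subset_segment_of_collinear
    (hK.isCompact.isBounded.subset inter_subset_left : Bornology.IsBounded (K ∩ {z | f z = s}))
    ((collinear_affineFunctional_eq (by simp) hf s).subset inter_subset_right)
  refine (hK.frontier_covered.union (coveredBySegments_segment p q)).mono fun x hx => ?_
  rcases frontier_inter_subset _ _ hx with ⟨hxK, -⟩ | ⟨hxK, hxf⟩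
  · exact .inl hxK
  · rw [hK.isCompact.isClosed.closure_eq] at hxK
    exact .inr (hpq ⟨hxK, frontier_le_subset_eq hcont continuous_const hxf⟩)

end IsConvexPolygon

end ConvexPolygon

section Attachment

variable {P R Y : Set Plane} {a b : Plane}

/-- `R` splits `P` into the two simple polygons `R` and `closure (P \ R)`. The empty set is
allowed as `R`, and polygonality of the second piece is left out because it is automatic. -/
structure Splits (P R : Set Plane) : Prop where
  subset : R ⊆ P
  isClosed : IsClosed R
  isRetract : IsRetract R ∨ R = ∅
  closure_interior : closure (interior R) = R
  frontier_covered : CoveredBySegments (frontier R)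
  simplyConnected_rest : SimplyConnectedSpace (closure (P \ R))

theorem splits_empty (hP : IsSimplePolygon P) : Splits P ∅ where
  subset := empty_subset P
  isClosed := isClosed_empty
  isRetract := .inr rfl
  closure_interior := by simp
  frontier_covered := by simpa using coveredBySegments_empty
  simplyConnected_rest := by
    rw [sdiff_empty, hP.1.1.isClosed.closure_eq]
    exact hP.2

/-- The convex polygon `Y ⊆ P`, lying to the left of its edge `[a, b]`, can be glued to `R`
inside `P`: it meets `R` in a subsegment of `[a, b]`, the right-hand side of `[a, b]` is already
filled by `R`, and the rest of the boundary of `Y` touches that of `P` in finitely many points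
only. -/
structure IsAttachment (P R Y : Set Plane) (a b : Plane) : Prop where
  subset : Y ⊆ P
  isConvexPolygon : IsConvexPolygon Y
  interior_nonempty : (interior Y).Nonempty
  ne : a ≠ b
  left_mem : a ∈ Y
  right_mem : b ∈ Y
  side_nonneg : ∀ y ∈ Y, 0 ≤ side a b y
  inter_subset : R ∩ Y ⊆ segment ℝ a b
  inter_convex : Convex ℝ (R ∩ Y)
  inter_nonempty : (R ∩ Y).Nonempty ∨ R = ∅
  eventually_mem : ∀ x ∈ openSegment ℝ a b, ∀ᶠ z in 𝓝 x, z ∈ P → side a b z < 0 → z ∈ R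
  finite_frontier : (frontier Y \ (segment ℝ a b ∪ interior P)).Finite

namespace IsAttachment

theorem isClosed (h : IsAttachment P R Y a b) : IsClosed Y := h.isConvexPolygon.isCompact.isClosed

theorem closure_interior (h : IsAttachment P R Y a b) : closure (interior Y) = Y :=
  h.isConvexPolygon.closure_interior h.interior_nonempty

theorem side_pos (h : IsAttachment P R Y a b) {x : Plane} (hx : x ∈ interior Y) :
    0 < side a b x :=
  lt_affineFunctional_of_mem_interior (side_surjective h.ne) h.side_nonneg hx

theorem closure_diff_union (h : IsAttachment P R Y a b) :
    closure (P \ (R ∪ Y)) ∪ Y = closure (P \ R) := by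
  refine Subset.antisymm (union_subset ?_ ?_)
    (closure_minimal ?_ (isClosed_closure.union h.isClosed))
  · exact closure_mono (sdiff_subset_sdiff_right subset_union_left)
  · rw [← h.closure_interior]
    refine closure_mono fun x hx => ⟨h.subset (interior_subset hx), fun hxR => ?_⟩
    exact (h.side_pos hx).ne'
      (side_eq_zero_of_mem_segment (h.inter_subset ⟨hxR, interior_subset hx⟩))
  · rintro x ⟨hxP, hxR⟩
    exact or_iff_not_imp_right.2 fun hxY => subset_closure ⟨hxP, fun h => h.elim hxR hxY⟩

theorem closure_diff_inter_subset (h : IsAttachment P R Y a b) :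
    closure (P \ (R ∪ Y)) ∩ Y ⊆ frontier Y \ openSegment ℝ a b := by
  rintro x ⟨hx, hxY⟩
  refine ⟨⟨subset_closure hxY, fun hxi => ?_⟩, fun hxab => ?_⟩
  · obtain ⟨z, hzY, hz⟩ := mem_closure_iff_nhds.1 hx _ (isOpen_interior.mem_nhds hxi)
    exact hz.2 (.inr (interior_subset hzY))
  · obtain ⟨o, ho⟩ := h.interior_nonempty
    have hleft := eventually_mem_of_side_nonneg h.isConvexPolygon.convex h.left_mem h.right_mem
      (interior_subset ho) (h.side_pos ho) hxab
    obtain ⟨z, ⟨hzR, hzY⟩, hzP, hz⟩ :=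
      mem_closure_iff_nhds.1 hx _ ((h.eventually_mem x hxab).and hleft)
    exact hz ((lt_or_ge (side a b z) 0).imp (hzR hzP) hzY)

theorem isRetract_frontier_diff (h : IsAttachment P R Y a b) :
    IsRetract (frontier Y \ openSegment ℝ a b) :=
  isRetract_frontier_diff_openSegment h.isConvexPolygon.isCompact h.isConvexPolygon.convex
    h.interior_nonempty h.ne h.left_mem h.right_mem h.side_nonneg

theorem frontier_diff_nontrivial (h : IsAttachment P R Y a b) :
    (frontier Y \ openSegment ℝ a b).Nontrivial := by
  have hfrontier {x : Plane} (hx : x ∈ Y) (hx₀ : side a b x = 0) : x ∈ frontier Y :=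
    mem_frontier_of_affineFunctional_eq (side_surjective h.ne) h.side_nonneg hx hx₀
  exact ⟨a, ⟨hfrontier h.left_mem (side_left a b), by simp [h.ne]⟩,
    b, ⟨hfrontier h.right_mem (side_right a b), by simp [h.ne]⟩, h.ne⟩

theorem subset_closure_diff_inter (h : IsAttachment P R Y a b) (hR : IsClosed R) :
    frontier Y \ openSegment ℝ a b ⊆ closure (P \ (R ∪ Y)) ∩ Y := by
  refine subset_inter ?_ fun x hx => h.isClosed.frontier_subset hx.1
  -- All but finitely many points of the arc are interior to `P` and off `R`.
  refine (subset_closure_diff_of_finite h.isRetract_frontier_diff.isPreconnected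
    h.frontier_diff_nontrivial (h.finite_frontier.union (toFinite {a, b}))).trans
    (closure_minimal ?_ isClosed_closure)
  rintro y ⟨⟨hyY, hyab⟩, hyT⟩
  rw [mem_union, not_or] at hyT
  have hseg : y ∉ segment ℝ a b := fun hy => by
    rw [← insert_endpoints_openSegment, ← union_singleton] at hy
    simp_all
  have hyP : y ∈ interior P := by
    by_contra hyP
    exact hyT.1 ⟨hyY, fun hy => hy.elim hseg hyP⟩
  have hyR : y ∉ R := fun hy => hseg (h.inter_subset ⟨hy, h.isClosed.frontier_subset hyY⟩)
  have hyc : y ∈ closure Yᶜ := by rw [closure_compl]; exact hyY.2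
  refine mem_closure_iff_frequently.2 (((mem_closure_iff_frequently.1 hyc).and_eventually
    (inter_mem (isOpen_interior.mem_nhds hyP) (hR.isOpen_compl.mem_nhds hyR))).mono ?_)
  exact fun z hz => ⟨interior_subset hz.2.1, fun hzRY => hzRY.elim hz.2.2 hz.1⟩

theorem isRetract_union (h : IsAttachment P R Y a b) (hR : IsRetract R ∨ R = ∅) :
    IsRetract (R ∪ Y) := by
  have hY := isRetract_of_convex h.isConvexPolygon.convex h.isClosed ⟨a, h.left_mem⟩
  rcases hR with hR | rfl
  · exact hR.union hY (isRetract_of_convex h.inter_convex (hR.isClosed.inter h.isClosed)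
      (h.inter_nonempty.resolve_right hR.nonempty.ne_empty))
  · rwa [empty_union]

theorem splits_union (h : IsAttachment P R Y a b) (hR : Splits P R) : Splits P (R ∪ Y) where
  subset := union_subset hR.subset h.subset
  isClosed := hR.isClosed.union h.isClosed
  isRetract := .inl (h.isRetract_union hR.isRetract)
  closure_interior := by
    refine (closure_minimal interior_subset (hR.isClosed.union h.isClosed)).antisymm ?_
    nth_rw 1 [← hR.closure_interior, ← h.closure_interior, ← closure_union]
    exact closure_mono (union_subset_iff.2
      ⟨interior_mono subset_union_left, interior_mono subset_union_right⟩)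
  frontier_covered :=
    (hR.frontier_covered.union h.isConvexPolygon.frontier_covered).mono <|
      (frontier_union_subset R Y).trans (union_subset_union inter_subset_left inter_subset_right)
  simplyConnected_rest := by
    refine simplyConnectedSpace_of_union isClosed_closure h.isClosed ?_ ?_
    · rw [h.closure_diff_inter_subset.antisymm (h.subset_closure_diff_inter hR.isClosed)]
      exact h.isRetract_frontier_diff
    · rw [h.closure_diff_union]
      exact hR.simplyConnected_rest

theorem interior_slice_nonempty (h : IsAttachment P R Y a b) {s : ℝ} (hs : 0 < s) :
    (interior (Y ∩ {z | side a b z ≤ s})).Nonempty := by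
  obtain ⟨x, hx, hxs⟩ : ∃ x ∈ interior Y, side a b x < s := by
    have ha : a ∈ closure (interior Y) := h.closure_interior.symm ▸ h.left_mem
    have hlt : ∀ᶠ z in 𝓝 a, side a b z < s :=
      (continuous_side a b).continuousAt.eventually (gt_mem_nhds (by simpa using hs))
    obtain ⟨x, hxs, hx⟩ := mem_closure_iff_nhds.1 ha _ hlt
    exact ⟨x, hx, hxs⟩
  refine ⟨x, mem_interior_iff_mem_nhds.2 ?_⟩
  filter_upwards [mem_interior_iff_mem_nhds.1 hx,
    (continuous_side a b).continuousAt.eventually (gt_mem_nhds hxs)] with z hzY hzs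
    using ⟨hzY, hzs.le⟩

theorem slice (h : IsAttachment P R Y a b) {s : ℝ} (hs : 0 < s) :
    IsAttachment P R (Y ∩ {z | side a b z ≤ s}) a b := by
  have hinter : R ∩ (Y ∩ {z | side a b z ≤ s}) = R ∩ Y := by
    rw [← inter_assoc, inter_eq_left]
    exact fun x hx => (side_eq_zero_of_mem_segment (h.inter_subset hx)).trans_le hs.le
  exact
    { h with
      subset := inter_subset_left.trans h.subset
      isConvexPolygon := h.isConvexPolygon.inter_le (side_surjective h.ne) s
      interior_nonempty := h.interior_slice_nonempty hs
      left_mem := ⟨h.left_mem, (side_left a b).trans_le hs.le⟩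
      right_mem := ⟨h.right_mem, (side_right a b).trans_le hs.le⟩
      side_nonneg := fun y hy => h.side_nonneg y hy.1
      inter_subset := hinter ▸ h.inter_subset
      inter_convex := hinter ▸ h.inter_convex
      inter_nonempty := hinter ▸ h.inter_nonempty
      finite_frontier := by
        refine h.finite_frontier.subset fun y hy =>
          ⟨⟨closure_mono inter_subset_left hy.1.1, ?_⟩, hy.2⟩
        exact fun hyY => hy.2 (.inr (interior_mono h.subset hyY)) }

theorem continuous_volume_slice (h : IsAttachment P R Y a b) (hP : IsCompact P) (hRP : R ⊆ P)
    (hR : IsClosed R) : Continuous fun s => volume (R ∪ Y ∩ {z | side a b z ≤ s}) := by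
  have hclosed (s : ℝ) : IsClosed (R ∪ Y ∩ {z | side a b z ≤ s}) :=
    hR.union (h.isClosed.inter (isClosed_le (continuous_side a b) continuous_const))
  refine continuous_iff_continuousAt.2 fun s => ?_
  refine tendsto_measure_of_ae_tendsto_indicator (𝓝 s) (hclosed s).measurableSet
    (fun t => (hclosed t).measurableSet) hP.isClosed.measurableSet hP.measure_lt_top.ne
    (.of_forall fun t => union_subset hRP (inter_subset_left.trans h.subset)) ?_
  filter_upwards [compl_mem_ae_iff.2 (addHaar_affineFunctional_eq volume (side_surjective h.ne) s)]
    with x (hx : side a b x ≠ s)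
  rcases hx.lt_or_gt with hlt | hgt
  · filter_upwards [lt_mem_nhds hlt] with t ht
    simp [hlt.le, ht.le]
  · filter_upwards [gt_mem_nhds hgt] with t ht
    simp [hgt.not_ge, ht.not_ge]

theorem exists_slice_volume_eq (h : IsAttachment P R Y a b) (hP : IsCompact P) (hRP : R ⊆ P)
    (hR : IsClosed R) {v : ENNReal} (hv : volume R < v) (hv' : v ≤ volume (R ∪ Y)) :
    ∃ s, 0 < s ∧ volume (R ∪ Y ∩ {z | side a b z ≤ s}) = v := by
  obtain ⟨s, hs₀, hs⟩ :=
    (h.isConvexPolygon.isCompact.image (continuous_side a b)).isBounded.exists_pos_norm_le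
  have hfull : Y ∩ {z | side a b z ≤ s} = Y :=
    inter_eq_left.2 fun y hy => (le_abs_self _).trans (hs _ (mem_image_of_mem _ hy))
  have hempty : volume (R ∪ Y ∩ {z | side a b z ≤ 0}) ≤ volume R := by
    have hnull : volume (Y ∩ {z | side a b z ≤ 0}) = 0 :=
      measure_mono_null (fun z hz => hz.2.antisymm (h.side_nonneg z hz.1))
        (addHaar_affineFunctional_eq volume (side_surjective h.ne) 0)
    exact (measure_union_le _ _).trans_eq (by rw [hnull, add_zero])
  obtain ⟨t, ht, rfl⟩ := intermediate_value_Icc hs₀.le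
    (h.continuous_volume_slice hP hRP hR).continuousOn
    (show v ∈ Icc _ _ from ⟨hempty.trans hv.le, by rwa [hfull]⟩)
  exact ⟨t, ht.1.lt_of_ne fun h₀ => (hempty.trans_lt (h₀ ▸ hv)).ne rfl, rfl⟩

end IsAttachment

/-- The subsets of `P` obtained from `∅` by successive attachments of convex polygons. -/
inductive Reachable (P : Set Plane) : Set Plane → Prop
  | empty : Reachable P ∅
  | attach {R Y : Set Plane} {a b : Plane} :
      Reachable P R → IsAttachment P R Y a b → Reachable P (R ∪ Y)

theorem Reachable.splits (hP : IsSimplePolygon P) (hR : Reachable P R) : Splits P R := by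
  induction hR with
  | empty => exact splits_empty hP
  | attach _ hY ih => exact hY.splits_union ih

theorem Reachable.exists_splits_volume_eq (hP : IsSimplePolygon P) (hR : Reachable P R)
    {v : ENNReal} (hv : 0 < v) (hvR : v ≤ volume R) : ∃ R', Splits P R' ∧ volume R' = v := by
  induction hR with
  | empty => simp [hv.ne'] at hvR
  | @attach R Y a b hR hY ih =>
    rcases le_or_gt v (volume R) with hle | hlt
    · exact ih hle
    · have hsplit := hR.splits hP
      obtain ⟨s, hs, hvol⟩ :=
        hY.exists_slice_volume_eq hP.1.1 hsplit.subset hsplit.isClosed hlt hvR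
      exact ⟨_, (hY.slice hs).splits_union hsplit, hvol⟩

end Attachment

section LocalCone

theorem subset_interior_of_isPreconnected {X : Type*} [TopologicalSpace X] {s B : Set X}
    (hs : IsPreconnected s) (hB : Disjoint s (frontier B)) (hsB : (s ∩ interior B).Nonempty) :
    s ⊆ interior B := by
  refine hs.subset_left_of_subset_union isOpen_interior isClosed_closure.isOpen_compl
    (disjoint_compl_right.mono_left interior_subset_closure) (fun x hx => ?_) hsB
  rw [mem_union, mem_compl_iff]
  by_contra! h
  exact disjoint_left.1 hB hx ⟨h.2, h.1⟩

variable {V : Type*} [NormedAddCommGroup V] [NormedSpace ℝ V] {S : Set V} {v : V}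

theorem eventually_segment_subset {U : Set V} (hU : U ∈ 𝓝 v) :
    ∀ᶠ x in 𝓝 v, segment ℝ v x ⊆ U := by
  simpa only [nhdsWithin_univ, subset_def] using
    convex_univ.eventually_nhdsWithin_segment (𝕜 := ℝ) (mem_univ v) (by rwa [nhdsWithin_univ])

theorem isPreconnected_ball_diff_center (hV : 1 < Module.rank ℝ V) (v : V) (r : ℝ) :
    IsPreconnected (ball v r \ {v}) := by
  have himage : ball v r \ {v} = (fun p : ℝ × V => v + p.1 • p.2) '' Ioo 0 r ×ˢ sphere 0 1 := by
    ext x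
    constructor
    · rintro ⟨hxr, hxv⟩
      have hnorm : 0 < ‖x - v‖ := norm_pos_iff.2 (sub_ne_zero.2 hxv)
      refine ⟨(‖x - v‖, ‖x - v‖⁻¹ • (x - v)), ⟨⟨hnorm, mem_ball_iff_norm.1 hxr⟩, ?_⟩, ?_⟩
      · simp [norm_smul, hnorm.ne']
      · simp [smul_smul, hnorm.ne']
    · rintro ⟨⟨t, u⟩, ⟨ht, hu⟩, rfl⟩
      have hu₁ : ‖u‖ = 1 := mem_sphere_zero_iff_norm.1 hu
      have hu₀ : u ≠ 0 := norm_ne_zero_iff.1 (hu₁ ▸ one_ne_zero)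
      exact ⟨by simpa [norm_smul, hu₁, abs_of_pos ht.1] using ht.2, by simp [ht.1.ne', hu₀]⟩
  rw [himage]
  exact (isPreconnected_Ioo.prod (isPreconnected_sphere hV 0 1)).image _ (by fun_prop)

theorem exists_ne_mem_frontier (hV : 1 < Module.rank ℝ V) {B : Set V} (hB : IsClosed B)
    (hv : v ∈ closure (interior B)) (hv' : v ∉ interior B) {U : Set V} (hU : U ∈ 𝓝 v) :
    ∃ y ∈ U, y ≠ v ∧ y ∈ frontier B := by
  obtain ⟨r, hr, hrU⟩ := Metric.mem_nhds_iff.1 hU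
  by_contra! h
  have hball : ball v r \ {v} ⊆ interior B := by
    refine subset_interior_of_isPreconnected (isPreconnected_ball_diff_center hV v r)
      (disjoint_left.2 fun y hy => h y (hrU hy.1) hy.2) ?_
    obtain ⟨w, hwr, hw⟩ := mem_closure_iff_nhds.1 hv _ (ball_mem_nhds v hr)
    exact ⟨w, ⟨hwr, fun h => hv' (h ▸ hw)⟩, hw⟩
  refine hv' (mem_interior_iff_mem_nhds.2 (mem_of_superset (ball_mem_nhds v hr) fun x hx => ?_))
  rcases eq_or_ne x v with rfl | hxv
  · exact closure_minimal interior_subset hB hv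
  · exact interior_subset (hball ⟨hx, hxv⟩)

/-- Near `v`, the set `S` is invariant under shrinking towards `v`, as polyhedral sets are. -/
def IsLocalCone (S : Set V) (v : V) : Prop :=
  ∀ᶠ x in 𝓝 v, ∀ t ∈ Ioc (0 : ℝ) 1, AffineMap.homothety v t x ∈ S ↔ x ∈ S

theorem isLocalCone_iInter {ι : Type*} [Finite ι] {S : ι → Set V}
    (h : ∀ i, IsLocalCone (S i) v) : IsLocalCone (⋂ i, S i) v := by
  filter_upwards [eventually_all.2 h] with x hx t ht
  simp only [mem_iInter, hx _ t ht]

theorem isLocalCone_biUnion {ι : Type*} [Finite ι] {S : ι → Set V}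
    (h : ∀ i, IsLocalCone (S i) v) (𝓑 : Set ι) : IsLocalCone (⋃ i ∈ 𝓑, S i) v := by
  filter_upwards [eventually_all.2 h] with x hx t ht
  simp only [mem_iUnion, hx _ t ht]

theorem IsLocalCone.interior (h : IsLocalCone S v) : IsLocalCone (interior S) v := by
  filter_upwards [eventually_eventually_nhds.2 h] with x hx t ht
  rw [mem_interior_iff_mem_nhds, mem_interior_iff_mem_nhds,
    ← (AffineMap.homothety_isOpenMap v t ht.1.ne').map_nhds_eq
      (AffineMap.homothety_continuous v t).continuousAt, mem_map]
  exact eventually_congr (hx.mono fun y hy => hy t ht)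

theorem isLocalCone_affineFunctional_nonneg [FiniteDimensional ℝ V] (f : V →ᵃ[ℝ] ℝ) (v : V) :
    IsLocalCone {z | 0 ≤ f z} v := by
  have hf (x : V) (t : ℝ) : f (AffineMap.homothety v t x) = f v + t * (f x - f v) := by
    rw [AffineMap.homothety_eq_lineMap, AffineMap.apply_lineMap, AffineMap.lineMap_apply]
    simp [add_comm]
  have hcont := (continuous_affineFunctional f).continuousAt (x := v)
  rcases lt_trichotomy (f v) 0 with hv | hv | hv
  · filter_upwards [hcont.eventually (gt_mem_nhds hv)] with x hx t ht
    simp only [hf, hx.not_ge, iff_false, not_le]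
    nlinarith [ht.1, ht.2]
  · exact .of_forall fun x t ht => by simp [hf, hv, ht.1]
  · filter_upwards [hcont.eventually (lt_mem_nhds hv)] with x hx t ht
    simp only [hf, hx.le, iff_true]
    nlinarith [ht.1, ht.2]

end LocalCone

section Polyhedron

variable {V κ : Type*} [NormedAddCommGroup V] [NormedSpace ℝ V] {g : κ → V →ᵃ[ℝ] ℝ}

/-- The closed polyhedron cut out by the affine inequalities `0 ≤ g k z`. -/
def polyhedron (g : κ → V →ᵃ[ℝ] ℝ) : Set V := ⋂ k, {z | 0 ≤ g k z}

/-- The open polyhedron cut out by the affine inequalities `0 < g k z`. -/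
def openPolyhedron (g : κ → V →ᵃ[ℝ] ℝ) : Set V := ⋂ k, {z | 0 < g k z}

theorem openPolyhedron_subset_polyhedron (g : κ → V →ᵃ[ℝ] ℝ) :
    openPolyhedron g ⊆ polyhedron g :=
  iInter_mono fun k z (hz : 0 < g k z) => hz.le

theorem convex_polyhedron (g : κ → V →ᵃ[ℝ] ℝ) : Convex ℝ (polyhedron g) :=
  convex_iInter fun k => convex_affineFunctional_ge (g k) 0

theorem convex_openPolyhedron (g : κ → V →ᵃ[ℝ] ℝ) : Convex ℝ (openPolyhedron g) :=
  convex_iInter fun k => (convex_Ioi (0 : ℝ)).affine_preimage (g k)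

variable [FiniteDimensional ℝ V]

theorem isClosed_polyhedron (g : κ → V →ᵃ[ℝ] ℝ) : IsClosed (polyhedron g) :=
  isClosed_iInter fun k => isClosed_le continuous_const (continuous_affineFunctional (g k))

theorem interior_polyhedron_subset (hg : ∀ k, Function.Surjective (g k)) :
    interior (polyhedron g) ⊆ openPolyhedron g := fun _ hx => mem_iInter.2 fun k =>
  lt_affineFunctional_of_mem_interior (hg k) (fun _ hy => mem_iInter.1 hy k) hx

variable [Finite κ]

theorem isOpen_openPolyhedron (g : κ → V →ᵃ[ℝ] ℝ) : IsOpen (openPolyhedron g) :=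
  isOpen_iInter_of_finite fun k => isOpen_lt continuous_const (continuous_affineFunctional (g k))

theorem interior_polyhedron (hg : ∀ k, Function.Surjective (g k)) :
    interior (polyhedron g) = openPolyhedron g :=
  (interior_polyhedron_subset hg).antisymm
    (interior_maximal (openPolyhedron_subset_polyhedron g) (isOpen_openPolyhedron g))

theorem polyhedron_subset_closure (hg : ∀ k, Function.Surjective (g k))
    (h : (openPolyhedron g).Nonempty) : polyhedron g ⊆ closure (openPolyhedron g) := by
  rw [← interior_polyhedron hg,
    (convex_polyhedron g).closure_interior_eq_closure_of_nonempty_interior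
      (by rwa [interior_polyhedron hg])]
  exact subset_closure

theorem isLocalCone_polyhedron (g : κ → V →ᵃ[ℝ] ℝ) (v : V) : IsLocalCone (polyhedron g) v :=
  isLocalCone_iInter fun k => isLocalCone_affineFunctional_nonneg (g k) v

theorem isConvexPolygon_polyhedron {g : κ → Plane →ᵃ[ℝ] ℝ} (hg : ∀ k, Function.Surjective (g k))
    (hcpt : IsCompact (polyhedron g)) : IsConvexPolygon (polyhedron g) := by
  refine ⟨hcpt, convex_polyhedron g, ?_⟩
  have hface (k : κ) : CoveredBySegments (polyhedron g ∩ {z | g k z = 0}) := by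
    obtain ⟨p, q, hpq⟩ := exists_subset_segment_of_collinear
      (hcpt.isBounded.subset inter_subset_left : Bornology.IsBounded (polyhedron g ∩ _))
      ((collinear_affineFunctional_eq (by simp) (hg k) 0).subset inter_subset_right)
    exact (coveredBySegments_segment p q).mono hpq
  refine (CoveredBySegments.iUnion hface).mono ?_
  rw [(isClosed_polyhedron g).frontier_eq, interior_polyhedron hg]
  rintro x ⟨hx, hxg⟩
  simp only [openPolyhedron, mem_iInter, not_forall] at hxg
  obtain ⟨k, hk⟩ := hxg
  exact mem_iUnion.2 ⟨k, hx, (not_lt.1 hk).antisymm (mem_iInter.1 hx k)⟩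

end Polyhedron

section Subdivision

theorem exists_affineFunctional_eq_zero_on_segment (a b : Plane) :
    ∃ f : Plane →ᵃ[ℝ] ℝ, Function.Surjective f ∧ ∀ z ∈ segment ℝ a b, f z = 0 := by
  rcases eq_or_ne a b with rfl | hab
  · obtain ⟨b, hb⟩ := exists_ne a
    exact ⟨side a b, side_surjective hb.symm, by simp⟩
  · exact ⟨side a b, side_surjective hab, fun z hz => side_eq_zero_of_mem_segment hz⟩

/-- A subdivision of `P` into convex polygons with disjoint interiors. That the cells are local
cones follows from polygonality, but is evident for the cells constructed below. -/
structure IsConvexSubdivision {ι : Type*} (P : Set Plane) (C : ι → Set Plane) : Prop where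
  isConvexPolygon (i : ι) : IsConvexPolygon (C i)
  interior_nonempty (i : ι) : (interior (C i)).Nonempty
  disjoint_interior {i j : ι} : i ≠ j → Disjoint (interior (C i)) (interior (C j))
  iUnion_eq : ⋃ i, C i = P
  isLocalCone (i : ι) (v : Plane) : IsLocalCone (C i) v

variable {κ : Type*} {P : Set Plane}

/-- The lines `f k = 0` cut the plane into open regions, one for each sign vector `σ`. These are
the sign vectors of the regions that meet the interior of `P`. -/
def ArrangementCell (f : κ → Plane →ᵃ[ℝ] ℝ) (P : Set Plane) : Type _ :=
  {σ : κ → SignType // (openPolyhedron (fun k => (σ k : ℝ) • f k) ∩ interior P).Nonempty}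

namespace ArrangementCell

variable {f : κ → Plane →ᵃ[ℝ] ℝ}

instance [Finite κ] : Finite (ArrangementCell f P) := Subtype.finite

/-- The affine inequalities defining a region of the arrangement. -/
noncomputable def inequalities (σ : ArrangementCell f P) (k : κ) : Plane →ᵃ[ℝ] ℝ :=
  (σ.1 k : ℝ) • f k

theorem sign_eq (σ : ArrangementCell f P) {z : Plane} (hz : z ∈ openPolyhedron σ.inequalities)
    (k : κ) : σ.1 k = SignType.sign (f k z) := by
  have hk : 0 < (σ.1 k : ℝ) * f k z := mem_iInter.1 hz k
  cases hσ : σ.1 k <;> simp_all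

theorem surjective_inequalities (hf : ∀ k, Function.Surjective (f k)) (σ : ArrangementCell f P)
    (k : κ) : Function.Surjective (σ.inequalities k) := by
  obtain ⟨z, hz, -⟩ := σ.2
  have hσ : (σ.1 k : ℝ) ≠ 0 := (left_ne_zero_of_mul (mem_iInter.1 hz k : 0 < _ * f k z).ne')
  exact (mul_left_surjective₀ hσ).comp (hf k)

theorem exists_mem_openPolyhedron {z : Plane} (hz : z ∈ interior P) (hfz : ∀ k, f k z ≠ 0) :
    ∃ σ : ArrangementCell f P, z ∈ openPolyhedron σ.inequalities := by
  have hmem : z ∈ openPolyhedron fun k => (SignType.sign (f k z) : ℝ) • f k :=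
    mem_iInter.2 fun k => (abs_pos.2 (hfz k)).trans_eq (sign_mul_self (f k z)).symm
  exact ⟨⟨fun k => SignType.sign (f k z), z, hmem, hz⟩, hmem⟩

theorem openPolyhedron_subset (hfP : frontier P ⊆ ⋃ k, {z | f k z = 0})
    (σ : ArrangementCell f P) : openPolyhedron σ.inequalities ⊆ interior P := by
  refine subset_interior_of_isPreconnected (convex_openPolyhedron _).isPreconnected ?_ σ.2
  refine disjoint_left.2 fun z hz hzP => ?_
  obtain ⟨k, hk⟩ := mem_iUnion.1 (hfP hzP)
  have hpos : 0 < (σ.1 k : ℝ) * f k z := mem_iInter.1 hz k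
  exact hpos.ne' (by rw [show f k z = 0 from hk, mul_zero])

variable [Finite κ]

theorem disjoint_interior (hf : ∀ k, Function.Surjective (f k)) {σ τ : ArrangementCell f P}
    (h : σ ≠ τ) :
    Disjoint (interior (polyhedron σ.inequalities)) (interior (polyhedron τ.inequalities)) := by
  refine disjoint_left.2 fun z hσ hτ => h (Subtype.ext (funext fun k => ?_))
  rw [interior_polyhedron (surjective_inequalities hf _)] at hσ hτ
  rw [σ.sign_eq hσ, τ.sign_eq hτ]

theorem polyhedron_subset (hf : ∀ k, Function.Surjective (f k))
    (hfP : frontier P ⊆ ⋃ k, {z | f k z = 0}) (hP : IsClosed P) (σ : ArrangementCell f P) :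
    polyhedron σ.inequalities ⊆ P :=
  (polyhedron_subset_closure (σ.surjective_inequalities hf) (σ.2.mono inter_subset_left)).trans
    (closure_minimal ((σ.openPolyhedron_subset hfP).trans interior_subset) hP)

theorem interior_subset_iUnion_polyhedron (hf : ∀ k, Function.Surjective (f k)) :
    interior P ⊆ ⋃ σ : ArrangementCell f P, polyhedron σ.inequalities := by
  have hclosed : IsClosed (⋃ σ : ArrangementCell f P, polyhedron σ.inequalities) :=
    isClosed_iUnion_of_finite fun σ => isClosed_polyhedron _
  -- The lines have measure zero, so their complement is dense.
  have hdense : Dense (⋃ k, {z | f k z = 0})ᶜ := by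
    rw [← interior_eq_empty_iff_dense_compl]
    exact Measure.interior_eq_empty_of_null
      (measure_iUnion_null fun k => addHaar_affineFunctional_eq volume (hf k) 0)
  refine (hdense.open_subset_closure_inter isOpen_interior).trans
    (closure_minimal (fun z hz => ?_) hclosed)
  obtain ⟨σ, hσ⟩ := exists_mem_openPolyhedron hz.1 fun k hk => hz.2 (mem_iUnion.2 ⟨k, hk⟩)
  exact mem_iUnion.2 ⟨σ, openPolyhedron_subset_polyhedron _ hσ⟩

theorem isConvexSubdivision (hf : ∀ k, Function.Surjective (f k))
    (hfP : frontier P ⊆ ⋃ k, {z | f k z = 0}) (hP : IsPolygonalRegion P) :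
    IsConvexSubdivision P fun σ : ArrangementCell f P => polyhedron σ.inequalities where
  isConvexPolygon σ := isConvexPolygon_polyhedron (σ.surjective_inequalities hf)
    (hP.1.of_isClosed_subset (isClosed_polyhedron _) (σ.polyhedron_subset hf hfP hP.1.isClosed))
  interior_nonempty σ := by
    rw [interior_polyhedron (σ.surjective_inequalities hf)]
    exact σ.2.mono inter_subset_left
  disjoint_interior h := disjoint_interior hf h
  iUnion_eq := by
    refine (iUnion_subset fun σ => σ.polyhedron_subset hf hfP hP.1.isClosed).antisymm ?_
    nth_rw 1 [hP.2.1]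
    exact closure_minimal (interior_subset_iUnion_polyhedron hf)
      (isClosed_iUnion_of_finite fun σ => isClosed_polyhedron _)
  isLocalCone σ v := isLocalCone_polyhedron _ v

end ArrangementCell

theorem exists_isConvexSubdivision (hP : IsPolygonalRegion P) :
    ∃ (ι : Type) (_ : Finite ι) (C : ι → Set Plane), IsConvexSubdivision P C := by
  obtain ⟨F, hF⟩ := hP.2.2
  choose f hf hfz using fun e : F => exists_affineFunctional_eq_zero_on_segment e.1.1 e.1.2
  refine ⟨ArrangementCell f P, inferInstance, _, ArrangementCell.isConvexSubdivision hf ?_ hP⟩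
  refine hF.trans (iUnion₂_subset fun e he z hz => mem_iUnion.2 ⟨⟨e, he⟩, hfz ⟨e, he⟩ z hz⟩)

end Subdivision

section FreeEdge

variable {ι : Type*} {P : Set Plane} {C : ι → Set Plane} {𝓑 : Set ι} {i j : ι} {v x : Plane}

namespace IsConvexSubdivision

theorem subset (h : IsConvexSubdivision P C) (i : ι) : C i ⊆ P :=
  h.iUnion_eq ▸ subset_iUnion C i

theorem isClosed (h : IsConvexSubdivision P C) (i : ι) : IsClosed (C i) :=
  (h.isConvexPolygon i).isCompact.isClosed

theorem closure_interior (h : IsConvexSubdivision P C) (i : ι) : closure (interior (C i)) = C i :=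
  (h.isConvexPolygon i).closure_interior (h.interior_nonempty i)

theorem notMem_of_mem_interior (h : IsConvexSubdivision P C) (hij : i ≠ j)
    (hx : x ∈ interior (C i)) : x ∉ C j := fun hxj =>
  disjoint_left.1 ((h.disjoint_interior hij).closure_right isOpen_interior) hx
    ((h.closure_interior j).symm ▸ hxj)

theorem mem_frontier (h : IsConvexSubdivision P C) (hij : i ≠ j) (hi : x ∈ C i) (hj : x ∈ C j) :
    x ∈ frontier (C i) :=
  ⟨subset_closure hi, fun hx => h.notMem_of_mem_interior hij hx hj⟩

theorem notMem_of_mem_interior_biUnion (h : IsConvexSubdivision P C) (hj : j ∉ 𝓑)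
    (hx : x ∈ interior (⋃ i ∈ 𝓑, C i)) : x ∉ C j := by
  intro hxj
  rw [← h.closure_interior j] at hxj
  obtain ⟨z, hz, hzj⟩ := mem_closure_iff.1 hxj _ isOpen_interior hx
  obtain ⟨i, hi, hzi⟩ := mem_iUnion₂.1 (interior_subset hz)
  exact h.notMem_of_mem_interior (ne_of_mem_of_not_mem hi hj).symm hzj hzi

theorem openSegment_subset_interior_biUnion (h : IsConvexSubdivision P C) (hi : i ∈ 𝓑)
    (hj : j ∈ 𝓑) (hij : i ≠ j) (hvx : v ≠ x) (hvi : v ∈ C i) (hxi : x ∈ C i) (hvj : v ∈ C j)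
    (hxj : x ∈ C j) : openSegment ℝ v x ⊆ interior (⋃ i ∈ 𝓑, C i) :=
  (openSegment_subset_interior_union (h.isConvexPolygon i).convex (h.isConvexPolygon j).convex
    (h.interior_nonempty i) (h.interior_nonempty j) (h.disjoint_interior hij) hvx hvi hxi hvj
    hxj).trans (interior_mono (union_subset (subset_biUnion_of_mem hi) (subset_biUnion_of_mem hj)))

theorem mem_closure_interior_biUnion (h : IsConvexSubdivision P C) (hx : ∃ i ∈ 𝓑, x ∈ C i) :
    x ∈ closure (interior (⋃ i ∈ 𝓑, C i)) := by
  obtain ⟨i, hi, hxi⟩ := hx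
  rw [← h.closure_interior i] at hxi
  exact closure_mono (interior_mono (subset_biUnion_of_mem hi)) hxi

variable [Finite ι]

theorem isClosed_biUnion (h : IsConvexSubdivision P C) (𝓑 : Set ι) : IsClosed (⋃ i ∈ 𝓑, C i) :=
  (toFinite 𝓑).isClosed_biUnion fun i _ => h.isClosed i

theorem eventually_mem_imp_mem (h : IsConvexSubdivision P C) (v : Plane) :
    ∀ᶠ x in 𝓝 v, ∀ i, x ∈ C i → v ∈ C i := by
  refine eventually_all.2 fun i => ?_
  by_cases hv : v ∈ C i
  · exact .of_forall fun _ _ => hv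
  · filter_upwards [(h.isClosed i).isOpen_compl.mem_nhds hv] with x hx hxi using (hx hxi).elim

/-- The segment follows the boundary of the union over `𝓑`: a second cell of `𝓑` containing it
would put it inside the union. -/
theorem exists_segment_subset_frontier (h : IsConvexSubdivision P C) (hv : ∃ c ∈ 𝓑, v ∈ C c)
    (hv' : v ∉ interior (⋃ i ∈ 𝓑, C i))
    (h𝓑 : ∀ᶠ x in 𝓝 v, ∀ i ∈ 𝓑, ∀ j ∉ 𝓑, x ∈ C i → x ∈ C j → x = v) {U : Set Plane}
    (hU : U ∈ 𝓝 v) :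
    ∃ c ∈ 𝓑, ∃ y, y ≠ v ∧ segment ℝ v y ⊆ U ∩ frontier (C c) ∧
      ∀ d, d ≠ c → C d ∩ segment ℝ v y ⊆ {v} := by
  have hB := isLocalCone_biUnion (fun i => h.isLocalCone i v) 𝓑
  obtain ⟨y, ⟨⟨⟨⟨hyU, hcone⟩, hconeB⟩, hy𝓑⟩, hyi⟩, hyv, hyB⟩ := exists_ne_mem_frontier
    (by rw [← Module.finrank_eq_rank]; simp) (h.isClosed_biUnion 𝓑)
    (h.mem_closure_interior_biUnion hv) hv'
    ((((eventually_segment_subset hU).and (eventually_all.2 fun i => h.isLocalCone i v)).and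
      hB.interior).and h𝓑 |>.and (h.eventually_mem_imp_mem v))
  obtain ⟨c, hc, hyc⟩ := mem_iUnion₂.1 ((h.isClosed_biUnion 𝓑).frontier_subset hyB)
  have hsub : segment ℝ v y ⊆ C c := (h.isConvexPolygon c).convex.segment_subset (hyi c hyc) hyc
  refine ⟨c, hc, y, hyv, subset_inter hyU ?_, ?_⟩ <;> rw [segment_eq_image_lineMap] at hsub ⊢
  · rintro _ ⟨t, ht, rfl⟩
    refine ⟨subset_closure (hsub ⟨t, ht, rfl⟩), fun hxc => ?_⟩
    have hxB := interior_mono (subset_biUnion_of_mem hc) hxc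
    rcases ht.1.eq_or_lt with rfl | ht₀
    · exact hv' (by simpa using hxB)
    · exact hyB.2 ((hconeB t ⟨ht₀, ht.2⟩).1 hxB)
  · rintro d hdc _ ⟨hxd, t, ht, rfl⟩
    rcases ht.1.eq_or_lt with rfl | ht₀
    · simp
    have hyd : y ∈ C d := (hcone d t ⟨ht₀, ht.2⟩).1 hxd
    have hd : d ∈ 𝓑 := not_not.1 fun hd => hyv (hy𝓑 c hc d hd hyc hyd)
    have hmid : AffineMap.homothety v (1 / 2 : ℝ) y ∈ openSegment ℝ v y := by
      rw [openSegment_eq_image_lineMap]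
      exact ⟨1 / 2, by norm_num, rfl⟩
    exact (hyB.2 ((hconeB (1 / 2) (by norm_num)).1 (h.openSegment_subset_interior_biUnion hc hd
      hdc.symm hyv.symm (hyi c hyc) hyc (hyi d hyd) hyd hmid))).elim

end IsConvexSubdivision

end FreeEdge

section Homothety

variable {V : Type*} [AddCommGroup V] [Module ℝ V] {C S T : Set V} {o x y : V} {l s t : ℝ}

theorem mem_or_exists_homothety_of_mem_convexJoin (hS : Convex ℝ S) (hT : T ⊆ S) (hl₀ : 0 < l)
    (hl₁ : l < 1) (hx : x ∈ convexJoin ℝ (homothety o l '' S) T) :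
    x ∈ T ∨ ∃ y ∈ S, ∃ s ∈ Ico l 1, homothety o s y = x := by
  obtain ⟨_, ⟨y, hy, rfl⟩, z, hz, u, v, hu, hv, huv, rfl⟩ := mem_convexJoin.1 hx
  obtain rfl := eq_sub_of_add_eq' huv
  rcases hu.eq_or_lt with rfl | hu
  · exact .inl (by simpa using hz)
  have hs₀ : 0 < u * l + (1 - u) := by positivity
  refine .inr ⟨(u * l / (u * l + (1 - u))) • y + ((1 - u) / (u * l + (1 - u))) • z,
    hS hy (hT hz) (by positivity) (by positivity) (by field_simp), u * l + (1 - u),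
    ⟨by nlinarith, by nlinarith⟩, ?_⟩
  simp only [homothety_apply, vsub_eq_sub, vadd_eq_add, smul_add, smul_sub, smul_smul,
    mul_div_cancel₀ _ hs₀.ne']
  module

variable [TopologicalSpace V] [IsTopologicalAddGroup V] [ContinuousConstSMul ℝ V]

theorem homothety_mem_interior (hC : Convex ℝ C) (ho : o ∈ interior C) (hx : x ∈ C)
    (hs₀ : 0 ≤ s) (hs₁ : s < 1) : homothety o s x ∈ interior C := by
  have h := hC.combo_interior_self_mem_interior ho hx (sub_pos.2 hs₁) hs₀ (sub_add_cancel 1 s)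
  convert h using 1
  rw [homothety_apply, vsub_eq_sub, vadd_eq_add]
  module

theorem homothety_image_subset_interior (hC : Convex ℝ C) (ho : o ∈ interior C)
    (hl₀ : 0 ≤ l) (hl₁ : l < 1) : homothety o l '' C ⊆ interior C :=
  image_subset_iff.2 fun _ hx => homothety_mem_interior hC ho hx hl₀ hl₁

theorem le_of_homothety_eq_homothety (hC : Convex ℝ C) (ho : o ∈ interior C) (hx : x ∈ C)
    (hy : y ∉ interior C) (hs : 0 < s) (ht : 0 ≤ t) (h : homothety o s y = homothety o t x) :
    s ≤ t := by
  by_contra! hts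
  refine hy ?_
  have hyx : y = homothety o (t / s) x := by
    rw [div_eq_inv_mul, AffineMap.homothety_mul_apply, ← h, ← AffineMap.homothety_mul_apply,
      inv_mul_cancel₀ hs.ne', AffineMap.homothety_one, AffineMap.id_apply]
  exact hyx ▸ homothety_mem_interior hC ho hx (by positivity) ((div_lt_one hs).2 hts)

end Homothety

theorem exists_segment_subset_openSegment_diff {V : Type*} [AddCommGroup V] [Module ℝ V]
    {a b : V} (hab : a ≠ b) {F : Set V} (hF : F.Finite) :
    ∃ p q, p ≠ q ∧ segment ℝ p q ⊆ openSegment ℝ a b \ F := by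
  have hinj : Function.Injective (AffineMap.lineMap a b : ℝ → V) :=
    AffineMap.lineMap_injective ℝ hab
  have hfin := hF.preimage hinj.injOn
  obtain ⟨t, ht⟩ := ((Ioo_infinite (zero_lt_one' ℝ)).sdiff hfin).nonempty
  obtain ⟨ε, hε, hball⟩ := nhds_basis_closedBall.mem_iff.1
    ((isOpen_Ioo.sdiff hfin.isClosed).mem_nhds ht)
  refine ⟨AffineMap.lineMap a b (t - ε), AffineMap.lineMap a b (t + ε),
    hinj.ne (by linarith), ?_⟩
  rw [← image_segment, segment_eq_Icc (by linarith), ← Real.closedBall_eq_Icc,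
    openSegment_eq_image_lineMap]
  rintro _ ⟨u, hu, rfl⟩
  exact ⟨mem_image_of_mem _ (hball hu).1, (hball hu).2⟩

section ConvexHull

variable {V : Type*} [NormedAddCommGroup V] [NormedSpace ℝ V]

theorem exists_card_le_finrank_mem_convexHull [FiniteDimensional ℝ V] {s : Set V} {x : V}
    (hx : x ∈ convexHull ℝ s) (hx' : x ∉ interior (convexHull ℝ s)) :
    ∃ t : Finset V, ↑t ⊆ s ∧ t.card ≤ Module.finrank ℝ V ∧ x ∈ convexHull ℝ (t : Set V) := by
  classical
  obtain ⟨ι, _, z, w, hz, hind, hw, hw₁, rfl⟩ := eq_pos_convex_span_of_mem_convexHull hx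
  refine ⟨Finset.univ.image z, by simpa using hz, ?_, ?_⟩
  · refine Finset.card_image_le.trans (Nat.le_of_lt_succ (hind.card_le_finrank_succ.trans
      (Nat.succ_le_succ (Submodule.finrank_le _)) |>.lt_of_ne fun hcard => hx' ?_))
    let b : AffineBasis ι ℝ V :=
      ⟨z, hind, hind.affineSpan_eq_top_iff_card_eq_finrank_add_one.2 hcard⟩
    refine interior_mono (convexHull_mono hz) ?_
    rw [show range z = range b from rfl, b.interior_convexHull,
      ← Finset.affineCombination_eq_linear_combination _ z w hw₁]
    intro i
    exact (b.coord_apply_combination_of_mem (Finset.mem_univ i) hw₁).symm ▸ hw i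
  · exact (convex_convexHull ℝ _).sum_mem (fun i _ => (hw i).le) hw₁
      fun i _ => subset_convexHull ℝ _ (by simp)

theorem exists_mem_segment_of_mem_convexHull_of_card_le_two {t : Finset V} (ht : t.card ≤ 2)
    {x : V} (hx : x ∈ convexHull ℝ (t : Set V)) : ∃ a ∈ t, ∃ b ∈ t, x ∈ segment ℝ a b := by
  classical
  have hne : t.Nonempty := Finset.coe_nonempty.1 (convexHull_nonempty_iff.1 ⟨x, hx⟩)
  obtain hcard | hcard : t.card = 1 ∨ t.card = 2 := by have := hne.card_pos; omega
  · obtain ⟨a, rfl⟩ := Finset.card_eq_one.1 hcard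
    exact ⟨a, by simp, a, by simp, by simpa using hx⟩
  · obtain ⟨a, b, -, rfl⟩ := Finset.card_eq_two.1 hcard
    exact ⟨a, by simp, b, by simp, by simpa using hx⟩

theorem isConvexPolygon_convexHull {s : Set Plane} (hs : s.Finite) :
    IsConvexPolygon (convexHull ℝ s) := by
  have hcompact := hs.isCompact_convexHull ℝ
  refine ⟨hcompact, convex_convexHull ℝ s, hs.toFinset ×ˢ hs.toFinset, fun x hx => ?_⟩
  obtain ⟨t, hts, hcard, hxt⟩ :=
    exists_card_le_finrank_mem_convexHull (hcompact.isClosed.frontier_subset hx) hx.2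
  obtain ⟨a, ha, b, hb, hxab⟩ :=
    exists_mem_segment_of_mem_convexHull_of_card_le_two (by simpa using hcard) hxt
  exact mem_biUnion (x := (a, b)) (by simp [hts ha, hts hb]) hxab

theorem CoveredBySegments.image {S : Set Plane} (hS : CoveredBySegments S) (f : Plane →ᵃ[ℝ] Plane) :
    CoveredBySegments (f '' S) := by
  classical
  obtain ⟨F, hF⟩ := hS
  refine ⟨F.image (Prod.map f f), image_subset_iff.2 fun x hx => ?_⟩
  obtain ⟨e, he, hxe⟩ := mem_iUnion₂.1 (hF hx)
  exact mem_biUnion (Finset.mem_image_of_mem _ he)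
    (image_segment ℝ f e.1 e.2 ▸ mem_image_of_mem f hxe)

theorem IsConvexPolygon.image_homothety {C : Set Plane} (hC : IsConvexPolygon C) (o : Plane)
    {l : ℝ} (hl : l ≠ 0) : IsConvexPolygon (homothety o l '' C) := by
  have hcompact := hC.isCompact.image (AffineMap.homothety_continuous o l)
  refine ⟨hcompact, hC.convex.affine_image _, (hC.frontier_covered.image (homothety o l)).mono ?_⟩
  rintro x ⟨hx, hx_int⟩
  obtain ⟨y, hy, rfl⟩ := hcompact.isClosed.closure_subset hx
  exact ⟨y, ⟨subset_closure hy, fun hy_int =>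
    hx_int ((AffineMap.homothety_isOpenMap o l hl).image_interior_subset C ⟨y, hy_int, rfl⟩)⟩, rfl⟩

end ConvexHull

section Frame

variable {C : Set Plane} {o p q a b x y z v : Plane} {l s : ℝ}

theorem side_homothety (p q o z : Plane) (s : ℝ) :
    side p q (homothety o s z) = (1 - s) * side p q o + s * side p q z := by
  rw [AffineMap.homothety_eq_lineMap, AffineMap.apply_lineMap, AffineMap.lineMap_apply_module,
    smul_eq_mul, smul_eq_mul]

theorem side_homothety_homothety (o p q z : Plane) (l : ℝ) :
    side (homothety o l p) (homothety o l q) (homothety o l z) = l ^ 2 * side p q z := by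
  simp only [side_apply, homothety_apply, vsub_eq_sub, vadd_eq_add, PiLp.add_apply,
    PiLp.smul_apply, PiLp.sub_apply, smul_eq_mul]
  ring

theorem side_nonneg_or_side_nonpos (hC : Convex ℝ C) (ha : a ∈ C) (hb : b ∈ C)
    (hx : x ∈ openSegment ℝ a b) (hxC : x ∉ interior C) :
    (∀ y ∈ C, 0 ≤ side a b y) ∨ ∀ y ∈ C, side a b y ≤ 0 := by
  by_contra! h
  obtain ⟨⟨u, huC, hu⟩, w, hwC, hw⟩ := h
  refine hxC (mem_interior_iff_mem_nhds.2 ?_)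
  filter_upwards [eventually_mem_of_side_nonneg hC ha hb hwC hw hx,
    eventually_mem_of_side_nonneg hC hb ha huC (by rwa [side_swap, neg_pos])
      (openSegment_symm ℝ a b ▸ hx)] with z hz_nonneg hz_nonpos
  rw [side_swap, neg_nonneg] at hz_nonpos
  exact (le_total 0 (side a b z)).elim hz_nonneg hz_nonpos

theorem side_homothety_swap (o l s) (hz : z ∈ segment ℝ p q) :
    side (homothety o l q) (homothety o l p) (homothety o s z) = l * (s - l) * side p q o := by
  have h := side_eq_zero_of_mem_segment hz
  simp only [side_apply] at h
  simp only [side_apply, homothety_apply, vsub_eq_sub, vadd_eq_add, PiLp.add_apply,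
    PiLp.smul_apply, PiLp.sub_apply, smul_eq_mul]
  linear_combination -l * s * h

/-- The segment `[p, q]` lies on an edge of the convex polygon `C`, oriented so that `C` is on its
left, and `o` is an interior point of `C`, used as the centre of homotheties. -/
structure IsFrame (C : Set Plane) (o p q : Plane) : Prop where
  isConvexPolygon : IsConvexPolygon C
  center_mem : o ∈ interior C
  left_mem : p ∈ C
  right_mem : q ∈ C
  ne : p ≠ q
  side_nonneg : ∀ x ∈ C, 0 ≤ side p q x

theorem isFrame_or_isFrame_swap (hC : IsConvexPolygon C) (ho : o ∈ interior C) (hpq : p ≠ q)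
    (h : segment ℝ p q ⊆ frontier C) : IsFrame C o p q ∨ IsFrame C o q p := by
  have hp := hC.isCompact.isClosed.frontier_subset (h (left_mem_segment ℝ p q))
  have hq := hC.isCompact.isClosed.frontier_subset (h (right_mem_segment ℝ p q))
  have hm := midpoint_mem_openSegment (𝕜 := ℝ) p q
  refine (side_nonneg_or_side_nonpos hC.convex hp hq hm
    (h (openSegment_subset_segment ℝ p q hm)).2).imp
      (fun hside => ⟨hC, ho, hp, hq, hpq, hside⟩)
      fun hside => ⟨hC, ho, hq, hp, hpq.symm, fun x hx => ?_⟩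
  rw [side_swap, neg_nonneg]
  exact hside x hx

theorem exists_isFrame (hC : IsConvexPolygon C) (ho : o ∈ interior C) (hab : a ≠ b)
    (h : segment ℝ a b ⊆ frontier C) :
    ∃ p q, IsFrame C o p q ∧ segment ℝ p q = segment ℝ a b ∧
      openSegment ℝ p q = openSegment ℝ a b := by
  rcases isFrame_or_isFrame_swap hC ho hab h with hf | hf
  · exact ⟨a, b, hf, rfl, rfl⟩
  · exact ⟨b, a, hf, segment_symm ℝ b a, openSegment_symm ℝ b a⟩

/-- The convex hull of `[a, b]` and of the image of `[p, q]` under the homothety of centre `o` and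
ratio `l`. When `[a, b] ⊆ [p, q]` lies on the frontier of a convex polygon around `o`, it joins
`[a, b]` to the shrunken copy of the polygon, inside the sector of `[p, q]`. -/
def bridge (o : Plane) (l : ℝ) (p q a b : Plane) : Set Plane :=
  convexJoin ℝ (homothety o l '' segment ℝ p q) (segment ℝ a b)

theorem homothety_image_segment_subset_bridge :
    homothety o l '' segment ℝ p q ⊆ bridge o l p q a b :=
  subset_convexJoin_left ⟨a, left_mem_segment ℝ a b⟩

theorem segment_subset_bridge : segment ℝ a b ⊆ bridge o l p q a b :=
  subset_convexJoin_right ⟨_, mem_image_of_mem _ (left_mem_segment ℝ p q)⟩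

theorem isConvexPolygon_bridge (o : Plane) (l : ℝ) (p q a b : Plane) :
    IsConvexPolygon (bridge o l p q a b) := by
  rw [bridge, image_segment, convexJoin_segments]
  exact isConvexPolygon_convexHull (toFinite _)

namespace IsFrame

variable (h : IsFrame C o p q) (hab : segment ℝ a b ⊆ segment ℝ p q) (hl₀ : 0 < l) (hl₁ : l < 1)

include h

theorem segment_subset : segment ℝ p q ⊆ C :=
  h.isConvexPolygon.convex.segment_subset h.left_mem h.right_mem

theorem segment_subset_frontier : segment ℝ p q ⊆ frontier C := fun _ hx =>
  mem_frontier_of_affineFunctional_eq (side_surjective h.ne) h.side_nonneg (h.segment_subset hx)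
    (side_eq_zero_of_mem_segment hx)

theorem side_center_pos : 0 < side p q o :=
  lt_affineFunctional_of_mem_interior (side_surjective h.ne) h.side_nonneg h.center_mem

include hl₁ in
theorem side_homothety_pos (hz : z ∈ segment ℝ p q) : 0 < side p q (homothety o l z) := by
  rw [side_homothety, side_eq_zero_of_mem_segment hz, mul_zero, add_zero]
  exact mul_pos (sub_pos.2 hl₁) h.side_center_pos

include hl₀ in
theorem eventually_mem_homothety_image
    (hx : x ∈ openSegment ℝ (homothety o l p) (homothety o l q)) :
    ∀ᶠ z in 𝓝 x, 0 ≤ side (homothety o l p) (homothety o l q) z → z ∈ homothety o l '' C := by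
  refine eventually_mem_of_side_nonneg (h.isConvexPolygon.convex.affine_image (homothety o l))
    (mem_image_of_mem _ h.left_mem) (mem_image_of_mem _ h.right_mem)
    (mem_image_of_mem _ (interior_subset h.center_mem)) ?_ hx
  rw [side_homothety_homothety]
  exact mul_pos (pow_pos hl₀ 2) h.side_center_pos

include hl₁ in
theorem eventually_mem_bridge_outer (hx : x ∈ openSegment ℝ p q) :
    ∀ᶠ z in 𝓝 x, 0 ≤ side p q z → z ∈ bridge o l p q p q :=
  eventually_mem_of_side_nonneg (isConvexPolygon_bridge o l p q p q).convex
    (segment_subset_bridge (left_mem_segment ℝ p q))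
    (segment_subset_bridge (right_mem_segment ℝ p q))
    (homothety_image_segment_subset_bridge (mem_image_of_mem _ (left_mem_segment ℝ p q)))
    (h.side_homothety_pos hl₁ (left_mem_segment ℝ p q)) hx

include hl₀ hl₁

theorem side_homothety_swap_pos (hz : z ∈ segment ℝ p q) :
    0 < side (homothety o l q) (homothety o l p) z := by
  have heq := side_homothety_swap o l 1 hz
  rw [AffineMap.homothety_one, AffineMap.id_apply] at heq
  rw [heq]
  exact mul_pos (mul_pos hl₀ (sub_pos.2 hl₁)) h.side_center_pos

include hab

theorem mem_interior_or_mem_segment (hx : x ∈ bridge o l p q a b) :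
    x ∈ interior C ∨ x ∈ segment ℝ a b := by
  rcases mem_or_exists_homothety_of_mem_convexJoin (convex_segment p q) hab hl₀ hl₁ hx
    with hx | ⟨y, hy, s, hs, rfl⟩
  · exact .inr hx
  · exact .inl (homothety_mem_interior h.isConvexPolygon.convex h.center_mem
      (h.segment_subset hy) (hl₀.le.trans hs.1) hs.2)

theorem bridge_subset : bridge o l p q a b ⊆ C := fun _ hx =>
  (h.mem_interior_or_mem_segment hab hl₀ hl₁ hx).elim (interior_subset ·)
    fun hx => h.segment_subset (hab hx)

omit h in
theorem exists_homothety_eq_of_mem_bridge (hx : x ∈ bridge o l p q a b) :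
    ∃ y ∈ segment ℝ p q, ∃ s ∈ Icc l 1, homothety o s y = x := by
  rcases mem_or_exists_homothety_of_mem_convexJoin (convex_segment p q) hab hl₀ hl₁ hx
    with hx | ⟨y, hy, s, hs, rfl⟩
  · exact ⟨x, hab hx, 1, ⟨hl₁.le, le_rfl⟩, by simp⟩
  · exact ⟨y, hy, s, Ico_subset_Icc_self hs, rfl⟩

omit h in
theorem exists_mem_segment_of_mem_bridge (hx : x ∈ bridge o l p q a b) :
    ∃ y ∈ segment ℝ p q, x ∈ segment ℝ o y := by
  obtain ⟨y, hy, s, hs, rfl⟩ := exists_homothety_eq_of_mem_bridge hab hl₀ hl₁ hx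
  refine ⟨y, hy, ?_⟩
  rw [segment_eq_image_lineMap, AffineMap.homothety_eq_lineMap]
  exact mem_image_of_mem _ ⟨hl₀.le.trans hs.1, hs.2⟩

theorem mem_segment_of_mem_bridge (hz : z ∈ frontier C) (hx : x ∈ segment ℝ o z)
    (hxb : x ∈ bridge o l p q a b) : z ∈ segment ℝ p q := by
  obtain ⟨y, hy, s, hs, rfl⟩ := exists_homothety_eq_of_mem_bridge hab hl₀ hl₁ hxb
  rw [segment_eq_image_lineMap] at hx
  obtain ⟨t, ht, heq⟩ := hx
  rw [← AffineMap.homothety_eq_lineMap] at heq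
  have hs₀ := hl₀.trans_le hs.1
  have hconv := h.isConvexPolygon.convex
  have hst := le_of_homothety_eq_homothety hconv h.center_mem
    (h.isConvexPolygon.isCompact.isClosed.frontier_subset hz)
    (h.segment_subset_frontier hy).2 hs₀ ht.1 heq.symm
  have hts := le_of_homothety_eq_homothety hconv h.center_mem (h.segment_subset hy) hz.2
    (hs₀.trans_le hst) hs₀.le heq
  obtain rfl := hst.antisymm hts
  exact AffineMap.homothety_injective o hs₀.ne' heq ▸ hy

theorem bridge_inter_homothety_image :
    bridge o l p q a b ∩ homothety o l '' C = homothety o l '' segment ℝ p q := by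
  refine Subset.antisymm ?_ (subset_inter homothety_image_segment_subset_bridge
    (image_mono h.segment_subset))
  rintro _ ⟨hx, c, hc, rfl⟩
  obtain ⟨y, hy, s, hs, heq⟩ := exists_homothety_eq_of_mem_bridge hab hl₀ hl₁ hx
  have hsl := le_of_homothety_eq_homothety h.isConvexPolygon.convex h.center_mem hc
    (h.segment_subset_frontier hy).2 (hl₀.trans_le hs.1) hl₀.le heq
  exact ⟨y, hy, by rw [← heq, hsl.antisymm hs.1]⟩

theorem side_nonneg_of_mem_bridge (hx : x ∈ bridge o l p q a b) :
    0 ≤ side (homothety o l q) (homothety o l p) x := by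
  obtain ⟨y, hy, s, hs, rfl⟩ := exists_homothety_eq_of_mem_bridge hab hl₀ hl₁ hx
  rw [side_homothety_swap o l s hy]
  exact mul_nonneg (mul_nonneg hl₀.le (sub_nonneg.2 hs.1)) h.side_center_pos.le

theorem interior_bridge_nonempty : (interior (bridge o l p q a b)).Nonempty := by
  have hind := affineIndependent_of_side_ne_zero
    (h.side_homothety_swap_pos hl₀ hl₁ (hab (left_mem_segment ℝ a b))).ne'
  have hspan := hind.affineSpan_eq_top_iff_card_eq_finrank_add_one.2 (by simp)
  refine (interior_convexHull_nonempty_iff_affineSpan_eq_top.2 hspan).mono (interior_mono ?_)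
  refine convexHull_min (range_subset_iff.2 ?_) (isConvexPolygon_bridge o l p q a b).convex
  simp only [Fin.forall_fin_succ]
  exact ⟨homothety_image_segment_subset_bridge (mem_image_of_mem _ (right_mem_segment ℝ p q)),
    homothety_image_segment_subset_bridge (mem_image_of_mem _ (left_mem_segment ℝ p q)),
    segment_subset_bridge (left_mem_segment ℝ a b), fun i => i.elim0⟩

theorem frontier_bridge_subset : frontier (bridge o l p q a b) ⊆ interior C ∪ segment ℝ a b :=
  fun _ hx => h.mem_interior_or_mem_segment hab hl₀ hl₁
    ((isConvexPolygon_bridge o l p q a b).isCompact.isClosed.frontier_subset hx)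

theorem eventually_mem_bridge_inner
    (hx : x ∈ openSegment ℝ (homothety o l q) (homothety o l p)) :
    ∀ᶠ z in 𝓝 x, 0 ≤ side (homothety o l q) (homothety o l p) z → z ∈ bridge o l p q a b :=
  eventually_mem_of_side_nonneg (isConvexPolygon_bridge o l p q a b).convex
    (homothety_image_segment_subset_bridge (mem_image_of_mem _ (right_mem_segment ℝ p q)))
    (homothety_image_segment_subset_bridge (mem_image_of_mem _ (left_mem_segment ℝ p q)))
    (segment_subset_bridge (left_mem_segment ℝ a b))
    (h.side_homothety_swap_pos hl₀ hl₁ (hab (left_mem_segment ℝ a b))) hx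

end IsFrame

end Frame

theorem isClosed_segment {E : Type*} [AddCommGroup E] [Module ℝ E] [TopologicalSpace E] [T2Space E]
    [IsTopologicalAddGroup E] [ContinuousSMul ℝ E] (a b : E) : IsClosed (segment ℝ a b) := by
  rw [← convexHull_pair]
  exact (toFinite {a, b}).isClosed_convexHull ℝ

section Network

variable {P : Set Plane} {ι : Type*} {C : ι → Set Plane} {o : ι → Plane} {l : ℝ} {𝓔 : Set ι}
  {R S : Set Plane} {i c : ι} {p q a b v x y : Plane}

/-- A network for the cells `C i`, `i ∈ 𝓔`, of a convex subdivision of `P`: a region `R`, reachable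
in `P` and contained in these cells, that meets each cell only in its shrunken copy and in segments
from the centre `o i` to a closed set `S` of gates on the cell frontiers. The remaining cells are
met in gates only. -/
structure IsNetwork (P : Set Plane) (C : ι → Set Plane) (o : ι → Plane) (l : ℝ) (𝓔 : Set ι)
    (R S : Set Plane) : Prop where
  reachable : Reachable P R
  exists_mem : ∀ x ∈ R, ∃ i ∈ 𝓔, x ∈ C i
  mem_image_or : ∀ i ∈ 𝓔, ∀ x ∈ R, x ∈ C i →
    x ∈ homothety (o i) l '' C i ∨ ∃ s ∈ S, s ∈ frontier (C i) ∧ x ∈ segment ℝ (o i) s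
  inter_eq : ∀ j ∉ 𝓔, R ∩ C j = S ∩ C j
  isClosed : IsClosed S

theorem isNetwork_empty : IsNetwork P C o l ∅ ∅ ∅ :=
  ⟨.empty, by simp, by simp, by simp, isClosed_empty⟩

namespace IsNetwork

variable (hC : IsConvexSubdivision P C) (h : IsNetwork P C o l 𝓔 R S)
  (hf : IsFrame (C i) (o i) p q) (hab : segment ℝ a b ⊆ segment ℝ p q) (hl₀ : 0 < l) (hl₁ : l < 1)

include hC h

theorem notMem_interior (hi : i ∉ 𝓔) (hx : x ∈ R) : x ∉ interior (C i) := by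
  obtain ⟨j, hj, hxj⟩ := h.exists_mem x hx
  exact fun hxi => hC.notMem_of_mem_interior (ne_of_mem_of_not_mem hj hi).symm hxi hxj

theorem mem_image_or_exists_gate (i : ι) (hx : x ∈ R) (hxi : x ∈ C i) :
    x ∈ homothety (o i) l '' C i ∨ ∃ s ∈ S, s ∈ frontier (C i) ∧ x ∈ segment ℝ (o i) s := by
  by_cases hi : i ∈ 𝓔
  · exact h.mem_image_or i hi x hx hxi
  · have hxS : x ∈ S ∩ C i := h.inter_eq i hi ▸ ⟨hx, hxi⟩
    exact .inr ⟨x, hxS.1, ⟨subset_closure hxi, h.notMem_interior hC hi hx⟩, right_mem_segment ..⟩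

include hf hab hl₀ hl₁

theorem union_bridge (hR : Reachable P (R ∪ bridge (o i) l p q a b))
    (hout : ∀ j ∉ insert i 𝓔, segment ℝ p q ∩ C j ⊆ segment ℝ a b) :
    IsNetwork P C o l (insert i 𝓔) (R ∪ bridge (o i) l p q a b) (S ∪ segment ℝ p q) := by
  have hbridge {j : ι} (hij : i ≠ j) {x : Plane} (hx : x ∈ bridge (o i) l p q a b)
      (hxj : x ∈ C j) : x ∈ segment ℝ a b :=
    (hf.mem_interior_or_mem_segment hab hl₀ hl₁ hx).resolve_left fun hxi =>
      hC.notMem_of_mem_interior hij hxi hxj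
  have hsub := hf.bridge_subset hab hl₀ hl₁
  refine ⟨hR, ?_, fun j _ x hx hxj => ?_, fun j hj => ?_, h.isClosed.union (isClosed_segment p q)⟩
  · rintro x (hx | hx)
    · exact (h.exists_mem x hx).imp fun _ hj => ⟨.inr hj.1, hj.2⟩
    · exact ⟨i, mem_insert i 𝓔, hsub hx⟩
  · rcases hx with hx | hx
    · exact (h.mem_image_or_exists_gate hC j hx hxj).imp_right
        fun ⟨s, hs, hxs⟩ => ⟨s, .inl hs, hxs⟩
    · obtain rfl | hij := eq_or_ne i j
      · obtain ⟨y, hy, hxy⟩ := IsFrame.exists_mem_segment_of_mem_bridge hab hl₀ hl₁ hx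
        exact .inr ⟨y, .inr hy, hf.segment_subset_frontier hy, hxy⟩
      · exact .inr ⟨x, .inr (hab (hbridge hij hx hxj)), hC.mem_frontier hij.symm hxj (hsub hx),
          right_mem_segment ..⟩
  · have hij : i ≠ j := fun hij => hj (.inl hij.symm)
    rw [union_inter_distrib_right, union_inter_distrib_right, h.inter_eq j fun hj' => hj (.inr hj')]
    congr 1
    exact Subset.antisymm (fun x hx => ⟨hab (hbridge hij hx.1 hx.2), hx.2⟩)
      fun x hx => ⟨segment_subset_bridge (hout j hj hx), hx.2⟩

omit hf hab in
theorem union_homothety_image (ho : o i ∈ interior (C i)) (hi : i ∈ 𝓔)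
    (hR : Reachable P (R ∪ homothety (o i) l '' C i)) :
    IsNetwork P C o l 𝓔 (R ∪ homothety (o i) l '' C i) S := by
  have hsub := homothety_image_subset_interior (hC.isConvexPolygon i).convex ho hl₀.le hl₁
  refine ⟨hR, ?_, ?_, fun j hj => ?_, h.isClosed⟩
  · rintro x (hx | hx)
    · exact h.exists_mem x hx
    · exact ⟨i, hi, interior_subset (hsub hx)⟩
  · rintro j hj x (hx | hx) hxj
    · exact h.mem_image_or j hj x hx hxj
    · obtain rfl | hij := eq_or_ne i j
      · exact .inl hx
      · exact absurd hxj (hC.notMem_of_mem_interior hij (hsub hx))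
  · have hij := ne_of_mem_of_not_mem hi hj
    rw [union_inter_distrib_right, h.inter_eq j hj, union_eq_left]
    exact fun x hx => absurd hx.2 (hC.notMem_of_mem_interior hij (hsub hx.1))

theorem isAttachment_exit_bridge (hi : homothety (o i) l '' C i ⊆ R)
    (hS : Disjoint (segment ℝ p q) S) (hfin : (segment ℝ a b \ interior P).Finite) :
    IsAttachment P R (bridge (o i) l p q a b) (homothety (o i) l q) (homothety (o i) l p) := by
  have hsub := hf.bridge_subset hab hl₀ hl₁
  have hinter : R ∩ bridge (o i) l p q a b = homothety (o i) l '' segment ℝ p q := by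
    refine Subset.antisymm (fun x ⟨hxR, hxb⟩ => ?_) (subset_inter
      ((image_mono hf.segment_subset).trans hi) homothety_image_segment_subset_bridge)
    rcases h.mem_image_or_exists_gate hC i hxR (hsub hxb) with hx | ⟨s, hs, hsf, hxs⟩
    · exact hf.bridge_inter_homothety_image hab hl₀ hl₁ ▸ ⟨hxb, hx⟩
    · exact absurd hs (disjoint_left.1 hS (hf.mem_segment_of_mem_bridge hab hl₀ hl₁ hsf hxs hxb))
  have hmem {z : Plane} (hz : z ∈ segment ℝ p q) := homothety_image_segment_subset_bridge
    (a := a) (b := b) (mem_image_of_mem (homothety (o i) l) hz)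
  refine ⟨hsub.trans (hC.subset i), isConvexPolygon_bridge ..,
    hf.interior_bridge_nonempty hab hl₀ hl₁,
    (AffineMap.homothety_injective _ hl₀.ne').ne hf.ne.symm,
    hmem (right_mem_segment ..), hmem (left_mem_segment ..),
    fun x => hf.side_nonneg_of_mem_bridge hab hl₀ hl₁, ?_, ?_, ?_, ?_, ?_⟩
  · rw [hinter, image_segment, segment_symm]
  · rw [hinter]
    exact (convex_segment p q).affine_image _
  · exact .inl (hinter ▸ ⟨_, mem_image_of_mem _ (left_mem_segment ..)⟩)
  · intro x hx
    rw [openSegment_symm] at hx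
    filter_upwards [hf.eventually_mem_homothety_image hl₀ hx] with z hz _ hz_neg
    rw [side_swap, neg_lt_zero] at hz_neg
    exact hi (hz hz_neg.le)
  · refine hfin.subset fun x ⟨hx, hx'⟩ => ?_
    have hxP : x ∉ interior P := fun hxP => hx' (.inr hxP)
    exact ⟨(hf.frontier_bridge_subset hab hl₀ hl₁ hx).resolve_left fun hxi =>
      hxP (interior_mono (hC.subset i) hxi), hxP⟩

section Enter

variable (hi : i ∉ 𝓔)

omit hab
include hi

omit hf in
theorem disjoint_homothety_image (ho : o i ∈ interior (C i)) :
    Disjoint R (homothety (o i) l '' C i) :=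
  disjoint_left.2 fun _ hxR hx => h.notMem_interior hC hi hxR
    (homothety_image_subset_interior (hC.isConvexPolygon i).convex ho hl₀.le hl₁ hx)

theorem inter_bridge_eq : R ∩ bridge (o i) l p q p q = R ∩ segment ℝ p q :=
  Subset.antisymm
    (fun _ hx => ⟨hx.1, (hf.mem_interior_or_mem_segment Subset.rfl hl₀ hl₁ hx.2).resolve_left
      (h.notMem_interior hC hi hx.1)⟩)
    (inter_subset_inter_right R segment_subset_bridge)

theorem isAttachment_enter_bridge (hconv : Convex ℝ (R ∩ segment ℝ p q))
    (hne : (R ∩ segment ℝ p q).Nonempty ∨ R = ∅)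
    (hmem : ∀ x ∈ openSegment ℝ p q, ∀ᶠ z in 𝓝 x, z ∈ P → side p q z < 0 → z ∈ R) :
    IsAttachment P R (bridge (o i) l p q p q) p q := by
  have hsub := hf.bridge_subset Subset.rfl hl₀ hl₁
  have hinter := h.inter_bridge_eq hC hf hl₀ hl₁ hi
  refine ⟨hsub.trans (hC.subset i), isConvexPolygon_bridge ..,
    hf.interior_bridge_nonempty Subset.rfl hl₀ hl₁, hf.ne,
    segment_subset_bridge (left_mem_segment ..), segment_subset_bridge (right_mem_segment ..),
    fun x hx => hf.side_nonneg x (hsub hx), hinter ▸ inter_subset_right, hinter ▸ hconv,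
    hinter ▸ hne, hmem, ?_⟩
  convert finite_empty
  exact sdiff_eq_empty.2 ((hf.frontier_bridge_subset Subset.rfl hl₀ hl₁).trans
    (union_subset ((interior_mono (hC.subset i)).trans subset_union_right) subset_union_left))

theorem isAttachment_homothety_image :
    IsAttachment P (R ∪ bridge (o i) l p q p q) (homothety (o i) l '' C i)
      (homothety (o i) l p) (homothety (o i) l q) := by
  have hsub := homothety_image_subset_interior (hC.isConvexPolygon i).convex hf.center_mem
    hl₀.le hl₁
  have hinter : (R ∪ bridge (o i) l p q p q) ∩ homothety (o i) l '' C i =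
      segment ℝ (homothety (o i) l p) (homothety (o i) l q) := by
    rw [union_inter_distrib_right,
      (h.disjoint_homothety_image hC hl₀ hl₁ hi hf.center_mem).inter_eq, empty_union,
      hf.bridge_inter_homothety_image Subset.rfl hl₀ hl₁, image_segment]
  have hpoly := (hC.isConvexPolygon i).image_homothety (o i) hl₀.ne'
  refine ⟨(hsub.trans interior_subset).trans (hC.subset i), hpoly, ?_,
    (AffineMap.homothety_injective _ hl₀.ne').ne hf.ne, mem_image_of_mem _ hf.left_mem,
    mem_image_of_mem _ hf.right_mem, ?_, hinter.subset, hinter ▸ convex_segment _ _,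
    .inl (hinter ▸ ⟨_, left_mem_segment ..⟩), fun x hx => ?_, ?_⟩
  · exact ((hC.interior_nonempty i).image _).mono
      ((AffineMap.homothety_isOpenMap (o i) l hl₀.ne').image_interior_subset (C i))
  · rintro _ ⟨x, hx, rfl⟩
    rw [side_homothety_homothety]
    exact mul_nonneg (sq_nonneg l) (hf.side_nonneg x hx)
  · rw [openSegment_symm] at hx
    filter_upwards [hf.eventually_mem_bridge_inner Subset.rfl hl₀ hl₁ hx] with z hz _ hz_neg
    rw [side_swap, neg_lt_zero] at hz_neg
    exact .inr (hz hz_neg.le)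
  · convert finite_empty
    exact sdiff_eq_empty.2 ((hpoly.isCompact.isClosed.frontier_subset.trans hsub).trans
      ((interior_mono (hC.subset i)).trans subset_union_right))

end Enter

end IsNetwork

/-- A network containing all the shrunken cells `C i`, `i ∈ 𝓔`, and having only finitely many gates
to each remaining cell. -/
structure IsFullNetwork (P : Set Plane) (C : ι → Set Plane) (o : ι → Plane) (l : ℝ) (𝓔 : Set ι)
    (R S : Set Plane) : Prop extends IsNetwork P C o l 𝓔 R S where
  image_subset : ∀ i ∈ 𝓔, homothety (o i) l '' C i ⊆ R
  finite_inter : ∀ j ∉ 𝓔, (S ∩ C j).Finite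

theorem isFullNetwork_empty : IsFullNetwork P C o l ∅ ∅ ∅ := ⟨isNetwork_empty, by simp, by simp⟩

theorem IsNetwork.exists_isFullNetwork_insert (hC : IsConvexSubdivision P C)
    (h : IsNetwork P C o l 𝓔 R S) (hf : IsFrame (C c) (o c) p q) (hl₀ : 0 < l) (hl₁ : l < 1)
    (himage : ∀ i ∈ 𝓔, homothety (o i) l '' C i ⊆ R) (hc : c ∉ 𝓔)
    (hfin : ∀ j ∉ insert c 𝓔, ((S ∪ segment ℝ p q) ∩ C j).Finite)
    (hconv : Convex ℝ (R ∩ segment ℝ p q)) (hne : (R ∩ segment ℝ p q).Nonempty ∨ R = ∅)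
    (hmem : ∀ x ∈ openSegment ℝ p q, ∀ᶠ z in 𝓝 x, z ∈ P → side p q z < 0 → z ∈ R) :
    ∃ R' S', IsFullNetwork P C o l (insert c 𝓔) R' S' := by
  have hbridge := h.reachable.attach (h.isAttachment_enter_bridge hC hf hl₀ hl₁ hc hconv hne hmem)
  have himg := hbridge.attach (h.isAttachment_homothety_image hC hf hl₀ hl₁ hc)
  refine ⟨_, _, (h.union_bridge hC hf Subset.rfl hl₀ hl₁ hbridge fun _ _ => inter_subset_left
    ).union_homothety_image hC hl₀ hl₁ hf.center_mem (mem_insert c 𝓔) himg, ?_, hfin⟩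
  rintro i (rfl | hi)
  · exact subset_union_right
  · exact (himage i hi).trans (subset_union_left.trans subset_union_left)

end Network

section Frame

variable {C D : Set Plane} {o o' a b p q : Plane}

theorem IsFrame.interior_inter_nonempty (hf : IsFrame C o p q) (hg : IsFrame D o' p q) :
    (interior (C ∩ D)).Nonempty :=
  interior_inter_nonempty_of_side_pos hf.isConvexPolygon.convex hg.isConvexPolygon.convex hf.ne
    hf.left_mem hf.right_mem hg.left_mem hg.right_mem (interior_subset hf.center_mem)
    (interior_subset hg.center_mem) hf.side_center_pos hg.side_center_pos

theorem exists_isFrame_isFrame_swap (hC : IsConvexPolygon C) (hD : IsConvexPolygon D)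
    (hdisj : Disjoint (interior C) (interior D)) (ho : o ∈ interior C) (ho' : o' ∈ interior D)
    (hab : a ≠ b) (haC : segment ℝ a b ⊆ frontier C) (haD : segment ℝ a b ⊆ frontier D) :
    ∃ p q, IsFrame C o p q ∧ IsFrame D o' q p ∧ segment ℝ p q = segment ℝ a b := by
  have hoverlap {p q : Plane} (hf : IsFrame C o p q) (hg : IsFrame D o' p q) : False := by
    have := hf.interior_inter_nonempty hg
    rw [interior_inter, hdisj.inter_eq] at this
    exact not_nonempty_empty this
  rcases isFrame_or_isFrame_swap hC ho hab haC with hf | hf <;>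
    rcases isFrame_or_isFrame_swap hD ho' hab haD with hg | hg
  · exact (hoverlap hf hg).elim
  · exact ⟨a, b, hf, hg, rfl⟩
  · exact ⟨b, a, hf, hg, segment_symm ℝ b a⟩
  · exact (hoverlap hf hg).elim

end Frame

section Network

variable {P : Set Plane} {ι : Type*} {C : ι → Set Plane} {o : ι → Plane} {l : ℝ} {𝓔 : Set ι}
  {R S : Set Plane} {i c : ι} {a b p q v y : Plane}

namespace IsFullNetwork

theorem exists_insert_of_isFrame (hC : IsConvexSubdivision P C)
    (h : IsFullNetwork P C o l 𝓔 R S) (hl₀ : 0 < l) (hl₁ : l < 1) (hi : i ∈ 𝓔) (hc : c ∉ 𝓔)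
    (hf : IsFrame (C i) (o i) p q) (hg : IsFrame (C c) (o c) q p)
    (hint : segment ℝ p q ⊆ interior (C i ∪ C c)) (hS : Disjoint (segment ℝ p q) S) :
    ∃ R' S', IsFullNetwork P C o l (insert c 𝓔) R' S' := by
  have hfin : (segment ℝ p q \ interior P).Finite := by
    rw [sdiff_eq_empty.2 (hint.trans (interior_mono (union_subset (hC.subset i) (hC.subset c))))]
    exact finite_empty
  have hother : ∀ j ∉ insert c 𝓔, Disjoint (segment ℝ p q) (C j) := fun j hj =>
    disjoint_left.2 fun x hx => hC.notMem_of_mem_interior_biUnion (𝓑 := {i, c})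
      (by rintro (rfl | rfl) <;> simp_all) (by simpa using hint hx)
  have hbridge := h.reachable.attach
    (h.isAttachment_exit_bridge hC hf Subset.rfl hl₀ hl₁ (h.image_subset i hi) hS hfin)
  have hnet := h.union_bridge hC hf Subset.rfl hl₀ hl₁ hbridge fun _ _ => inter_subset_left
  rw [insert_eq_of_mem hi] at hnet
  have hRqp : (R ∪ bridge (o i) l p q p q) ∩ segment ℝ q p = segment ℝ q p := by
    rw [segment_symm, inter_eq_right]
    exact segment_subset_bridge.trans subset_union_right
  refine hnet.exists_isFullNetwork_insert hC hg hl₀ hl₁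
    (fun j hj => (h.image_subset j hj).trans subset_union_left) hc (fun j hj => ?_)
    (by rw [hRqp]; exact convex_segment q p) (.inl (by rw [hRqp]; exact ⟨q, left_mem_segment ..⟩))
    fun x hx => ?_
  · rw [segment_symm ℝ q p, union_assoc, union_self, union_inter_distrib_right,
      (hother j hj).inter_eq, union_empty]
    exact h.finite_inter j fun hj' => hj (.inr hj')
  · rw [openSegment_symm] at hx
    filter_upwards [hf.eventually_mem_bridge_outer hl₁ hx] with z hz _ hz_neg
    rw [side_swap, neg_lt_zero] at hz_neg
    exact .inr (hz hz_neg.le)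

theorem exists_insert_of_ne (hC : IsConvexSubdivision P C) (h : IsFullNetwork P C o l 𝓔 R S)
    (ho : ∀ i, o i ∈ interior (C i)) (hl₀ : 0 < l) (hl₁ : l < 1) (hi : i ∈ 𝓔) (hc : c ∉ 𝓔)
    (hab : a ≠ b) (ha : a ∈ C i ∩ C c) (hb : b ∈ C i ∩ C c) :
    ∃ R' S', IsFullNetwork P C o l (insert c 𝓔) R' S' := by
  have hic : i ≠ c := ne_of_mem_of_not_mem hi hc
  have hiconv := (hC.isConvexPolygon i).convex
  have hcconv := (hC.isConvexPolygon c).convex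
  obtain ⟨p', q', hpq', hsub⟩ := exists_segment_subset_openSegment_diff hab (h.finite_inter c hc)
  have hsub_inter : segment ℝ p' q' ⊆ C i ∩ C c := (hsub.trans sdiff_subset).trans
    ((openSegment_subset_segment ℝ a b).trans ((hiconv.inter hcconv).segment_subset ha hb))
  obtain ⟨p, q, hf, hg, hpq⟩ := exists_isFrame_isFrame_swap (hC.isConvexPolygon i)
    (hC.isConvexPolygon c) (hC.disjoint_interior hic) (ho i) (ho c) hpq'
    (fun x hx => hC.mem_frontier hic (hsub_inter hx).1 (hsub_inter hx).2)
    (fun x hx => hC.mem_frontier hic.symm (hsub_inter hx).2 (hsub_inter hx).1)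
  refine h.exists_insert_of_isFrame hC hl₀ hl₁ hi hc hf hg ?_ ?_ <;> rw [hpq]
  · exact (hsub.trans sdiff_subset).trans (openSegment_subset_interior_union hiconv hcconv
      (hC.interior_nonempty i) (hC.interior_nonempty c) (hC.disjoint_interior hic) hab
      ha.1 hb.1 ha.2 hb.2)
  · exact disjoint_left.2 fun x hx hxS => (hsub hx).2 ⟨hxS, (hsub_inter hx).2⟩

theorem exists_mem_vertex (hC : IsConvexSubdivision P C) (h : IsFullNetwork P C o l 𝓔 R S)
    (ho : o i ∈ interior (C i)) (hl₀ : 0 < l) (hl₁ : l < 1) (hi : i ∈ 𝓔) (hvy : v ≠ y)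
    (hy : segment ℝ v y ⊆ Sᶜ ∩ frontier (C i))
    (hother : ∀ d, d ≠ i → C d ∩ segment ℝ v y ⊆ {v}) :
    ∃ R' S', IsFullNetwork P C o l 𝓔 R' S' ∧ v ∈ R' := by
  obtain ⟨p, q, hf, hpq, -⟩ :=
    exists_isFrame (hC.isConvexPolygon i) ho hvy (hy.trans inter_subset_right)
  have hv : segment ℝ v v ⊆ segment ℝ p q := by
    rw [segment_same, singleton_subset_iff, hpq]
    exact left_mem_segment ℝ v y
  have hout : ∀ j ∉ 𝓔, segment ℝ p q ∩ C j ⊆ {v} := fun j hj => by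
    rw [hpq, inter_comm]
    exact hother j (ne_of_mem_of_not_mem hi hj).symm
  have hbridge := h.reachable.attach (h.isAttachment_exit_bridge hC hf hv hl₀ hl₁
    (h.image_subset i hi) (disjoint_left.2 fun x hx => (hy (hpq ▸ hx)).1)
    (by rw [segment_same]; exact (finite_singleton v).subset sdiff_subset))
  have hnet := h.union_bridge hC hf hv hl₀ hl₁ hbridge (by
    rwa [insert_eq_of_mem hi, segment_same])
  rw [insert_eq_of_mem hi] at hnet
  refine ⟨_, _, ⟨hnet, fun j hj => (h.image_subset j hj).trans subset_union_left, fun j hj => ?_⟩,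
    .inr (segment_subset_bridge (left_mem_segment ℝ v v))⟩
  rw [union_inter_distrib_right]
  exact (h.finite_inter j hj).union ((finite_singleton v).subset (hout j hj))

theorem exists_insert_of_vertex [Finite ι] (hC : IsConvexSubdivision P C)
    (h : IsFullNetwork P C o l 𝓔 R S) (ho : o c ∈ interior (C c)) (hl₀ : 0 < l) (hl₁ : l < 1)
    (hc : c ∉ 𝓔) (hvy : v ≠ y) (hy : segment ℝ v y ⊆ frontier (C c))
    (hother : ∀ d, d ≠ c → C d ∩ segment ℝ v y ⊆ {v}) (hv : v ∈ R ∨ R = ∅) :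
    ∃ R' S', IsFullNetwork P C o l (insert c 𝓔) R' S' := by
  obtain ⟨p, q, hf, hpq, hpq_open⟩ := exists_isFrame (hC.isConvexPolygon c) ho hvy hy
  have hRv : R ∩ segment ℝ v y ⊆ {v} := fun x ⟨hx, hxs⟩ => by
    obtain ⟨i, hi, hxi⟩ := h.exists_mem x hx
    exact hother i (ne_of_mem_of_not_mem hi hc) ⟨hxi, hxs⟩
  refine h.exists_isFullNetwork_insert hC hf hl₀ hl₁ h.image_subset hc (fun j hj => ?_)
    (hpq ▸ (subsingleton_singleton.anti hRv).convex)
    (hv.imp_left fun hv => ⟨v, hv, hpq ▸ left_mem_segment ℝ v y⟩) fun x hx => ?_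
  · rw [union_inter_distrib_right, hpq, inter_comm (segment ℝ v y)]
    exact (h.finite_inter j fun hj' => hj (.inr hj')).union
      ((finite_singleton v).subset (hother j fun hjc => hj (.inl hjc)))
  · rw [hpq_open] at hx
    have hxv : x ≠ v := by
      rintro rfl
      exact hvy (left_mem_openSegment_iff.1 hx)
    filter_upwards [hC.eventually_mem_imp_mem x] with z hz hzP hz_neg
    obtain ⟨d, hd⟩ := mem_iUnion.1 (hC.iUnion_eq ▸ hzP)
    obtain rfl : d = c := by_contra fun hdc =>
      hxv (hother d hdc ⟨hz d hd, openSegment_subset_segment ℝ v y hx⟩)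
    exact absurd (hf.side_nonneg z hd) hz_neg.not_ge

end IsFullNetwork

namespace IsConvexSubdivision

theorem exists_mem_mem_of_isPreconnected [Finite ι] (hC : IsConvexSubdivision P C)
    (hP : IsPreconnected P) (h𝓔 : 𝓔.Nonempty) (h𝓔' : 𝓔 ≠ univ) :
    ∃ v, (∃ i ∈ 𝓔, v ∈ C i) ∧ ∃ j ∈ 𝓔ᶜ, v ∈ C j := by
  obtain ⟨i, hi⟩ := h𝓔
  obtain ⟨j, hj⟩ := (ne_univ_iff_exists_notMem 𝓔).1 h𝓔'
  obtain ⟨x, hx⟩ := (hC.interior_nonempty i).mono interior_subset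
  obtain ⟨y, hy⟩ := (hC.interior_nonempty j).mono interior_subset
  obtain ⟨v, -, hv⟩ := isPreconnected_closed_iff.1 hP _ _ (hC.isClosed_biUnion 𝓔)
    (hC.isClosed_biUnion 𝓔ᶜ) (by rw [← biUnion_union, union_compl_self, biUnion_univ, hC.iUnion_eq])
    ⟨x, hC.subset i hx, mem_biUnion hi hx⟩ ⟨y, hC.subset j hy, mem_biUnion hj hy⟩
  exact ⟨v, by simpa using hv⟩

theorem exists_isFullNetwork_insert [Finite ι] (hC : IsConvexSubdivision P C)
    (hP : IsPreconnected P) (ho : ∀ i, o i ∈ interior (C i)) (hl₀ : 0 < l) (hl₁ : l < 1)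
    (h : IsFullNetwork P C o l 𝓔 R S) (h𝓔 : 𝓔.Nonempty) (h𝓔' : 𝓔 ≠ univ) :
    ∃ c ∉ 𝓔, ∃ R' S', IsFullNetwork P C o l (insert c 𝓔) R' S' := by
  by_cases hedge : ∃ i ∈ 𝓔, ∃ j ∉ 𝓔, (C i ∩ C j).Nontrivial
  · obtain ⟨i, hi, j, hj, a, ha, b, hb, hab⟩ := hedge
    exact ⟨j, hj, h.exists_insert_of_ne hC ho hl₀ hl₁ hi hj hab ha hb⟩
  obtain ⟨v, ⟨i, hi, hvi⟩, j, hj, hvj⟩ := hC.exists_mem_mem_of_isPreconnected hP h𝓔 h𝓔'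
  have hnear : ∀ᶠ x in 𝓝 v, ∀ i ∈ 𝓔, ∀ j ∉ 𝓔, x ∈ C i → x ∈ C j → x = v := by
    filter_upwards [hC.eventually_mem_imp_mem v] with x hx i hi j hj hxi hxj
    exact by_contra fun hxv =>
      hedge ⟨i, hi, j, hj, x, ⟨hxi, hxj⟩, v, ⟨hx i hxi, hx j hxj⟩, hxv⟩
  obtain ⟨c, hc, y, hyv, hy, hother⟩ := hC.exists_segment_subset_frontier (𝓑 := 𝓔ᶜ) ⟨j, hj, hvj⟩
    (fun hv => hC.notMem_of_mem_interior_biUnion (not_not.2 hi) hv hvi)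
    (hnear.mono fun x hx j hj i hi hxj hxi => hx i (not_not.1 hi) j hj hxi hxj) univ_mem
  obtain ⟨R', S', h', hvR'⟩ : ∃ R' S', IsFullNetwork P C o l 𝓔 R' S' ∧ v ∈ R' := by
    by_cases hvR : v ∈ R
    · exact ⟨R, S, h, hvR⟩
    have hvS : v ∉ S := fun hvS => hvR ((h.inter_eq j hj).symm ▸ ⟨hvS, hvj⟩ : v ∈ R ∩ C j).1
    obtain ⟨i', hi', y', hyv', hy', hother'⟩ := hC.exists_segment_subset_frontier ⟨i, hi, hvi⟩
      (fun hv => hC.notMem_of_mem_interior_biUnion hj hv hvj) hnear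
      (h.isClosed.isOpen_compl.mem_nhds hvS)
    exact h.exists_mem_vertex hC (ho i') hl₀ hl₁ hi' hyv'.symm hy' hother'
  exact ⟨c, hc, h'.exists_insert_of_vertex hC (ho c) hl₀ hl₁ hc hyv.symm
    (hy.trans inter_subset_right) hother (.inl hvR')⟩

theorem exists_isFullNetwork_singleton [Finite ι] (hC : IsConvexSubdivision P C)
    (hP : IsCompact P) (hne : P.Nonempty) (ho : ∀ i, o i ∈ interior (C i)) (hl₀ : 0 < l)
    (hl₁ : l < 1) : ∃ c R S, IsFullNetwork P C o l {c} R S := by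
  obtain ⟨v, hv⟩ := nonempty_frontier_iff.2 ⟨hne, fun hPu => noncompact_univ Plane (hPu ▸ hP)⟩
  obtain ⟨i, hi⟩ := mem_iUnion.1 (hC.iUnion_eq ▸ hP.isClosed.frontier_subset hv)
  obtain ⟨c, -, y, hyv, hy, hother⟩ := hC.exists_segment_subset_frontier (𝓑 := univ)
    ⟨i, mem_univ i, hi⟩ (by rw [biUnion_univ, hC.iUnion_eq]; exact hv.2)
    (.of_forall fun x i _ j hj => absurd (mem_univ j) hj) univ_mem
  have := isFullNetwork_empty.exists_insert_of_vertex hC (ho c) hl₀ hl₁ (notMem_empty c) hyv.symm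
    (hy.trans inter_subset_right) hother (.inr rfl)
  exact ⟨c, by rwa [insert_empty_eq] at this⟩

theorem exists_reachable_homothety_image_subset [Finite ι] (hC : IsConvexSubdivision P C)
    (hP : IsCompact P) (hconn : IsConnected P) (ho : ∀ i, o i ∈ interior (C i)) (hl₀ : 0 < l)
    (hl₁ : l < 1) : ∃ R, Reachable P R ∧ ∀ i, homothety (o i) l '' C i ⊆ R := by
  obtain ⟨c, hc⟩ := hC.exists_isFullNetwork_singleton hP hconn.nonempty ho hl₀ hl₁
  obtain ⟨𝓔, ⟨h𝓔, R, S, h⟩, hmax⟩ :=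
    (toFinite {𝓔 : Set ι | 𝓔.Nonempty ∧ ∃ R S, IsFullNetwork P C o l 𝓔 R S}).exists_maximal
      ⟨{c}, singleton_nonempty c, hc⟩
  obtain rfl : 𝓔 = univ := by
    by_contra h𝓔'
    obtain ⟨d, hd, hins⟩ :=
      hC.exists_isFullNetwork_insert hconn.isPreconnected ho hl₀ hl₁ h h𝓔 h𝓔'
    exact hd (hmax ⟨insert_nonempty d 𝓔, hins⟩ (subset_insert d 𝓔) (mem_insert d 𝓔))
  exact ⟨R, h.reachable, fun i => h.image_subset i (mem_univ i)⟩

end IsConvexSubdivision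

end Network

section Cut

variable {X : Type*} [TopologicalSpace X] {S T : Set X}

theorem closure_interior_closure (h : S ⊆ closure (interior S)) :
    closure (interior (closure S)) = closure S :=
  (closure_minimal interior_subset isClosed_closure).antisymm
    (closure_minimal (h.trans (closure_mono (interior_mono subset_closure))) isClosed_closure)

theorem diff_subset_closure_interior_diff (hS : S ⊆ closure (interior S)) (hT : IsClosed T) :
    S \ T ⊆ closure (interior (S \ T)) := by
  rw [sdiff_eq, interior_inter, hT.isOpen_compl.interior_eq, inter_comm, inter_comm (interior S)]
  exact (inter_subset_inter_right _ hS).trans hT.isOpen_compl.inter_closure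

theorem disjoint_interior_closure_diff : Disjoint (interior T) (closure (S \ T)) :=
  (disjoint_sdiff_right.mono_left interior_subset).closure_right isOpen_interior

theorem union_closure_diff (hS : IsClosed S) (hT : T ⊆ S) : T ∪ closure (S \ T) = S :=
  (union_subset hT (closure_minimal sdiff_subset hS)).antisymm
    ((union_sdiff_cancel hT).superset.trans (union_subset_union_right T subset_closure))

end Cut

section Polygon

variable {P R : Set Plane} {v : ℝ≥0∞}

theorem CoveredBySegments.frontier_diff (hP : CoveredBySegments (frontier P))
    (hR : CoveredBySegments (frontier R)) : CoveredBySegments (frontier (P \ R)) := by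
  refine (hP.union hR).mono ?_
  rw [sdiff_eq, ← frontier_compl R]
  exact (frontier_inter_subset P Rᶜ).trans (union_subset_union inter_subset_left inter_subset_right)

theorem isPolygonalRegion_closure_diff (hP : IsPolygonalRegion P) (hR : IsClosed R)
    (hRf : CoveredBySegments (frontier R)) : IsPolygonalRegion (closure (P \ R)) :=
  ⟨hP.1.of_isClosed_subset isClosed_closure (closure_minimal sdiff_subset hP.1.isClosed),
    (closure_interior_closure (diff_subset_closure_interior_diff hP.2.1.subset hR)).symm,
    (CoveredBySegments.frontier_diff hP.2.2 hRf).mono frontier_closure_subset⟩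

theorem Splits.isSimplePolygon (h : Splits P R) (hP : IsPolygonalRegion P) (hR : R.Nonempty) :
    IsSimplePolygon R :=
  ⟨⟨hP.1.of_isClosed_subset h.isClosed h.subset, h.closure_interior.symm, h.frontier_covered⟩,
    (h.isRetract.resolve_right hR.ne_empty).simplyConnectedSpace⟩

theorem Splits.isSimplePolygon_rest (h : Splits P R) (hP : IsPolygonalRegion P) :
    IsSimplePolygon (closure (P \ R)) :=
  ⟨isPolygonalRegion_closure_diff hP h.isClosed h.frontier_covered, h.simplyConnected_rest⟩

theorem Splits.volume_rest (h : Splits P R) (hP : IsPolygonalRegion P) :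
    volume (closure (P \ R)) = volume P - volume R := by
  have hnull := (CoveredBySegments.frontier_diff hP.2.2 h.frontier_covered).volume_eq_zero
  rw [measure_congr (closure_ae_eq_of_null_frontier hnull),
    measure_sdiff h.subset h.isClosed.nullMeasurableSet
      (hP.1.of_isClosed_subset h.isClosed h.subset).measure_lt_top.ne]

theorem isConnected_of_isSimplePolygon (hP : IsSimplePolygon P) : IsConnected P := by
  have := hP.2
  exact isConnected_iff_connectedSpace.2 inferInstance

theorem volume_pos_of_isSimplePolygon (hP : IsSimplePolygon P) : 0 < volume P := by
  refine (isOpen_interior.measure_pos volume ?_).trans_le (measure_mono interior_subset)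
  rw [← closure_nonempty_iff, ← hP.1.2.1]
  exact (isConnected_of_isSimplePolygon hP).nonempty

theorem volume_homothety_image (o : Plane) (l : ℝ) (C : Set Plane) :
    volume (homothety o l '' C) = ENNReal.ofReal (l ^ 2) * volume C := by
  simp [Measure.addHaar_image_homothety]

theorem exists_lt_ofReal_sq_mul {m : ℝ≥0∞} (hm : m ≠ ∞) (hv : v < m) :
    ∃ l : ℝ, 0 < l ∧ l < 1 ∧ v < ENNReal.ofReal (l ^ 2) * m := by
  have hcont : Continuous fun l : ℝ => ENNReal.ofReal (l ^ 2) * m :=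
    (ENNReal.continuous_mul_const hm).comp (ENNReal.continuous_ofReal.comp (continuous_pow 2))
  have hnear : ∀ᶠ l in 𝓝[<] (1 : ℝ), v < ENNReal.ofReal (l ^ 2) * m :=
    nhdsWithin_le_nhds (hcont.continuousAt.eventually_const_lt (by simpa using hv))
  obtain ⟨l, hl, hl₀, hl₁⟩ := (hnear.and (Ioo_mem_nhdsLT zero_lt_one)).exists
  exact ⟨l, hl₀, hl₁, hl⟩

theorem IsConvexSubdivision.ofReal_sq_mul_volume_le {ι : Type*} [Finite ι] {C : ι → Set Plane}
    (hC : IsConvexSubdivision P C) {o : ι → Plane} (ho : ∀ i, o i ∈ interior (C i)) {l : ℝ}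
    (hl₀ : 0 < l) (hl₁ : l < 1) :
    ENNReal.ofReal (l ^ 2) * volume P ≤ volume (⋃ i, homothety (o i) l '' C i) := by
  have hsub (i : ι) : homothety (o i) l '' C i ⊆ interior (C i) :=
    homothety_image_subset_interior (hC.isConvexPolygon i).convex (ho i) hl₀.le hl₁
  calc ENNReal.ofReal (l ^ 2) * volume P
      ≤ ENNReal.ofReal (l ^ 2) * ∑' i, volume (C i) := by
        rw [← hC.iUnion_eq]
        gcongr
        exact measure_iUnion_le C
    _ = ∑' i, volume (homothety (o i) l '' C i) := by
        simp only [volume_homothety_image, ENNReal.tsum_mul_left]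
    _ = volume (⋃ i, homothety (o i) l '' C i) := by
        refine (measure_iUnion (fun i j hij => ?_) fun i => ?_).symm
        · exact (hC.disjoint_interior hij).mono (hsub i) (hsub j)
        · exact ((hC.isConvexPolygon i).image_homothety (o i) hl₀.ne').isCompact.measurableSet

theorem exists_reachable_le_volume (hP : IsSimplePolygon P) (hv : v < volume P) :
    ∃ R, Reachable P R ∧ v ≤ volume R := by
  obtain ⟨ι, _, C, hC⟩ := exists_isConvexSubdivision hP.1
  choose o ho using hC.interior_nonempty
  obtain ⟨l, hl₀, hl₁, hl⟩ := exists_lt_ofReal_sq_mul hP.1.1.measure_lt_top.ne hv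
  obtain ⟨R, hR, hsub⟩ := hC.exists_reachable_homothety_image_subset hP.1.1
    (isConnected_of_isSimplePolygon hP) ho hl₀ hl₁
  exact ⟨R, hR, hl.le.trans
    ((hC.ofReal_sq_mul_volume_le ho hl₀ hl₁).trans (measure_mono (iUnion_subset hsub)))⟩

theorem exists_splits_volume_eq (hP : IsSimplePolygon P) (hv₀ : 0 < v) (hv : v < volume P) :
    ∃ R, Splits P R ∧ volume R = v := by
  obtain ⟨R, hR, hvR⟩ := exists_reachable_le_volume hP hv
  exact hR.exists_splits_volume_eq hP hv₀ hvR

end Polygon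

section Dissection

variable {P : Set Plane} {k : ℕ}

/-- The simple polygons `Q i` dissect `P`: they have pairwise disjoint interiors and cover `P`. -/
structure IsDissection {ι : Type*} (P : Set Plane) (Q : ι → Set Plane) : Prop where
  isSimplePolygon : ∀ i, IsSimplePolygon (Q i)
  disjoint_interior : Pairwise fun i j => Disjoint (interior (Q i)) (interior (Q j))
  iUnion_eq : ⋃ i, Q i = P

theorem IsDissection.cons {R : Set Plane} {Q : Fin k → Set Plane} (h : IsDissection P Q)
    (hR : IsSimplePolygon R) (hdisj : Disjoint (interior R) (interior P)) :
    IsDissection (R ∪ P) (Fin.cons R Q : Fin (k + 1) → Set Plane) where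
  isSimplePolygon := by simpa [Fin.forall_fin_succ] using ⟨hR, h.isSimplePolygon⟩
  disjoint_interior := by
    have hdisj' (i : Fin k) : Disjoint (interior R) (interior (Q i)) :=
      hdisj.mono_right (interior_mono (h.iUnion_eq ▸ subset_iUnion Q i))
    intro i j hij
    induction i using Fin.cases <;> induction j using Fin.cases
    · exact (hij rfl).elim
    · exact hdisj' _
    · exact (hdisj' _).symm
    · exact h.disjoint_interior (Fin.succ_injective k |>.ne_iff.1 hij)
  iUnion_eq := by
    ext x
    simp [← h.iUnion_eq]

theorem exists_isDissection_volume_eq (hP : IsSimplePolygon P) {a : Fin (k + 1) → ℝ≥0∞}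
    (ha : ∀ i, 0 < a i) (hsum : volume P = ∑ i, a i) :
    ∃ Q : Fin (k + 1) → Set Plane, IsDissection P Q ∧ ∀ i, volume (Q i) = a i := by
  induction k generalizing P with
  | zero =>
    exact ⟨fun _ => P, ⟨fun _ => hP, Subsingleton.pairwise (α := Fin 1), iUnion_const P⟩, by
      simpa [Fin.forall_fin_one] using hsum⟩
  | succ k ih =>
    rw [Fin.sum_univ_succ] at hsum
    have hfin : a 0 ≠ ∞ :=
      ne_top_of_le_ne_top hP.1.1.measure_lt_top.ne (hsum ▸ le_self_add)
    have hrest : ∑ i : Fin (k + 1), a i.succ ≠ 0 := fun hzero =>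
      (ha (Fin.succ 0)).ne' (Finset.sum_eq_zero_iff.1 hzero 0 (Finset.mem_univ 0))
    obtain ⟨R, hR, hvR⟩ := exists_splits_volume_eq hP (ha 0)
      (hsum ▸ ENNReal.lt_add_right hfin hrest)
    have hne : R.Nonempty := nonempty_of_measure_ne_zero (hvR ▸ (ha 0).ne')
    obtain ⟨Q, hQ, hvQ⟩ := ih (hR.isSimplePolygon_rest hP.1) (fun i => ha i.succ) (by
      rw [hR.volume_rest hP.1, hvR, hsum, ENNReal.add_sub_cancel_left hfin])
    refine ⟨Fin.cons R Q, ?_, Fin.forall_fin_succ.2 ⟨hvR, hvQ⟩⟩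
    rw [← union_closure_diff hP.1.1.isClosed hR.subset]
    exact hQ.cons (hR.isSimplePolygon hP.1 hne)
      (disjoint_interior_closure_diff.mono_right interior_subset)

end Dissection

end AreaPartition

theorem area_partition_of_simple_polygon
    (P : Set (EuclideanSpace ℝ (Fin 2))) (hP : IsSimplePolygon P)
    (k : ℕ) (a : Fin k → ℝ) (ha : ∀ i, 0 < a i)
    (hsum : volume P = ENNReal.ofReal (∑ i, a i)) :
    ∃ Q : Fin k → Set (EuclideanSpace ℝ (Fin 2)),
      (∀ i, IsSimplePolygon (Q i)) ∧
      (Pairwise fun i j => Disjoint (interior (Q i)) (interior (Q j))) ∧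
      (⋃ i, Q i) = P ∧
      ∀ i, volume (Q i) = ENNReal.ofReal (a i) := by
  rw [ENNReal.ofReal_sum_of_nonneg fun i _ => (ha i).le] at hsum
  obtain _ | k := k
  · exact absurd hsum (by simpa using (AreaPartition.volume_pos_of_isSimplePolygon hP).ne')
  · obtain ⟨Q, hQ, hvQ⟩ :=
      AreaPartition.exists_isDissection_volume_eq hP (fun i => ENNReal.ofReal_pos.2 (ha i)) hsum
    exact ⟨Q, hQ.isSimplePolygon, hQ.disjoint_interior, hQ.iUnion_eq, hvQ⟩
end

section
/- Let a, b, c ∈ ℝ² and let α be a real number with 0 ≤ α ≤ area(conv{a, b, c}). Then there exists a point d on the closed segment from b to c such that area(conv{a, b, d}) = α. -/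
open MeasureTheory

/-! Moving one vertex `b i` of a simplex to `x`, with the others fixed, is the affine map
`y ↦ y + b.coord i y • (x - b i)`. Its linear part is a transvection of determinant `b.coord i x`,
so the volume is multiplied by `|b.coord i x|`. On the edge from `b j` to `b i` this coordinate is
the edge parameter `t`, and `t = α / V` cuts off volume `α` from a simplex of volume `V`.
A degenerate simplex has volume zero and need not be cut. -/

open Module Set
open scoped ENNReal Pointwise

theorem affineIndependent_of_affineSpan_eq_top_of_card_le {k V P ι : Type*} [DivisionRing k]
    [AddCommGroup V] [Module k V] [AddTorsor V P] [Fintype ι] {p : ι → P}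
    (hspan : affineSpan k (range p) = ⊤) (hcard : Fintype.card ι ≤ finrank k V + 1) :
    AffineIndependent k p := by
  have : Nonempty ι := range_nonempty_iff_nonempty.mp
    (AffineSubspace.nonempty_of_affineSpan_eq_top k V P hspan)
  obtain ⟨n, hn⟩ := Nat.exists_eq_add_one.mpr (Fintype.card_pos (α := ι))
  rw [affineIndependent_iff_le_finrank_vectorSpan k p hn, ← direction_affineSpan, hspan,
    AffineSubspace.direction_top, finrank_top]
  omega

section AddHaar

variable {E : Type*} [NormedAddCommGroup E] [NormedSpace ℝ E] [FiniteDimensional ℝ E]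
  [MeasurableSpace E] [BorelSpace E] (μ : Measure E) [μ.IsAddHaarMeasure]

theorem addHaar_image_affineMap (f : E →ᵃ[ℝ] E) (s : Set E) :
    μ (f '' s) = ENNReal.ofReal |LinearMap.det f.linear| * μ s := by
  have image_eq_vadd : f '' s = f 0 +ᵥ f.linear '' s := by
    rw [← image_vadd, image_image]
    exact image_congr fun x _ => by rw [f.decomp']; simp
  rw [image_eq_vadd, measure_vadd, Measure.addHaar_image_linearMap]

theorem addHaar_convexHull_eq_zero_of_affineSpan_ne_top {s : Set E} (hs : affineSpan ℝ s ≠ ⊤) :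
    μ (convexHull ℝ s) = 0 :=
  measure_mono_null (convexHull_subset_affineSpan s) (Measure.addHaar_affineSubspace μ _ hs)

variable {ι : Type*} [DecidableEq ι]

theorem addHaar_convexHull_range_update (b : AffineBasis ι ℝ E) (i : ι) (x : E) :
    μ (convexHull ℝ (range (Function.update b i x))) =
      ENNReal.ofReal |b.coord i x| * μ (convexHull ℝ (range b)) := by
  let f : E →ᵃ[ℝ] E :=
    AffineMap.id ℝ E + (LinearMap.toSpanSingleton ℝ E (x - b i)).toAffineMap.comp (b.coord i)
  have f_comp_b : f ∘ b = Function.update b i x := by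
    ext j
    obtain rfl | hij := eq_or_ne j i
    · simp [f]
    · simp [f, hij, hij.symm]
  have linear_f : f.linear = LinearMap.transvection (b.coord i).linear (x - b i) := by
    ext y
    simp [f, LinearMap.transvection.apply]
  have det_f : LinearMap.det f.linear = b.coord i x := by
    rw [linear_f, LinearMap.transvection.det, ← vsub_eq_sub, AffineMap.linearMap_vsub,
      b.coord_apply_eq, vsub_eq_sub, add_sub_cancel]
  rw [← f_comp_b, range_comp, ← f.image_convexHull, addHaar_image_affineMap, det_f]

theorem addHaar_convexHull_range_update_lineMap (b : AffineBasis ι ℝ E) {i j : ι} (hij : i ≠ j)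
    (t : ℝ) :
    μ (convexHull ℝ (range (Function.update b i (AffineMap.lineMap (b j) (b i) t)))) =
      ENNReal.ofReal |t| * μ (convexHull ℝ (range b)) := by
  rw [addHaar_convexHull_range_update, AffineMap.apply_lineMap, b.coord_apply_ne hij,
    b.coord_apply_eq, AffineMap.lineMap_apply_ring', sub_zero, mul_one, add_zero]

theorem exists_mem_segment_addHaar_convexHull_range_update_eq (b : AffineBasis ι ℝ E) {i j : ι}
    (hij : i ≠ j) {α : ℝ≥0∞} (hα : α ≤ μ (convexHull ℝ (range b))) :
    ∃ d ∈ segment ℝ (b j) (b i), μ (convexHull ℝ (range (Function.update b i d))) = α := by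
  set V := μ (convexHull ℝ (range b))
  have V_ne_top : V ≠ ∞ :=
    have := b.finite
    ((finite_range b).isCompact_convexHull ℝ).measure_lt_top.ne
  have ratio_le_one : α / V ≤ 1 := ENNReal.div_le_of_le_mul (by rwa [one_mul])
  refine ⟨AffineMap.lineMap (b j) (b i) (α / V).toReal, ?_, ?_⟩
  · rw [segment_eq_image_lineMap]
    exact mem_image_of_mem _ ⟨ENNReal.toReal_nonneg,
      ENNReal.toReal_le_of_le_ofReal zero_le_one (by rwa [ENNReal.ofReal_one])⟩
  · rw [addHaar_convexHull_range_update_lineMap μ b hij, abs_of_nonneg ENNReal.toReal_nonneg,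
      ENNReal.ofReal_toReal (ratio_le_one.trans_lt ENNReal.one_lt_top).ne]
    exact ENNReal.div_mul_cancel' (fun hV => le_zero_iff.mp (hV ▸ hα)) (absurd · V_ne_top)

theorem exists_cut_point_with_area_general [Fintype ι] {p : ι → E}
    (hcard : Fintype.card ι ≤ finrank ℝ E + 1) {i j : ι} (hij : i ≠ j) {α : ℝ≥0∞}
    (hα : α ≤ μ (convexHull ℝ (range p))) :
    ∃ d ∈ segment ℝ (p j) (p i), μ (convexHull ℝ (range (Function.update p i d))) = α := by
  by_cases hspan : affineSpan ℝ (range p) = ⊤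
  · have hp := affineIndependent_of_affineSpan_eq_top_of_card_le hspan hcard
    exact exists_mem_segment_addHaar_convexHull_range_update_eq μ ⟨p, hp, hspan⟩ hij hα
  · have volume_eq_zero := addHaar_convexHull_eq_zero_of_affineSpan_ne_top μ hspan
    refine ⟨p i, right_mem_segment ℝ _ _, ?_⟩
    rw [Function.update_eq_self, volume_eq_zero, le_zero_iff.mp (hα.trans_eq volume_eq_zero)]

end AddHaar

theorem range_vecCons_triple {X : Type*} (x y z : X) : range ![x, y, z] = {x, y, z} := by
  rw [Matrix.range_cons, Matrix.range_cons_cons_empty, singleton_union]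

theorem range_update_vecCons_two {X : Type*} (x y z w : X) :
    range (Function.update ![x, y, z] 2 w) = {x, y, w} := by
  have update_eq : Function.update ![x, y, z] 2 w = ![x, y, w] := by
    ext k : 1
    fin_cases k <;> rfl
  rw [update_eq, range_vecCons_triple]

theorem exists_cut_point_with_area (a b c : EuclideanSpace ℝ (Fin 2)) (α : ℝ)
    (hα : 0 ≤ α)
    (hα' : ENNReal.ofReal α ≤ volume (convexHull ℝ ({a, b, c} : Set (EuclideanSpace ℝ (Fin 2))))) :
    ∃ d ∈ segment ℝ b c,
      volume (convexHull ℝ ({a, b, d} : Set (EuclideanSpace ℝ (Fin 2)))) = ENNReal.ofReal α := by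
  simpa [range_update_vecCons_two] using exists_cut_point_with_area_general volume
    (p := ![a, b, c]) (i := 2) (j := 1) (by simp) (by decide) (by rwa [range_vecCons_triple])
end

section
/- Let L > 0 and let g : ℝ → ℝ be a function satisfying: (i) g is monotone (x ≤ y implies g(x) ≤ g(y)); (ii) x ≤ g(x) for all x; and (iii) g(x + L) = g(x) + L for all x. Suppose there exist real numbers t_0 ≤ t_1 ≤ ⋯ ≤ t_m with t_m = t_0 + L and t_{i+1} ≤ g(t_i) for every 0 ≤ i < m. Then for every x ∈ ℝ, the (m+1)-fold iterate of g satisfies g^[m+1](x) ≥ x + L. -/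
/-!
Modulo a translation by a multiple of `L` we may assume `t 0 ≤ x < t 0 + L`, so that
`t i ≤ x < t (i + 1)` for some `i`. As `g` is monotone, the greedy orbit of `x` never falls behind
the partition: after `m - i` steps it has passed `t 0 + L`, and the remaining `i + 1` steps take it
past `t (i + 1) + L`, which exceeds `x + L`. Straddling `x` thus costs one interval beyond the `m`
of the partition.
-/

open Set
open scoped AddConstMap

theorem exists_castSucc_le_lt_succ {α : Type*} [LinearOrder α] {n : ℕ} {t : Fin (n + 1) → α}
    {x : α} (h₀ : t 0 ≤ x) (hn : x < t (Fin.last n)) :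
    ∃ i : Fin n, t i.castSucc ≤ x ∧ x < t i.succ := by
  by_contra! hstep
  have hle : ∀ i, t i ≤ x := Fin.induction h₀ hstep
  exact hn.not_ge (hle _)

theorem le_iterate_sub_of_succ_le_map {α : Type*} [Preorder α] {f : α → α}
    (hf : Monotone f) {n : ℕ} {t : Fin (n + 1) → α}
    (ht : ∀ i : Fin n, t i.succ ≤ f (t i.castSucc)) {i j : Fin (n + 1)} (hij : i ≤ j) {x : α}
    (hx : t i ≤ x) : t j ≤ f^[j - i] x := by
  induction j using Fin.induction with
  | zero => simpa [Fin.le_zero_iff.mp hij] using hx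
  | succ j ih =>
    obtain rfl | hlt := hij.eq_or_lt
    · simpa using hx
    · have hij' : i ≤ j.castSucc := Fin.le_castSucc_iff.mpr hlt
      have hsub : (j.succ : ℕ) - i = (j.castSucc - i : ℕ) + 1 := Nat.succ_sub hij'
      rw [hsub, Function.iterate_succ_apply']
      exact (ht j).trans (hf (ih hij'))

section AddConstMap

variable {α : Type*} [AddCommGroup α] [LinearOrder α] [IsOrderedAddMonoid α] {L : α}

theorem add_le_map_of_forall_mem_Ico [Archimedean α] (hL : 0 < L) (f : α →+c[L, L] α) {a c : α}
    (h : ∀ x ∈ Ico a (a + L), x + c ≤ f x) (x : α) : x + c ≤ f x := by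
  rw [← toIcoMod_add_toIcoDiv_zsmul hL a x, AddConstMapClass.map_add_zsmul, add_right_comm]
  gcongr
  exact h _ (toIcoMod_mem_Ico hL a x)

theorem add_le_iterate_of_mem_Ico (g : α →+c[L, L] α) (hg : Monotone g) {m : ℕ}
    {t : Fin (m + 1) → α} (hlast : t 0 + L ≤ t (Fin.last m))
    (hcov : ∀ i : Fin m, t i.succ ≤ g (t i.castSucc)) {x : α} (hx : x ∈ Ico (t 0) (t 0 + L)) :
    x + L ≤ g^[m + 1] x := by
  obtain ⟨i, hix, hxi⟩ := exists_castSucc_le_lt_succ hx.1 (hx.2.trans_le hlast)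
  have hhead : t i.succ ≤ g^[i + 1] (t 0) := by
    simpa using le_iterate_sub_of_succ_le_map hg hcov (Fin.zero_le i.succ) le_rfl
  have htail : t (Fin.last m) ≤ g^[m - i] x := by
    simpa using le_iterate_sub_of_succ_le_map hg hcov (Fin.le_last i.castSucc) hix
  have hsteps : (i + 1 + (m - i) : ℕ) = m + 1 := by lia
  calc
    x + L ≤ t i.succ + L := by gcongr
    _ ≤ g^[i + 1] (t 0) + L := by gcongr
    _ = g^[i + 1] (t 0 + L) := (AddConstMapClass.map_add_const (g ^ (i + 1 : ℕ)) (t 0)).symm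
    _ ≤ g^[i + 1] (g^[m - i] x) := hg.iterate _ (hlast.trans htail)
    _ = g^[m + 1] x := by rw [← Function.iterate_add_apply, hsteps]

theorem greedy_boundary_wraps_general [Archimedean α] (hL : 0 < L) (g : α →+c[L, L] α)
    (hg : Monotone g) {m : ℕ} {t : Fin (m + 1) → α} (hlast : t 0 + L ≤ t (Fin.last m))
    (hcov : ∀ i : Fin m, t i.succ ≤ g (t i.castSucc)) (x : α) : x + L ≤ g^[m + 1] x := by
  rw [← AddConstMap.coe_pow]
  exact add_le_map_of_forall_mem_Ico hL (g ^ (m + 1))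
    (fun _ hy => add_le_iterate_of_mem_Ico g hg hlast hcov hy) x

end AddConstMap

theorem greedy_boundary_wraps (L : ℝ) (hL : 0 < L) (g : ℝ → ℝ)
    (hmono : ∀ x y : ℝ, x ≤ y → g x ≤ g y)
    (hle : ∀ x : ℝ, x ≤ g x)
    (hper : ∀ x : ℝ, g (x + L) = g x + L)
    (m : ℕ) (t : Fin (m + 1) → ℝ) (ht : Monotone t)
    (hlast : t (Fin.last m) = t 0 + L)
    (hcov : ∀ i : Fin m, t i.succ ≤ g (t i.castSucc)) :
    ∀ x : ℝ, x + L ≤ g^[m + 1] x :=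
  greedy_boundary_wraps_general hL ⟨g, hper⟩ hmono hlast.ge hcov
end

section
/- Let α be a type and let l be a list of elements of α of length n ≥ 1, and let m ≥ 2 be the number of distinct elements occurring in l. Suppose that for every cyclic rotation l' of l: (i) no two consecutive entries of l' are equal, and (ii) l' has no (not necessarily contiguous) subsequence of the form [x, y, x, y] with x ≠ y. Then n ≤ 2m − 2. -/
/-!
If a letter `a` returns after a nonempty block `u` without `a`, then no letter of `u` occurs after
that return, as it would alternate with `a`. Splitting `a u a v` into `u` and `a v` hence separates
the letters, and induction gives `n ≤ 2m - 1` for a linear sequence without immediate repetitions.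
A cyclic sequence is cut open at a letter `a`, and appending a further `a` at the end creates no
alternation: such an alternation `x a x a` would already give `a x a x` by using the initial `a`.
The linear bound, applied to a sequence of length `n + 1`, then saves the extra unit.
-/

open scoped List

section

variable {α : Type*} {l l₁ l₂ t u v : List α} {a : α}

/-- The order-2 Davenport–Schinzel condition on alternations: no subsequence `x y x y` with
`x ≠ y`. Unlike in a Davenport–Schinzel sequence, immediate repetitions are allowed, so that the
condition passes to all subsequences. -/
def AlternationFree (l : List α) : Prop :=
  ∀ x y : α, x ≠ y → ¬ [x, y, x, y] <+ l

namespace AlternationFree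

theorem of_sublist (h : AlternationFree l₂) (hl : l₁ <+ l₂) : AlternationFree l₁ :=
  fun x y hxy hsub => h x y hxy (hsub.trans hl)

theorem disjoint_of_notMem (h : AlternationFree (a :: (u ++ a :: v))) (ha : a ∉ u) :
    u.Disjoint (a :: v) := by
  intro x hxu hxav
  have hax : a ≠ x := fun hax => ha (hax ▸ hxu)
  have hxv : x ∈ v := List.mem_of_ne_of_mem hax.symm hxav
  have hsub : [x] ++ [a, x] <+ u ++ a :: v :=
    (List.singleton_sublist.2 hxu).append ((List.singleton_sublist.2 hxv).cons_cons a)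
  exact h a x hax (hsub.cons_cons a)

theorem cons_append_singleton (h : AlternationFree (a :: t)) :
    AlternationFree (a :: t ++ [a]) := by
  intro x y hxy hsub
  obtain ⟨p, q, hpq, hp, hq⟩ := List.sublist_append_iff.1 hsub
  rcases List.sublist_singleton.1 hq with rfl | rfl
  · rw [List.append_nil] at hpq
    exact h x y hxy (hpq ▸ hp)
  · obtain ⟨rfl, hya⟩ := List.append_inj' (s₁ := [x, y, x]) (t₁ := [y]) hpq rfl
    obtain rfl : y = a := List.singleton_inj.1 hya
    have hxyx : [x, y, x] <+ t := hp.of_cons_of_ne hxy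
    exact h y x hxy.symm (hxyx.cons_cons y)

variable [DecidableEq α]

theorem length_add_one_le_two_mul_card_of_isChain {l : List α} (h : AlternationFree l)
    (hchain : l.IsChain (· ≠ ·)) (hl : l ≠ []) : l.length + 1 ≤ 2 * l.toFinset.card := by
  match l, hl with
  | a :: t, _ =>
    by_cases ha : a ∈ t
    · obtain ⟨u, v, rfl, hau⟩ := List.eq_append_cons_of_mem ha
      have hu : u ≠ [] := by
        rintro rfl
        simp at hchain
      have hu_sub : u <+ a :: (u ++ a :: v) := (List.sublist_append_left u _).cons a
      have hv_sub : a :: v <+ a :: (u ++ a :: v) := (List.sublist_append_right u _).cons a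
      have hu_le : u.length + 1 ≤ 2 * u.toFinset.card :=
        (h.of_sublist hu_sub).length_add_one_le_two_mul_card_of_isChain
          hchain.tail.left_of_append hu
      have hv_le : (a :: v).length + 1 ≤ 2 * (a :: v).toFinset.card :=
        (h.of_sublist hv_sub).length_add_one_le_two_mul_card_of_isChain
          hchain.tail.right_of_append (List.cons_ne_nil a v)
      have hletters : (a :: (u ++ a :: v)).toFinset = u.toFinset ∪ (a :: v).toFinset := by
        ext x
        simp
      have hdisj : Disjoint u.toFinset (a :: v).toFinset :=
        List.disjoint_toFinset_iff_disjoint.2 (h.disjoint_of_notMem hau)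
      rw [hletters, Finset.card_union_of_disjoint hdisj, List.length_cons, List.length_append]
      lia
    · rw [List.toFinset_cons, Finset.card_insert_of_notMem (mt List.mem_toFinset.1 ha),
        List.length_cons]
      rcases eq_or_ne t [] with rfl | ht
      · simp
      · have ht_le : t.length + 1 ≤ 2 * t.toFinset.card :=
          (h.of_sublist (List.sublist_cons_self a t)).length_add_one_le_two_mul_card_of_isChain
            hchain.tail ht
        lia
termination_by l.length

theorem length_add_two_le_two_mul_card_of_cycleChain (h : AlternationFree l)
    (hchain : Cycle.Chain (· ≠ ·) (l : Cycle α)) (hl : l ≠ []) :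
    l.length + 2 ≤ 2 * l.toFinset.card := by
  obtain ⟨a, t, rfl⟩ := List.exists_cons_of_ne_nil hl
  have hclosed : (a :: t ++ [a]).length + 1 ≤ 2 * (a :: t ++ [a]).toFinset.card :=
    h.cons_append_singleton.length_add_one_le_two_mul_card_of_isChain
      ((Cycle.chain_coe_cons _ _ _).1 hchain) (by simp)
  have hletters : (a :: t ++ [a]).toFinset = (a :: t).toFinset := by simp
  rwa [hletters, List.length_append] at hclosed

end AlternationFree

theorem cycleChain_of_isChain_of_isChain_rotate_one {r : α → α → Prop} (hl : l.length ≠ 1)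
    (h₀ : l.IsChain r) (h₁ : (l.rotate 1).IsChain r) : Cycle.Chain r (l : Cycle α) := by
  cases l with
  | nil => exact Cycle.Chain.nil r
  | cons a t =>
    have ht : t ≠ [] := by
      rintro rfl
      exact hl rfl
    rw [Cycle.chain_coe_cons]
    rw [List.rotate_cons_succ, List.rotate_zero] at h₁
    exact List.IsChain.append_overlap (l₁ := [a]) h₀ h₁ ht

end

theorem cyclic_davenport_schinzel {α : Type*} [DecidableEq α] (l : List α)
    (hn : 1 ≤ l.length) (hm : 2 ≤ l.toFinset.card)
    (hconsec : ∀ k : ℕ, (l.rotate k).Chain' (· ≠ ·))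
    (halt : ∀ k : ℕ, ∀ x y : α, x ≠ y → ¬ List.Sublist [x, y, x, y] (l.rotate k)) :
    l.length ≤ 2 * l.toFinset.card - 2 := by
  have hfree : AlternationFree l := l.rotate_zero ▸ halt 0
  have hlen : 2 ≤ l.length := hm.trans l.toFinset_card_le
  have hchain : Cycle.Chain (· ≠ ·) (l : Cycle α) :=
    cycleChain_of_isChain_of_isChain_rotate_one (by lia) (l.rotate_zero ▸ hconsec 0) (hconsec 1)
  exact Nat.le_sub_of_add_le
    (hfree.length_add_two_le_two_mul_card_of_cycleChain hchain (List.length_pos_iff.1 hn))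
end

section
/- Let s ≥ 0 and let a, b, c be three points in the square [0, s] × [0, s] ⊆ ℝ². Then dist(a, b) + dist(b, c) + dist(c, a) ≤ (2 + √2)·s. -/
/-!
The perimeter of a triangle is a convex function of each vertex, so over an axis-parallel rectangle
it is maximal when all three vertices are corners of the rectangle. Of three corners, some two have
the same first coordinate and some two have the same second coordinate, so the perimeter is at most
the sum of the two side lengths and the diagonal of the rectangle.
-/

open Set

/-- The perimeter of the triangle with vertices `a`, `b`, `c`, which may be degenerate. -/
noncomputable def trianglePerimeter {X : Type*} [PseudoMetricSpace X] (a b c : X) : ℝ :=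
  dist a b + dist b c + dist c a

theorem trianglePerimeter_rotate {X : Type*} [PseudoMetricSpace X] (a b c : X) :
    trianglePerimeter a b c = trianglePerimeter b c a := by
  unfold trianglePerimeter
  ring

section ConvexHull

variable {E : Type*} [SeminormedAddCommGroup E] [NormedSpace ℝ E]

theorem convexOn_trianglePerimeter (b c : E) :
    ConvexOn ℝ univ fun a ↦ trianglePerimeter a b c := by
  simp only [trianglePerimeter, dist_comm c]
  exact ((convexOn_univ_dist b).add_const (dist b c)).add (convexOn_univ_dist c)

theorem exists_trianglePerimeter_ge_of_mem_convexHull {s : Set E} {a : E}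
    (ha : a ∈ convexHull ℝ s) (b c : E) :
    ∃ a' ∈ s, trianglePerimeter a b c ≤ trianglePerimeter a' b c :=
  (convexOn_trianglePerimeter b c).exists_ge_of_mem_convexHull (subset_univ s) ha

theorem exists_trianglePerimeter_ge_of_mem_convexHull₃ {s t u : Set E} {a b c : E}
    (ha : a ∈ convexHull ℝ s) (hb : b ∈ convexHull ℝ t) (hc : c ∈ convexHull ℝ u) :
    ∃ a' ∈ s, ∃ b' ∈ t, ∃ c' ∈ u, trianglePerimeter a b c ≤ trianglePerimeter a' b' c' := by
  obtain ⟨a', ha', hle_a⟩ := exists_trianglePerimeter_ge_of_mem_convexHull ha b c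
  obtain ⟨b', hb', hle_b⟩ := exists_trianglePerimeter_ge_of_mem_convexHull hb c a'
  obtain ⟨c', hc', hle_c⟩ := exists_trianglePerimeter_ge_of_mem_convexHull hc a' b'
  refine ⟨a', ha', b', hb', c', hc', ?_⟩
  calc trianglePerimeter a b c
      ≤ trianglePerimeter a' b c := hle_a
    _ = trianglePerimeter b c a' := trianglePerimeter_rotate ..
    _ ≤ trianglePerimeter b' c a' := hle_b
    _ = trianglePerimeter c a' b' := trianglePerimeter_rotate ..
    _ ≤ trianglePerimeter c' a' b' := hle_c
    _ = trianglePerimeter a' b' c' := trianglePerimeter_rotate ..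

end ConvexHull

section L2

variable {ι : Type*} [Fintype ι] {β : ι → Type*} [∀ i, SeminormedAddCommGroup (β i)]

theorem piLp_two_dist_le_of_forall_dist_apply_le {x y x' y' : PiLp 2 β}
    (h : ∀ i, dist (x i) (y i) ≤ dist (x' i) (y' i)) : dist x y ≤ dist x' y' := by
  rw [PiLp.dist_eq_of_L2, PiLp.dist_eq_of_L2]
  gcongr with i
  exact h i

theorem piLp_two_dist_le_sum_dist_apply (x y : PiLp 2 β) : dist x y ≤ ∑ i, dist (x i) (y i) := by
  rw [PiLp.dist_eq_of_L2]
  exact Real.sqrt_le_iff.2 ⟨Finset.sum_nonneg fun _ _ ↦ dist_nonneg,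
    Finset.sum_sq_le_sq_sum_of_nonneg fun _ _ ↦ dist_nonneg⟩

end L2

/-- The corners of the axis-parallel box that has `p` and `q` as opposite corners: the points each
of whose coordinates is that of `p` or that of `q`. The coordinates of `p` need not be the smaller
ones. -/
def boxCorners {ι : Type*} (p q : EuclideanSpace ℝ ι) : Set (EuclideanSpace ℝ ι) :=
  {v | ∀ i, v i = p i ∨ v i = q i}

theorem mem_convexHull_boxCorners {ι : Type*} [Finite ι] {p q x : EuclideanSpace ℝ ι}
    (hx : ∀ i, x i ∈ uIcc (p i) (q i)) : x ∈ convexHull ℝ (boxCorners p q) := by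
  let toEuclidean := (WithLp.linearEquiv 2 ℝ (ι → ℝ)).symm.toLinearMap
  have hpi : x.ofLp ∈ convexHull ℝ (univ.pi fun i ↦ {p i, q i}) := by
    simpa only [convexHull_pi, convexHull_pair, segment_eq_uIcc, mem_univ_pi] using hx
  have himage : toEuclidean '' (univ.pi fun i ↦ {p i, q i}) ⊆ boxCorners p q := by
    rintro _ ⟨v, hv, rfl⟩ i
    exact hv i (mem_univ i)
  have hx_image : x ∈ toEuclidean '' convexHull ℝ (univ.pi fun i ↦ {p i, q i}) := ⟨_, hpi, rfl⟩
  rw [LinearMap.image_convexHull] at hx_image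
  exact convexHull_mono himage hx_image

theorem dist_apply_le_of_mem_boxCorners {ι : Type*} {p q v w : EuclideanSpace ℝ ι}
    (hv : v ∈ boxCorners p q) (hw : w ∈ boxCorners p q) (i : ι) :
    dist (v i) (w i) ≤ dist (p i) (q i) := by
  rcases hv i with hv | hv <;> rcases hw i with hw | hw <;> simp [hv, hw, dist_comm]

theorem dist_le_of_mem_boxCorners {ι : Type*} [Fintype ι] {p q v w : EuclideanSpace ℝ ι}
    (hv : v ∈ boxCorners p q) (hw : w ∈ boxCorners p q) : dist v w ≤ dist p q :=
  piLp_two_dist_le_of_forall_dist_apply_le (dist_apply_le_of_mem_boxCorners hv hw)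

theorem apply_eq_or_of_mem_boxCorners {ι : Type*} {p q a b c : EuclideanSpace ℝ ι}
    (ha : a ∈ boxCorners p q) (hb : b ∈ boxCorners p q) (hc : c ∈ boxCorners p q) (i : ι) :
    a i = b i ∨ b i = c i ∨ c i = a i := by
  rcases ha i with ha | ha <;> rcases hb i with hb | hb <;> rcases hc i with hc | hc <;>
    simp [ha, hb, hc]

section Plane

variable {p q a b c : EuclideanSpace ℝ (Fin 2)}

theorem trianglePerimeter_le_of_apply_zero_eq
    (ha : a ∈ boxCorners p q) (hb : b ∈ boxCorners p q) (hc : c ∈ boxCorners p q)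
    (hab₀ : a 0 = b 0) :
    trianglePerimeter a b c ≤ dist (p 0) (q 0) + dist (p 1) (q 1) + dist p q := by
  have dist_le_sides (v w : EuclideanSpace ℝ (Fin 2)) :
      dist v w ≤ dist (v 0) (w 0) + dist (v 1) (w 1) := by
    simpa only [Fin.sum_univ_two] using piLp_two_dist_le_sum_dist_apply v w
  have side_ab : dist a b ≤ dist (a 1) (b 1) := by
    simpa only [hab₀, dist_self, zero_add] using dist_le_sides a b
  have side_bc := dist_le_sides b c
  have side_ca := dist_le_sides c a
  have coord_ab := dist_apply_le_of_mem_boxCorners ha hb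
  have coord_bc := dist_apply_le_of_mem_boxCorners hb hc
  have coord_ca := dist_apply_le_of_mem_boxCorners hc ha
  unfold trianglePerimeter
  rcases apply_eq_or_of_mem_boxCorners ha hb hc 1 with hab₁ | hbc₁ | hca₁
  · rw [hab₁, dist_self] at side_ab
    linarith [dist_le_of_mem_boxCorners hb hc, coord_ca 0, coord_ca 1]
  · rw [hbc₁, dist_self] at side_bc
    linarith [dist_le_of_mem_boxCorners hc ha, coord_ab 1, coord_bc 0]
  · rw [hca₁, dist_self] at side_ca
    linarith [dist_le_of_mem_boxCorners hb hc, coord_ab 1, coord_ca 0]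

theorem trianglePerimeter_le_of_mem_boxCorners
    (ha : a ∈ boxCorners p q) (hb : b ∈ boxCorners p q) (hc : c ∈ boxCorners p q) :
    trianglePerimeter a b c ≤ dist (p 0) (q 0) + dist (p 1) (q 1) + dist p q := by
  rcases apply_eq_or_of_mem_boxCorners ha hb hc 0 with hab | hbc | hca
  · exact trianglePerimeter_le_of_apply_zero_eq ha hb hc hab
  · rw [trianglePerimeter_rotate]
    exact trianglePerimeter_le_of_apply_zero_eq hb hc ha hbc
  · rw [← trianglePerimeter_rotate]
    exact trianglePerimeter_le_of_apply_zero_eq hc ha hb hca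

theorem triangle_perimeter_in_square_general
    (ha : ∀ i, a i ∈ uIcc (p i) (q i)) (hb : ∀ i, b i ∈ uIcc (p i) (q i))
    (hc : ∀ i, c i ∈ uIcc (p i) (q i)) :
    dist a b + dist b c + dist c a ≤ dist (p 0) (q 0) + dist (p 1) (q 1) + dist p q := by
  obtain ⟨a', ha', b', hb', c', hc', hle⟩ := exists_trianglePerimeter_ge_of_mem_convexHull₃
    (E := EuclideanSpace ℝ (Fin 2)) (mem_convexHull_boxCorners ha)
    (mem_convexHull_boxCorners hb) (mem_convexHull_boxCorners hc)
  exact hle.trans (trianglePerimeter_le_of_mem_boxCorners ha' hb' hc')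

end Plane

theorem dist_zero_square_corner {s : ℝ} (hs : 0 ≤ s) :
    dist (0 : EuclideanSpace ℝ (Fin 2)) !₂[s, s] = √2 * s := by
  simp [EuclideanSpace.dist_eq, Real.dist_eq, ← two_mul, hs]

theorem triangle_perimeter_in_square (s : ℝ) (hs : 0 ≤ s)
    (a b c : EuclideanSpace ℝ (Fin 2))
    (ha : ∀ i, a i ∈ Set.Icc (0 : ℝ) s)
    (hb : ∀ i, b i ∈ Set.Icc (0 : ℝ) s)
    (hc : ∀ i, c i ∈ Set.Icc (0 : ℝ) s) :
    dist a b + dist b c + dist c a ≤ (2 + Real.sqrt 2) * s := by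
  have hsquare {x : EuclideanSpace ℝ (Fin 2)} (hx : ∀ i, x i ∈ Icc 0 s) (i : Fin 2) :
      x i ∈ uIcc ((0 : EuclideanSpace ℝ (Fin 2)) i) (!₂[s, s] i) := by
    fin_cases i <;> simpa [uIcc_of_le hs] using hx _
  calc dist a b + dist b c + dist c a
      ≤ dist 0 s + dist 0 s + dist (0 : EuclideanSpace ℝ (Fin 2)) !₂[s, s] :=
        triangle_perimeter_in_square_general (p := 0) (q := !₂[s, s])
          (hsquare ha) (hsquare hb) (hsquare hc)
    _ = (2 + √2) * s := by
        rw [dist_zero_square_corner hs, dist_zero_left, Real.norm_of_nonneg hs]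
        ring
end

section
/- Let K and L be compact convex subsets of ℝ² with K ⊆ L. Then the 1-dimensional Hausdorff measure of the frontier of K is at most the 1-dimensional Hausdorff measure of the frontier of L, i.e., μH¹(∂K) ≤ μH¹(∂L). -/
open MeasureTheory

/-!
The nearest-point map `P` onto a closed convex set `K` is `1`-Lipschitz, so it does not increase
Hausdorff measures. For `y ∉ K` it is constant along the ray from `P y` in the direction `y - P y`,
and this ray must cross the frontier of a bounded set `L ⊇ K`. Hence every value of `P` outside `K`
is attained on the compact set `∂L`. A point of `∂K` is fixed by `P` and is a limit of points
outside `K`, so `∂K ⊆ P(∂L)`.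
-/

open Bornology Filter Set
open scoped NNReal RealInnerProductSpace

section NormedSpace

variable {E : Type*} [NormedAddCommGroup E] [NormedSpace ℝ E]

theorem tendsto_add_smul_atTop_cobounded (p : E) {n : E} (hn : n ≠ 0) :
    Tendsto (fun t : ℝ => p + t • n) atTop (cobounded E) := by
  refine (tendsto_const_add_cobounded p).comp ?_
  rw [← tendsto_norm_atTop_iff_cobounded]
  simp only [norm_smul]
  exact tendsto_norm_atTop_atTop.atTop_mul_const (norm_pos_iff.mpr hn)

theorem exists_add_smul_mem_frontier {L : Set E} (hL : IsBounded L) {p n : E} (hp : p ∈ L)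
    (hn : n ≠ 0) : ∃ t : ℝ, 0 ≤ t ∧ p + t • n ∈ frontier L := by
  let ray : ℝ≥0 → E := fun t => p + (t : ℝ) • n
  have ray_continuous : Continuous ray := by fun_prop
  have ray_starts : (ray ⁻¹' L).Nonempty := ⟨0, by simpa [ray] using hp⟩
  have ray_leaves : ray ⁻¹' L ≠ univ := by
    have ray_escapes : Tendsto ray atTop (cobounded E) :=
      (tendsto_add_smul_atTop_cobounded p hn).comp
        (NNReal.tendsto_coe_atTop.mpr tendsto_id)
    obtain ⟨t, ht⟩ := (ray_escapes.eventually_mem (isBounded_def.mp hL)).exists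
    exact (ne_univ_iff_exists_notMem _).mpr ⟨t, ht⟩
  obtain ⟨t, ht⟩ := nonempty_frontier_iff.mpr ⟨ray_starts, ray_leaves⟩
  exact ⟨t, t.coe_nonneg, ray_continuous.frontier_preimage_subset L ht⟩

theorem interior_closure_eq_interior_of_convex [FiniteDimensional ℝ E] {K : Set E}
    (hK : Convex ℝ K) : interior (closure K) = interior K := by
  rcases (interior (closure K)).eq_empty_or_nonempty with hempty | hne
  · exact ((interior_mono subset_closure).antisymm (hempty ▸ empty_subset _)).symm
  · refine hK.interior_closure_eq_interior_of_nonempty_interior ?_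
    have closure_subset : closure K ⊆ affineSpan ℝ K :=
      closure_minimal (subset_affineSpan ℝ K) (affineSpan ℝ K).closed_of_finiteDimensional
    rw [hK.interior_nonempty_iff_affineSpan_eq_top]
    rw [hK.closure.interior_nonempty_iff_affineSpan_eq_top] at hne
    exact top_le_iff.mp (hne ▸ affineSpan_le.mpr closure_subset)

theorem frontier_closure_of_convex [FiniteDimensional ℝ E] {K : Set E} (hK : Convex ℝ K) :
    frontier (closure K) = frontier K := by
  simp only [frontier, closure_closure, interior_closure_eq_interior_of_convex hK]

end NormedSpace

section MetricProjection

variable {E : Type*} [NormedAddCommGroup E] [InnerProductSpace ℝ E]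
  {K L : Set E} {u u' v v' : E} {P : E → E}

/-- `v` is the metric projection of `u` onto `K`, encoded by the obtuse angle criterion, which for
convex `K` says that `v` is the point of `K` nearest to `u`. -/
structure IsMetricProj (K : Set E) (u v : E) : Prop where
  mem : v ∈ K
  inner_le_zero : ∀ w ∈ K, ⟪u - v, w - v⟫ ≤ 0

theorem isMetricProj_self (hu : u ∈ K) : IsMetricProj K u u :=
  ⟨hu, by simp⟩

theorem exists_isMetricProj (hne : K.Nonempty) (hcomplete : IsComplete K) (hconv : Convex ℝ K)
    (u : E) : ∃ v, IsMetricProj K u v := by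
  obtain ⟨v, hv, hmin⟩ := exists_norm_eq_iInf_of_complete_convex hne hcomplete hconv u
  exact ⟨v, hv, (norm_eq_iInf_iff_real_inner_le_zero hconv hv).mp hmin⟩

namespace IsMetricProj

theorem dist_le_dist (h : IsMetricProj K u v) (h' : IsMetricProj K u' v') :
    dist v v' ≤ dist u u' := by
  simp only [dist_eq_norm]
  have angle : ⟪u - v, v' - v⟫ ≤ 0 := h.inner_le_zero v' h'.mem
  have angle' : ⟪u' - v', v - v'⟫ ≤ 0 := h'.inner_le_zero v h.mem
  have sq_le : ‖v - v'‖ * ‖v - v'‖ ≤ ‖u - u'‖ * ‖v - v'‖ := by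
    calc
      ‖v - v'‖ * ‖v - v'‖ = ⟪v - v', v - v'⟫ := (real_inner_self_eq_norm_mul_norm _).symm
      _ ≤ ⟪u - u', v - v'⟫ := by
        simp only [inner_sub_left, inner_sub_right] at angle angle' ⊢
        linarith
      _ ≤ ‖u - u'‖ * ‖v - v'‖ := real_inner_le_norm _ _
  rcases (norm_nonneg (v - v')).eq_or_lt with hzero | hpos
  · exact hzero ▸ norm_nonneg _
  · exact le_of_mul_le_mul_right sq_le hpos

theorem eq (h : IsMetricProj K u v) (h' : IsMetricProj K u v') : v = v' :=
  dist_le_zero.mp <| (h.dist_le_dist h').trans_eq (dist_self u)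

theorem add_smul (h : IsMetricProj K u v) {t : ℝ} (ht : 0 ≤ t) :
    IsMetricProj K (v + t • (u - v)) v where
  mem := h.mem
  inner_le_zero w hw := by
    rw [add_sub_cancel_left, real_inner_smul_left]
    exact mul_nonpos_of_nonneg_of_nonpos ht (h.inner_le_zero w hw)

end IsMetricProj

theorem lipschitzWith_one_of_isMetricProj (hP : ∀ u, IsMetricProj K u (P u)) :
    LipschitzWith 1 P :=
  LipschitzWith.mk_one fun u u' => (hP u).dist_le_dist (hP u')

theorem eqOn_id_closure_of_isMetricProj (hP : ∀ u, IsMetricProj K u (P u)) :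
    EqOn P id (closure K) :=
  EqOn.closure (fun u hu => (hP u).eq (isMetricProj_self hu))
    (lipschitzWith_one_of_isMetricProj hP).continuous continuous_id

theorem mem_image_frontier_of_isMetricProj (hP : ∀ u, IsMetricProj K u (P u)) (hKL : K ⊆ L)
    (hL : IsBounded L) {y : E} (hy : y ∉ K) : P y ∈ P '' frontier L := by
  have hn : y - P y ≠ 0 := sub_ne_zero.mpr fun h => hy (h ▸ (hP y).mem)
  obtain ⟨t, ht, hfrontier⟩ := exists_add_smul_mem_frontier hL (hKL (hP y).mem) hn
  exact ⟨_, hfrontier, (hP _).eq ((hP y).add_smul ht)⟩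

theorem frontier_subset_image_frontier_of_isMetricProj (hP : ∀ u, IsMetricProj K u (P u))
    (hKL : K ⊆ L) (hL : IsBounded L) (hfrontier : IsCompact (frontier L)) :
    frontier K ⊆ P '' frontier L := by
  have hPcont : Continuous P := (lipschitzWith_one_of_isMetricProj hP).continuous
  intro x hx
  rw [frontier_eq_closure_inter_closure] at hx
  have hPx : P x = x := eqOn_id_closure_of_isMetricProj hP hx.1
  rw [← hPx, ← (hfrontier.image hPcont).isClosed.closure_eq]
  exact map_mem_closure hPcont hx.2 fun y hy => mem_image_frontier_of_isMetricProj hP hKL hL hy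

end MetricProjection

theorem perimeter_mono_of_convex_subset_general {E : Type*} [NormedAddCommGroup E]
    [InnerProductSpace ℝ E] [FiniteDimensional ℝ E] [MeasurableSpace E] [BorelSpace E]
    {d : ℝ} (hd : 0 ≤ d) {K L : Set E} (hK : Convex ℝ K) (hL : IsBounded L) (hKL : K ⊆ L) :
    μH[d] (frontier K) ≤ μH[d] (frontier L) := by
  rcases K.eq_empty_or_nonempty with rfl | hne
  · simp
  have := FiniteDimensional.proper_real E
  choose P hP using exists_isMetricProj hne.closure isClosed_closure.isComplete hK.closure
  have hfrontier : IsCompact (frontier (closure L)) :=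
    hL.isCompact_closure.of_isClosed_subset isClosed_frontier isClosed_closure.frontier_subset
  calc
    μH[d] (frontier K) = μH[d] (frontier (closure K)) := by rw [frontier_closure_of_convex hK]
    _ ≤ μH[d] (P '' frontier (closure L)) :=
      measure_mono <| frontier_subset_image_frontier_of_isMetricProj hP (closure_mono hKL)
        hL.closure hfrontier
    _ ≤ μH[d] (frontier (closure L)) := by
      simpa using (lipschitzWith_one_of_isMetricProj hP).hausdorffMeasure_image_le hd
        (frontier (closure L))
    _ ≤ μH[d] (frontier L) := measure_mono frontier_closure_subset

theorem perimeter_mono_of_convex_subset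
    (K L : Set (EuclideanSpace ℝ (Fin 2)))
    (hKc : IsCompact K) (hKconv : Convex ℝ K)
    (hLc : IsCompact L) (hLconv : Convex ℝ L)
    (hKL : K ⊆ L) :
    μH[1] (frontier K) ≤ μH[1] (frontier L) :=
  perimeter_mono_of_convex_subset_general zero_le_one hKconv hLc.isBounded hKL
end

section
/- Let P be a simply connected polygonal region in the plane (a simple polygon). Then there exists a finite family of sets Q_1, …, Q_k ⊆ ℝ², each of which is the convex hull of a finite set of points, such that the interiors of the Q_i are pairwise disjoint, the union Q_1 ∪ ⋯ ∪ Q_k equals P, and each Q_i has perimeter at most 1, where the perimeter of Q_i is the 1-dimensional Hausdorff measure of its frontier. -/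
open MeasureTheory

/-!
Cut the plane by the finitely many lines carrying the frontier of `P`, by the coordinate axes, and
by all translates of these lines in a fine mesh. The number of *directions* of lines is fixed
before the mesh is chosen, and every cell has at most two sides in each direction. Each side lies
on a line, so it is no longer than the diameter of the cell; hence the perimeter of a cell is at
most a constant times the mesh. The interior of a cell is connected and misses the frontier of `P`,
so `P` is the union of the finitely many cells whose interior meets it.
-/

open Module Set
open scoped NNReal ENNReal

section Collinear

variable {E : Type*} [NormedAddCommGroup E] [NormedSpace ℝ E]

lemma hausdorffMeasure_one_le_ediam_of_collinear [MeasurableSpace E] [BorelSpace E] {s : Set E}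
    (hs : Collinear ℝ s) : μH[1] s ≤ Metric.ediam s := by
  rcases s.subsingleton_or_nontrivial with hsub | ⟨p, hp, q, hq, hpq⟩
  · have := Measure.nullSingletonClass_hausdorff E one_pos
    simp [hsub.measure_zero]
  obtain ⟨v, hv⟩ := (collinear_iff_of_mem hp).1 hs
  have hv₀ : v ≠ 0 := by
    rintro rfl
    obtain ⟨r, hr⟩ := hv q hq
    exact hpq (by simp [hr])
  let f : ℝ → E := fun t => t • (‖v‖⁻¹ • v) + p
  have hf : Isometry f := Isometry.of_dist_eq fun s t => by
    simp [f, dist_eq_norm, ← sub_smul, norm_smul, hv₀]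
  have hfs : f '' (f ⁻¹' s) = s := image_preimage_eq_of_subset fun x hx => by
    obtain ⟨r, rfl⟩ := hv x hx
    exact ⟨r * ‖v‖, by simp [f, smul_smul, hv₀]⟩
  rw [← hfs, hf.hausdorffMeasure_image (.inl zero_le_one), hf.ediam_image, hausdorffMeasure_real]
  exact Real.volume_le_diam _

lemma collinear_setOf_affineMap_eq (hE : finrank ℝ E = 2) {f : E →ᵃ[ℝ] ℝ} (hf : f.linear ≠ 0)
    (c : ℝ) : Collinear ℝ {x | f x = c} := by
  have : FiniteDimensional ℝ E := .of_finrank_pos (by omega)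
  have hspan : vectorSpan ℝ {x | f x = c} ≤ LinearMap.ker f.linear := by
    refine Submodule.span_le.2 ?_
    rintro _ ⟨x, hx, y, hy, rfl⟩
    rw [SetLike.mem_coe, LinearMap.mem_ker, AffineMap.linearMap_vsub, hx, hy, vsub_self]
  have hker := Module.Dual.finrank_ker_add_one_of_ne_zero hf
  rw [collinear_iff_finrank_le_one]
  have := Submodule.finrank_mono hspan
  omega

lemma exists_affineMap_eq_zero_on_segment (hE : 1 < finrank ℝ E) (a b : E) :
    ∃ f : E →ᵃ[ℝ] ℝ, f.linear ≠ 0 ∧ ∀ x ∈ segment ℝ a b, f x = 0 := by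
  have hspan : vectorSpan ℝ {a, b} < ⊤ := by
    refine lt_top_iff_ne_top.2 fun htop => ?_
    have := (collinear_pair ℝ a b).finrank_le_one
    rw [htop, finrank_top] at this
    omega
  obtain ⟨φ, hφ, hker⟩ := Submodule.exists_le_ker_of_lt_top _ hspan
  have hab : φ b = φ a := by
    simpa [sub_eq_zero] using
      hker (vsub_mem_vectorSpan ℝ (mem_insert_of_mem a rfl) (mem_insert a _))
  let f : E →ᵃ[ℝ] ℝ := φ.toAffineMap - AffineMap.const ℝ E (φ a)
  refine ⟨f, by simpa [f] using hφ, fun x hx => ?_⟩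
  have hfx : f x ∈ segment ℝ (f a) (f b) := image_segment ℝ f a b ▸ mem_image_of_mem f hx
  simpa [f, hab] using hfx

end Collinear

section Polyhedron

variable {E ι : Type*} [NormedAddCommGroup E] [NormedSpace ℝ E]

/-- The convex polyhedron cut out by the affine inequalities `h i x ≤ 0`; it need not be bounded,
and some of the inequalities may be redundant. -/
def polyhedron (h : ι → E →ᵃ[ℝ] ℝ) : Set E := {x | ∀ i, h i x ≤ 0}

lemma polyhedron_eq_iInter (h : ι → E →ᵃ[ℝ] ℝ) : polyhedron h = ⋂ i, h i ⁻¹' Iic 0 := by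
  ext; simp [polyhedron]

lemma convex_polyhedron (h : ι → E →ᵃ[ℝ] ℝ) : Convex ℝ (polyhedron h) := by
  rw [polyhedron_eq_iInter]
  exact convex_iInter fun i => (convex_Iic 0).affine_preimage (h i)

lemma isClosed_polyhedron [FiniteDimensional ℝ E] (h : ι → E →ᵃ[ℝ] ℝ) :
    IsClosed (polyhedron h) := by
  rw [polyhedron_eq_iInter]
  exact isClosed_iInter fun i => isClosed_Iic.preimage (h i).continuous_of_finiteDimensional

variable [Finite ι]

-- If `h i x = h i y = 0`, then `h i` vanishes on the whole line through `x` and `y`; the other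
-- inequalities are strict at `x`.
lemma eventually_lineMap_mem_polyhedron {h : ι → E →ᵃ[ℝ] ℝ} {x y : E} (hx : x ∈ polyhedron h)
    (hxy : ∀ i, h i x = 0 → h i y = 0) :
    ∀ᶠ t : ℝ in nhds 0, AffineMap.lineMap x y t ∈ polyhedron h := by
  refine Filter.eventually_all.2 fun i => ?_
  simp only [AffineMap.apply_lineMap]
  rcases (hx i).eq_or_lt with h₀ | hlt
  · simp [h₀, hxy i h₀]
  · have hcont : Continuous fun t => AffineMap.lineMap (k := ℝ) (h i x) (h i y) t :=
      AffineMap.lineMap_continuous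
    have :=
      hcont.continuousAt.eventually_lt (continuousAt_const (x := 0) (y := 0)) (by simpa using hlt)
    exact this.mono fun _ => le_of_lt

-- An extreme point is determined by the set of inequalities that are equalities there.
lemma finite_extremePoints_polyhedron (h : ι → E →ᵃ[ℝ] ℝ) :
    (extremePoints ℝ (polyhedron h)).Finite := by
  refine Finite.of_finite_image (f := fun x => {i | h i x = 0}) (toFinite _) ?_
  intro x hx y hy hxy
  have hev := eventually_lineMap_mem_polyhedron hx.1 fun i hi => (Set.ext_iff.1 hxy i).1 hi
  obtain ⟨t, hz, ht : t < 0⟩ :=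
    ((hev.filter_mono nhdsWithin_le_nhds).and (self_mem_nhdsWithin (s := Iio 0))).exists
  have hmem : x ∈ openSegment ℝ y (AffineMap.lineMap x y t) := by
    refine ⟨-t / (1 - t), 1 / (1 - t), ?_, ?_, ?_, ?_⟩
    · exact div_pos (by linarith) (by linarith)
    · exact div_pos one_pos (by linarith)
    · have : 1 - t ≠ 0 := by linarith
      field_simp
      ring
    · have : 1 - t ≠ 0 := by linarith
      rw [AffineMap.lineMap_apply_module]
      match_scalars <;> field_simp
      ring
  exact (hx.2 hy.1 hz hmem).symm

lemma exists_finset_polyhedron_eq_convexHull [FiniteDimensional ℝ E] {h : ι → E →ᵃ[ℝ] ℝ}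
    (hb : Bornology.IsBounded (polyhedron h)) :
    ∃ V : Finset E, polyhedron h = convexHull ℝ (V : Set E) := by
  have hfin := finite_extremePoints_polyhedron h
  have hcomp := Metric.isCompact_of_isClosed_isBounded (isClosed_polyhedron h) hb
  refine ⟨hfin.toFinset, ?_⟩
  rw [hfin.coe_toFinset, ← (hfin.isCompact_convexHull ℝ).isClosed.closure_eq,
    closure_convexHull_extremePoints hcomp (convex_polyhedron h)]

lemma frontier_polyhedron_subset [FiniteDimensional ℝ E] (h : ι → E →ᵃ[ℝ] ℝ) :
    frontier (polyhedron h) ⊆ ⋃ i, {x ∈ polyhedron h | h i x = 0} := by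
  intro x hx
  rw [(isClosed_polyhedron h).frontier_eq] at hx
  by_contra hx₀
  have hlt : ∀ i, h i x < 0 := fun i =>
    (hx.1 i).lt_of_ne fun hi => hx₀ (mem_iUnion.2 ⟨i, hx.1, hi⟩)
  have hopen : IsOpen {x | ∀ i, h i x < 0} := by
    simp only [ofPred_forall]
    exact isOpen_iInter_of_finite fun i =>
      isOpen_Iio.preimage (h i).continuous_of_finiteDimensional
  exact hx.2 (interior_maximal (fun y hy i => (hy i).le) hopen hlt)

lemma hausdorffMeasure_frontier_polyhedron_le [MeasurableSpace E] [BorelSpace E]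
    (hE : finrank ℝ E = 2) {h : ι → E →ᵃ[ℝ] ℝ} (hh : ∀ i, (h i).linear ≠ 0) :
    μH[1] (frontier (polyhedron h)) ≤ Nat.card ι * Metric.ediam (polyhedron h) := by
  have : FiniteDimensional ℝ E := .of_finrank_pos (by omega)
  have := Fintype.ofFinite ι
  calc μH[1] (frontier (polyhedron h))
      ≤ ∑ i, μH[1] {x ∈ polyhedron h | h i x = 0} :=
        (measure_mono (frontier_polyhedron_subset h)).trans (measure_iUnion_fintype_le _ _)
    _ ≤ ∑ _i : ι, Metric.ediam (polyhedron h) := by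
        gcongr with i
        have hcol := (collinear_setOf_affineMap_eq hE (hh i) 0).subset
          fun x (hx : x ∈ {x ∈ polyhedron h | h i x = 0}) => hx.2
        exact (hausdorffMeasure_one_le_ediam_of_collinear hcol).trans
          (Metric.ediam_mono (sep_subset _ _))
    _ = Nat.card ι * Metric.ediam (polyhedron h) := by
        simp [Nat.card_eq_fintype_card]

end Polyhedron

lemma antilipschitzWith_inv_smul {α F : Type*} [PseudoEMetricSpace α] [SeminormedAddCommGroup F]
    [NormedSpace ℝ F] {f : α → F} {K δ : ℝ≥0} (hδ : δ ≠ 0) (hf : AntilipschitzWith K f) :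
    AntilipschitzWith (K * δ) fun x => (δ : ℝ)⁻¹ • f x := by
  have hδ' : Function.LeftInverse (fun y : F => (δ : ℝ) • y) fun y => (δ : ℝ)⁻¹ • y :=
    fun y => smul_inv_smul₀ (by exact_mod_cast hδ) y
  have hsmul : AntilipschitzWith δ fun y : F => (δ : ℝ)⁻¹ • y := by
    simpa using (lipschitzWith_smul (δ : ℝ)).to_rightInverse hδ'
  exact hsmul.comp hf

lemma subset_of_disjoint_interior_frontier {E : Type*} [NormedAddCommGroup E] [NormedSpace ℝ E]
    {C P : Set E} (hC : Convex ℝ C) (hP : IsClosed P) (hdisj : Disjoint (interior C) (frontier P))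
    (hne : (interior C ∩ P).Nonempty) : C ⊆ P := by
  have hint : interior C ∩ P ⊆ interior P := fun x ⟨hxC, hxP⟩ => by
    by_contra hxi
    exact disjoint_left.1 hdisj hxC (hP.frontier_eq ▸ ⟨hxP, hxi⟩)
  have hsub : interior C ⊆ interior P := by
    refine hC.interior.isPreconnected.subset_of_closure_inter_subset isOpen_interior ?_ ?_
    · exact hne.mono fun x hx => ⟨hx.1, hint hx⟩
    · exact fun x hx => hint ⟨hx.2, closure_minimal interior_subset hP hx.1⟩
  calc C ⊆ closure C := subset_closure
    _ = closure (interior C) :=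
        (hC.closure_interior_eq_closure_of_nonempty_interior (hne.mono inter_subset_left)).symm
    _ ⊆ P := closure_minimal (hsub.trans interior_subset) hP

section GridCell

variable {E ι : Type*} [NormedAddCommGroup E] [NormedSpace ℝ E]

/-- The cell with index `k` of the subdivision of `E` by all hyperplanes `g i = m` with `m : ℤ`.
The family `g` may have more members than the dimension, and then many cells are empty. -/
def gridCell (g : ι → E →ᵃ[ℝ] ℝ) (k : ι → ℤ) : Set E := {x | ∀ i, g i x ∈ Icc (k i : ℝ) (k i + 1)}

/-- The affine functionals presenting `gridCell g k` as a polyhedron: the left summand encodes the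
lower bounds, the right one the upper bounds. -/
def gridCellFunctional (g : ι → E →ᵃ[ℝ] ℝ) (k : ι → ℤ) : ι ⊕ ι → E →ᵃ[ℝ] ℝ :=
  Sum.elim (fun i => AffineMap.const ℝ E (k i : ℝ) - g i)
    (fun i => g i - AffineMap.const ℝ E (k i + 1 : ℝ))

lemma gridCell_eq_polyhedron (g : ι → E →ᵃ[ℝ] ℝ) (k : ι → ℤ) :
    gridCell g k = polyhedron (gridCellFunctional g k) := by
  ext x
  simp [gridCell, polyhedron, gridCellFunctional, forall_and]

lemma linear_gridCellFunctional_ne_zero {g : ι → E →ᵃ[ℝ] ℝ} (hg : ∀ i, (g i).linear ≠ 0)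
    (k : ι → ℤ) (j : ι ⊕ ι) : (gridCellFunctional g k j).linear ≠ 0 := by
  cases j <;> simpa [gridCellFunctional] using hg _

lemma iUnion_gridCell (g : ι → E →ᵃ[ℝ] ℝ) : ⋃ k, gridCell g k = univ :=
  iUnion_eq_univ_iff.2 fun x =>
    ⟨fun i => ⌊g i x⌋, fun _ => ⟨Int.floor_le _, (Int.lt_floor_add_one _).le⟩⟩

/-- The indices of the cells whose interior meets `P`: the pieces of the partition. Requiring only
that the cell meets `P` would also select the neighbours of `P` and the degenerate cells. -/
def cellIndices (g : ι → E →ᵃ[ℝ] ℝ) (P : Set E) : Set (ι → ℤ) :=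
  {k | (interior (gridCell g k) ∩ P).Nonempty}

lemma finite_cellIndices [Finite ι] [FiniteDimensional ℝ E] (g : ι → E →ᵃ[ℝ] ℝ) {P : Set E}
    (hP : IsCompact P) : (cellIndices g P).Finite := by
  have hbdd (i : ι) : Bornology.IsBounded (g i '' P) :=
    (hP.image (g i).continuous_of_finiteDimensional).isBounded
  choose a ha using fun i => (hbdd i).bddBelow
  choose b hb using fun i => (hbdd i).bddAbove
  refine (Finite.pi fun i => finite_Icc (⌈a i⌉ - 1) ⌊b i⌋).subset ?_
  rintro k ⟨x, hx, hxP⟩ i -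
  have hxk : x ∈ gridCell g k := interior_subset hx
  have hax : a i ≤ k i + 1 := (ha i (mem_image_of_mem _ hxP)).trans (hxk i).2
  have hbx : k i ≤ b i := (hxk i).1.trans (hb i (mem_image_of_mem _ hxP))
  exact ⟨sub_le_iff_le_add.2 (Int.ceil_le.2 (by exact_mod_cast hax)), Int.le_floor.2 hbx⟩

lemma mem_Ioo_of_mem_interior_gridCell [FiniteDimensional ℝ E] {g : ι → E →ᵃ[ℝ] ℝ} {i : ι}
    (hg : (g i).linear ≠ 0) {k : ι → ℤ} {x : E} (hx : x ∈ interior (gridCell g k)) :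
    g i x ∈ Ioo (k i : ℝ) (k i + 1) := by
  have hopen : IsOpenMap (g i) := AffineMap.isOpenMap_linear_iff.1
    ((g i).linear.isOpenMap_of_finiteDimensional (LinearMap.surjective_of_ne_zero hg))
  have hsub : gridCell g k ⊆ g i ⁻¹' Icc (k i : ℝ) (k i + 1) := fun _ hy => hy i
  rw [← interior_Icc]
  exact hopen.interior_preimage_subset_preimage_interior (interior_mono hsub hx)

lemma pairwise_disjoint_interior_gridCell [FiniteDimensional ℝ E] {g : ι → E →ᵃ[ℝ] ℝ}
    (hg : ∀ i, (g i).linear ≠ 0) :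
    Pairwise fun k l => Disjoint (interior (gridCell g k)) (interior (gridCell g l)) := by
  intro k l hkl
  obtain ⟨i, hi⟩ := Function.ne_iff.1 hkl
  refine disjoint_left.2 fun x hxk hxl => ?_
  exact disjoint_left.1 (pairwise_disjoint_Ioo_intCast ℝ hi)
    (mem_Ioo_of_mem_interior_gridCell (hg i) hxk) (mem_Ioo_of_mem_interior_gridCell (hg i) hxl)

lemma disjoint_interior_gridCell_zeros [FiniteDimensional ℝ E] {g : ι → E →ᵃ[ℝ] ℝ}
    (hg : ∀ i, (g i).linear ≠ 0) (k : ι → ℤ) :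
    Disjoint (interior (gridCell g k)) (⋃ i, {x | g i x = 0}) := by
  refine disjoint_left.2 fun x hx hx₀ => ?_
  obtain ⟨i, hi : g i x = 0⟩ := mem_iUnion.1 hx₀
  have hmem := mem_Ioo_of_mem_interior_gridCell (hg i) hx
  rw [hi] at hmem
  have hneg : k i < 0 := by exact_mod_cast hmem.1
  have hpos : 0 < k i + 1 := by exact_mod_cast hmem.2
  omega

lemma biUnion_gridCell_cellIndices [Finite ι] [FiniteDimensional ℝ E] {g : ι → E →ᵃ[ℝ] ℝ}
    (hg : ∀ i, (g i).linear ≠ 0) {P : Set E} (hP : IsCompact P) (hreg : P = closure (interior P))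
    (hfr : frontier P ⊆ ⋃ i, {x | g i x = 0}) :
    ⋃ k ∈ cellIndices g P, gridCell g k = P := by
  have hclosed (k : ι → ℤ) : IsClosed (gridCell g k) :=
    gridCell_eq_polyhedron g k ▸ isClosed_polyhedron _
  refine (iUnion₂_subset fun k hk => ?_).antisymm ?_
  · have hconv : Convex ℝ (gridCell g k) := gridCell_eq_polyhedron g k ▸ convex_polyhedron _
    exact subset_of_disjoint_interior_frontier hconv hP.isClosed
      ((disjoint_interior_gridCell_zeros hg k).mono_right hfr) hk
  · have hunion := (finite_cellIndices g hP).isClosed_biUnion fun k _ => hclosed k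
    have hdense : Dense (⋃ k, interior (gridCell g k)) :=
      dense_iUnion_interior_of_closed hclosed (iUnion_gridCell g)
    conv_lhs => rw [hreg]
    refine closure_minimal ((hdense.open_subset_closure_inter isOpen_interior).trans
      (closure_minimal ?_ hunion)) hunion
    rintro x ⟨hxP, hx⟩
    obtain ⟨k, hxk⟩ := mem_iUnion.1 hx
    have hk : k ∈ cellIndices g P := ⟨x, hxk, interior_subset hxP⟩
    exact mem_biUnion hk (interior_subset hxk)

lemma ediam_gridCell_le [Fintype ι] {g : ι → E →ᵃ[ℝ] ℝ} {K : ℝ≥0}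
    (hg : AntilipschitzWith K fun x i => g i x) (k : ι → ℤ) :
    Metric.ediam (gridCell g k) ≤ K := by
  refine Metric.ediam_le fun x hx y hy => (hg x y).trans (mul_le_of_le_one_right' ?_)
  refine edist_pi_le_iff.2 fun i => ?_
  rw [edist_dist, ENNReal.ofReal_le_one]
  simpa using Real.dist_le_of_mem_Icc (hx i) (hy i)

lemma exists_finset_gridCell_eq_convexHull [Fintype ι] [FiniteDimensional ℝ E]
    {g : ι → E →ᵃ[ℝ] ℝ} {K : ℝ≥0} (hg : AntilipschitzWith K fun x i => g i x) (k : ι → ℤ) :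
    ∃ V : Finset E, gridCell g k = convexHull ℝ (V : Set E) := by
  have hb : Bornology.IsBounded (gridCell g k) := Metric.isBounded_iff_ediam_ne_top.2
    (ne_top_of_le_ne_top ENNReal.coe_ne_top (ediam_gridCell_le hg k))
  rw [gridCell_eq_polyhedron] at hb ⊢
  exact exists_finset_polyhedron_eq_convexHull hb

lemma hausdorffMeasure_frontier_gridCell_le [Fintype ι] [MeasurableSpace E] [BorelSpace E]
    (hE : finrank ℝ E = 2) {g : ι → E →ᵃ[ℝ] ℝ} (hg₀ : ∀ i, (g i).linear ≠ 0) {K : ℝ≥0}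
    (hg : AntilipschitzWith K fun x i => g i x) (k : ι → ℤ) :
    μH[1] (frontier (gridCell g k)) ≤ Nat.card (ι ⊕ ι) * K := by
  have hper := hausdorffMeasure_frontier_polyhedron_le hE (linear_gridCellFunctional_ne_zero hg₀ k)
  rw [← gridCell_eq_polyhedron] at hper
  exact hper.trans (by gcongr; exact ediam_gridCell_le hg k)

end GridCell

theorem exists_partition_of_frontier_subset_zeros {E ι : Type*} [NormedAddCommGroup E]
    [NormedSpace ℝ E] [MeasurableSpace E] [BorelSpace E] [Fintype ι] (hE : finrank ℝ E = 2)
    {h : ι → E →ᵃ[ℝ] ℝ} (hh₀ : ∀ i, (h i).linear ≠ 0) {K : ℝ≥0}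
    (hh : AntilipschitzWith K fun x i => h i x) {P : Set E} (hP : IsCompact P)
    (hreg : P = closure (interior P)) (hfr : frontier P ⊆ ⋃ i, {x | h i x = 0}) {ε : ℝ≥0∞}
    (hε : ε ≠ 0) :
    ∃ (k : ℕ) (Q : Fin k → Set E),
      (∀ i, ∃ V : Finset E, Q i = convexHull ℝ (V : Set _)) ∧
      (Pairwise fun i j => Disjoint (interior (Q i)) (interior (Q j))) ∧
      (⋃ i, Q i) = P ∧
      ∀ i, μH[1] (frontier (Q i)) ≤ ε := by
  have : FiniteDimensional ℝ E := .of_finrank_pos (by omega)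
  obtain ⟨δ, hδ, hδε⟩ := ENNReal.exists_nnreal_pos_mul_lt
    (ENNReal.mul_ne_top (ENNReal.natCast_ne_top (Nat.card (ι ⊕ ι)))
      (ENNReal.coe_ne_top (r := K))) hε
  let g : ι → E →ᵃ[ℝ] ℝ := fun i => (δ : ℝ)⁻¹ • h i
  have hg₀ (i : ι) : (g i).linear ≠ 0 := by simpa [g, hδ.ne'] using hh₀ i
  have hg : AntilipschitzWith (K * δ) fun x i => g i x := antilipschitzWith_inv_smul hδ.ne' hh
  have hgfr : frontier P ⊆ ⋃ i, {x | g i x = 0} := by simpa [g, hδ.ne'] using hfr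
  have := (finite_cellIndices g hP).to_subtype
  obtain ⟨n, ⟨e⟩⟩ := Finite.exists_equiv_fin (cellIndices g P)
  refine ⟨n, fun i => gridCell g (e.symm i), fun i => exists_finset_gridCell_eq_convexHull hg _,
    ?_, ?_, fun i => ?_⟩
  · exact (pairwise_disjoint_interior_gridCell hg₀).comp_of_injective
      (Subtype.val_injective.comp e.symm.injective)
  · calc ⋃ i, gridCell g (e.symm i) = ⋃ k : cellIndices g P, gridCell g k :=
          e.symm.surjective.iUnion_comp fun k : cellIndices g P => gridCell g k
      _ = ⋃ k ∈ cellIndices g P, gridCell g k :=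
          (biUnion_eq_iUnion _ fun k _ => gridCell g k).symm
      _ = P := biUnion_gridCell_cellIndices hg₀ hP hreg hgfr
  · calc μH[1] (frontier (gridCell g (e.symm i)))
        ≤ Nat.card (ι ⊕ ι) * (K * δ : ℝ≥0) := hausdorffMeasure_frontier_gridCell_le hE hg₀ hg _
      _ = δ * (Nat.card (ι ⊕ ι) * K) := by rw [ENNReal.coe_mul]; ring
      _ ≤ ε := hδε.le

theorem exists_partition_into_small_perimeter_pieces_general
    (P : Set (EuclideanSpace ℝ (Fin 2))) (hP : IsPolygonalRegion P) {ε : ℝ≥0∞} (hε : ε ≠ 0) :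
    ∃ (k : ℕ) (Q : Fin k → Set (EuclideanSpace ℝ (Fin 2))),
      (∀ i, ∃ V : Finset (EuclideanSpace ℝ (Fin 2)), Q i = convexHull ℝ (V : Set _)) ∧
      (Pairwise fun i j => Disjoint (interior (Q i)) (interior (Q j))) ∧
      (⋃ i, Q i) = P ∧
      ∀ i, μH[1] (frontier (Q i)) ≤ ε := by
  obtain ⟨hcomp, hreg, F, hF⟩ := hP
  have hE : finrank ℝ (EuclideanSpace ℝ (Fin 2)) = 2 := finrank_euclideanSpace_fin
  choose line hline₀ hline using fun e : EuclideanSpace ℝ (Fin 2) × EuclideanSpace ℝ (Fin 2) =>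
    exists_affineMap_eq_zero_on_segment (by omega) e.1 e.2
  let h : F ⊕ Fin 2 → EuclideanSpace ℝ (Fin 2) →ᵃ[ℝ] ℝ :=
    Sum.elim (fun e => line e) fun j => (PiLp.projₗ 2 (fun _ => ℝ) j).toAffineMap
  have hh₀ : ∀ i, (h i).linear ≠ 0 := by
    rintro (e | j)
    · exact hline₀ e
    · intro h₀
      simpa [h] using LinearMap.congr_fun h₀ (EuclideanSpace.single j 1)
  have hh : AntilipschitzWith _ fun x i => h i x := fun x y =>
    (PiLp.antilipschitzWith_ofLp 2 _ x y).trans <| by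
      gcongr
      exact edist_pi_le_iff.2 fun j => edist_le_pi_edist (fun i => h i x) (fun i => h i y) (.inr j)
  refine exists_partition_of_frontier_subset_zeros hE hh₀ hh hcomp hreg (fun x hx => ?_) hε
  obtain ⟨e, he, hxe⟩ := mem_iUnion₂.1 (hF hx)
  exact mem_iUnion.2 ⟨.inl ⟨e, he⟩, hline e x hxe⟩

theorem exists_partition_into_small_perimeter_pieces
    (P : Set (EuclideanSpace ℝ (Fin 2))) (hP : IsSimplePolygon P) :
    ∃ (k : ℕ) (Q : Fin k → Set (EuclideanSpace ℝ (Fin 2))),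
      (∀ i, ∃ V : Finset (EuclideanSpace ℝ (Fin 2)), Q i = convexHull ℝ (V : Set _)) ∧
      (Pairwise fun i j => Disjoint (interior (Q i)) (interior (Q j))) ∧
      (⋃ i, Q i) = P ∧
      ∀ i, μH[1] (frontier (Q i)) ≤ 1 :=
  exists_partition_into_small_perimeter_pieces_general P hP.1 one_ne_zero
end
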